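/- Let 0 < λ ≤ 1 and 0 < α ≤ 1. Then, as T → ∞, the sum of (β − 1/2) over all nontrivial zeros ρ = β + iγ of L(λ,α,·) with |γ| ≤ T (counted with multiplicity) equals (T/(2π))·log(α/√(λ(1−{λ}))) + O(log T), where {λ} denotes the fractional part of λ (so 1 − {λ} = 1 for λ = 1). -/

import Mathlib

/-- The Dirichlet series of the Lerch zeta-function, convergent for `1 < re s`. -/
noncomputable def lerchSeries (lam alp : ℝ) (s : ℂ) : ℂ :=
  ∑' m : ℕ, Complex.exp (2 * Real.pi * Complex.I * lam * m) / ((m : ℂ) + alp) ^ s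

/-- `F` is the analytic continuation of the Lerch zeta-function with parameters `lam`, `alp`:
it is complex differentiable away from `1` and agrees with the Dirichlet series on `1 < re s`. -/
def IsLerch (lam alp : ℝ) (F : ℂ → ℂ) : Prop :=
  (∀ s : ℂ, s ≠ 1 → DifferentiableAt ℂ F s) ∧
  ∀ s : ℂ, 1 < s.re → F s = lerchSeries lam alp s

open scoped Classical

/-- The multiplicity (order of vanishing) of `F` at `z` (junk value `0` if `F` is not
analytic at `z` or vanishes to infinite order). -/
noncomputable def zeroOrder (F : ℂ → ℂ) (z : ℂ) : ℕ :=
  if h : AnalyticAt ℂ F z then (analyticOrderAt F z).toNat else 0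

/-!
Littlewood's lemma on the rectangle with corners `-1 + iτ` and `2 + iT` writes the sum of
`β - 1 / 2` over its zeros as a boundary integral of a logarithm of `L(λ, α, s)`. On `re s = 2` the
first term of the Dirichlet series dominates, so that `α ^ s * L(λ, α, s)` has a bounded logarithm
with bounded integral. On `re s = -1` the functional equation expresses `L(λ, α, s)` through two
dual Dirichlet series; for large `im s` the leading term `λ ^ (s - 1)` of one of them dominates,
and Stirling's formula makes its coefficient explicit. The terms of size `T * log T` cancel because
the abscissae are weighted from the critical line `1 / 2`. On a horizontal edge the argument varies
by `O(log T)`, as `L(λ, α, s)` grows polynomially and is bounded below on `re s = 2`.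
Together this gives `T / (4 * π) * log (α / λ)` for the zeros above the real axis; conjugation
replaces `λ` by `1 - {λ}` and so yields the zeros below it.
-/

section Factorization

open Topology

variable {𝕜 : Type*} [NontriviallyNormedField 𝕜] {U : Set 𝕜} {f : 𝕜 → 𝕜}

lemma exists_eq_sub_pow_mul {ρ : 𝕜} (hf : AnalyticOnNhd 𝕜 f U) (hρ : ρ ∈ U)
    (hord : analyticOrderAt f ρ ≠ ⊤) :
    ∃ g : 𝕜 → 𝕜, AnalyticOnNhd 𝕜 g U ∧
      (∀ s, f s = (s - ρ) ^ analyticOrderNatAt f ρ * g s) ∧ g ρ ≠ 0 := by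
  obtain ⟨h, hh, hhρ, hfh⟩ := (hf ρ hρ).analyticOrderAt_ne_top.1 hord
  set n := analyticOrderNatAt f ρ
  have hpow : ∀ s, s ≠ ρ → (s - ρ) ^ n ≠ 0 := fun s hs ↦ pow_ne_zero _ (sub_ne_zero.2 hs)
  refine ⟨fun s ↦ if s = ρ then h ρ else f s / (s - ρ) ^ n, fun z hz ↦ ?_, fun s ↦ ?_, by simpa⟩
  · obtain rfl | hzρ := eq_or_ne z ρ
    · refine hh.congr ?_
      filter_upwards [hfh] with s hs
      split_ifs with hsz
      · rw [hsz]
      · rw [hs, smul_eq_mul, mul_div_cancel_left₀ _ (hpow s hsz)]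
    · refine ((hf z hz).div (by fun_prop : AnalyticAt 𝕜 (fun s ↦ (s - ρ) ^ n) z)
        (hpow z hzρ)).congr ?_
      filter_upwards [isOpen_ne.mem_nhds hzρ] with s (hs : s ≠ ρ)
      simp [hs]
  · obtain rfl | hs := eq_or_ne s ρ
    · simpa using hfh.self_of_nhds
    · simp only [hs, if_false]
      rw [mul_div_cancel₀ _ (hpow s hs)]

lemma exists_eq_prod_sub_pow_mul (hf : AnalyticOnNhd 𝕜 f U) (Z : Finset 𝕜)
    (hZ : ∀ ρ ∈ Z, ρ ∈ U ∧ analyticOrderAt f ρ ≠ ⊤) :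
    ∃ g : 𝕜 → 𝕜, AnalyticOnNhd 𝕜 g U ∧
      (∀ s, f s = (∏ ρ ∈ Z, (s - ρ) ^ analyticOrderNatAt f ρ) * g s) ∧
      ∀ s, (f s = 0 → s ∈ Z) → g s ≠ 0 := by
  suffices H : ∃ g : 𝕜 → 𝕜, AnalyticOnNhd 𝕜 g U ∧
      (∀ s, f s = (∏ ρ ∈ Z, (s - ρ) ^ analyticOrderNatAt f ρ) * g s) ∧ ∀ ρ ∈ Z, g ρ ≠ 0 by
    obtain ⟨g, hg, hfg, hgZ⟩ := H
    exact ⟨g, hg, hfg, fun s hs h0 ↦ hgZ s (hs (by rw [hfg, h0, mul_zero])) h0⟩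
  induction Z using Finset.induction_on with
  | empty => exact ⟨f, hf, by simp, by simp⟩
  | insert ρ Z hρZ ih =>
    obtain ⟨g, hg, hfg, hgZ⟩ := ih fun r hr ↦ hZ r (Finset.mem_insert_of_mem hr)
    obtain ⟨hρU, hρo⟩ := hZ ρ (Finset.mem_insert_self _ _)
    set P : 𝕜 → 𝕜 := fun s ↦ ∏ r ∈ Z, (s - r) ^ analyticOrderNatAt f r
    have hP : AnalyticAt 𝕜 P ρ := Finset.analyticAt_fun_prod _ fun r _ ↦ by fun_prop
    have hP0 : analyticOrderAt P ρ = 0 := by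
      refine hP.analyticOrderAt_eq_zero.2 (Finset.prod_ne_zero_iff.2 fun r hr ↦ ?_)
      exact pow_ne_zero _ (sub_ne_zero.2 (ne_of_mem_of_not_mem hr hρZ).symm)
    have hord : analyticOrderAt f ρ = analyticOrderAt g ρ := by
      rw [show f = P * g from funext hfg, analyticOrderAt_mul hP (hg ρ hρU), hP0, zero_add]
    obtain ⟨k, hk, hgk, hkρ⟩ := exists_eq_sub_pow_mul hg hρU (hord ▸ hρo)
    refine ⟨k, hk, fun s ↦ ?_, Finset.forall_mem_insert .. |>.2 ⟨hkρ, fun r hr h0 ↦ ?_⟩⟩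
    · rw [Finset.prod_insert hρZ, hfg s, hgk s, analyticOrderNatAt, analyticOrderNatAt, hord]
      ring
    · exact hgZ r hr (by rw [hgk r, h0, mul_zero])

lemma logDeriv_eq_sum_add_of_eq_prod_mul {g : 𝕜 → 𝕜} {Z : Finset 𝕜} {m : 𝕜 → ℕ} {s : 𝕜}
    (hfg : ∀ s, f s = (∏ ρ ∈ Z, (s - ρ) ^ m ρ) * g s) (hsZ : s ∉ Z)
    (hg : DifferentiableAt 𝕜 g s) (hgs : g s ≠ 0) :
    logDeriv f s = ∑ ρ ∈ Z, m ρ * (s - ρ)⁻¹ + logDeriv g s := by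
  have hpow : ∀ ρ ∈ Z, (s - ρ) ^ m ρ ≠ 0 := fun ρ hρ ↦
    pow_ne_zero _ (sub_ne_zero.2 (ne_of_mem_of_not_mem hρ hsZ).symm)
  rw [show f = fun s ↦ (∏ ρ ∈ Z, (s - ρ) ^ m ρ) * g s from funext hfg,
    logDeriv_mul s (Finset.prod_ne_zero_iff.2 hpow) hgs (by fun_prop) hg,
    logDeriv_prod (f := fun ρ s ↦ (s - ρ) ^ m ρ) hpow fun ρ _ ↦ by fun_prop]
  congr 1
  refine Finset.sum_congr rfl fun ρ _ ↦ ?_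
  rw [logDeriv_fun_pow (by fun_prop)]
  simp [logDeriv_apply]

lemma eventually_nhdsNE_ne_zero {z : 𝕜} (hf : AnalyticAt 𝕜 f z) (hord : analyticOrderAt f z ≠ ⊤) :
    ∀ᶠ w in 𝓝[≠] z, f w ≠ 0 :=
  hf.eventually_eq_zero_or_eventually_ne_zero.resolve_left (mt analyticOrderAt_eq_top.2 hord)

lemma finite_zeros_of_isCompact {X M : Type*} [TopologicalSpace X] [Zero M] {g : X → M} {K : Set X}
    (hK : IsCompact K) (hg : ∀ z ∈ K, ∀ᶠ w in 𝓝[≠] z, g w ≠ 0) : {z ∈ K | g z = 0}.Finite := by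
  by_contra hinf
  obtain ⟨z, hzK, hz⟩ :=
    Set.Infinite.exists_accPt_of_subset_isCompact (K := K) hinf hK fun z hz ↦ hz.1
  obtain ⟨w, hw, hw0⟩ := ((accPt_iff_frequently_nhdsNE.1 hz).and_eventually (hg z hzK)).exists
  exact hw0 hw.2

end Factorization

section RectangleIntegral

open Complex MeasureTheory intervalIntegral Set

variable {a b c d : ℝ} {f h k : ℂ → ℂ} {ρ : ℂ}

/-- The integral of `h` along the positively oriented boundary of `[a, b] × [c, d]`. -/
noncomputable def rectIntegral (a b c d : ℝ) (h : ℂ → ℂ) : ℂ :=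
  (∫ x in a..b, h (x + c * I)) - (∫ x in a..b, h (x + d * I))
    + I * (∫ y in c..d, h (b + y * I)) - I * (∫ y in c..d, h (a + y * I))

/-- The boundary of the rectangle `[a, b] × [c, d]`, on which the integrand of `rectIntegral` is
evaluated. -/
def rectBoundary (a b c d : ℝ) : Set ℂ :=
  {z | z ∈ Icc a b ×ℂ Icc c d ∧ (z.re = a ∨ z.re = b ∨ z.im = c ∨ z.im = d)}

lemma rectBoundary_subset : rectBoundary a b c d ⊆ Icc a b ×ℂ Icc c d := fun _ hz ↦ hz.1

lemma horizontal_mem_rectBoundary (hcd : c ≤ d) {x y : ℝ} (hx : x ∈ Icc a b)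
    (hy : y = c ∨ y = d) : (x + y * I : ℂ) ∈ rectBoundary a b c d := by
  rcases hy with rfl | rfl <;> simpa [rectBoundary, mem_reProdIm, hcd] using hx

lemma vertical_mem_rectBoundary (hab : a ≤ b) {x y : ℝ} (hy : y ∈ Icc c d)
    (hx : x = a ∨ x = b) : (x + y * I : ℂ) ∈ rectBoundary a b c d := by
  rcases hx with rfl | rfl <;> simpa [rectBoundary, mem_reProdIm, hab] using hy

lemma intervalIntegrable_horizontal (hab : a ≤ b) (hcd : c ≤ d)
    (hh : ContinuousOn h (rectBoundary a b c d)) {y : ℝ} (hy : y = c ∨ y = d) :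
    IntervalIntegrable (fun x : ℝ ↦ h (x + y * I)) volume a b :=
  (hh.comp (by fun_prop) fun _ hx ↦ horizontal_mem_rectBoundary hcd
    (uIcc_of_le hab ▸ hx) hy).intervalIntegrable

lemma intervalIntegrable_vertical (hab : a ≤ b) (hcd : c ≤ d)
    (hh : ContinuousOn h (rectBoundary a b c d)) {x : ℝ} (hx : x = a ∨ x = b) :
    IntervalIntegrable (fun y : ℝ ↦ h (x + y * I)) volume c d :=
  (hh.comp (by fun_prop) fun _ hy ↦ vertical_mem_rectBoundary hab
    (uIcc_of_le hcd ▸ hy) hx).intervalIntegrable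

lemma rectIntegral_add (hab : a ≤ b) (hcd : c ≤ d) (hh : ContinuousOn h (rectBoundary a b c d))
    (hk : ContinuousOn k (rectBoundary a b c d)) :
    rectIntegral a b c d (fun s ↦ h s + k s) = rectIntegral a b c d h + rectIntegral a b c d k := by
  have hor {y} (hy : y = c ∨ y = d) := integral_add (intervalIntegrable_horizontal hab hcd hh hy)
    (intervalIntegrable_horizontal hab hcd hk hy)
  have ver {x} (hx : x = a ∨ x = b) := integral_add (intervalIntegrable_vertical hab hcd hh hx)
    (intervalIntegrable_vertical hab hcd hk hx)
  unfold rectIntegral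
  rw [hor (.inl rfl), hor (.inr rfl), ver (.inl rfl), ver (.inr rfl)]
  ring

lemma rectIntegral_const_mul (r : ℂ) (h : ℂ → ℂ) :
    rectIntegral a b c d (fun s ↦ r * h s) = r * rectIntegral a b c d h := by
  simp only [rectIntegral, intervalIntegral.integral_const_mul]
  ring

lemma rectIntegral_congr (hab : a ≤ b) (hcd : c ≤ d) (hhk : EqOn h k (rectBoundary a b c d)) :
    rectIntegral a b c d h = rectIntegral a b c d k := by
  have hor {y : ℝ} (hy : y = c ∨ y = d) : ∫ x in a..b, h (x + y * I) = ∫ x in a..b, k (x + y * I) :=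
    integral_congr fun x hx ↦ hhk (horizontal_mem_rectBoundary hcd (uIcc_of_le hab ▸ hx) hy)
  have ver {x : ℝ} (hx : x = a ∨ x = b) : ∫ y in c..d, h (x + y * I) = ∫ y in c..d, k (x + y * I) :=
    integral_congr fun y hy ↦ hhk (vertical_mem_rectBoundary hab (uIcc_of_le hcd ▸ hy) hx)
  unfold rectIntegral
  rw [hor (.inl rfl), hor (.inr rfl), ver (.inl rfl), ver (.inr rfl)]

lemma rectIntegral_sum {ι : Type*} (hab : a ≤ b) (hcd : c ≤ d) (Z : Finset ι) {h : ι → ℂ → ℂ}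
    (hh : ∀ r ∈ Z, ContinuousOn (h r) (rectBoundary a b c d)) :
    rectIntegral a b c d (fun s ↦ ∑ r ∈ Z, h r s) = ∑ r ∈ Z, rectIntegral a b c d (h r) := by
  induction Z using Finset.induction_on with
  | empty => simp [rectIntegral]
  | insert r Z hr ih =>
    obtain ⟨h1, h2⟩ := Finset.forall_mem_insert .. |>.1 hh
    simp only [Finset.sum_insert hr]
    rw [rectIntegral_add hab hcd h1 (continuousOn_finsetSum _ h2), ih h2]

lemma rectIntegral_eq_zero (hab : a ≤ b) (hcd : c ≤ d)
    (hh : DifferentiableOn ℂ h (Icc a b ×ℂ Icc c d)) : rectIntegral a b c d h = 0 := by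
  have := integral_boundary_rect_eq_zero_of_differentiableOn h (⟨a, c⟩ : ℂ) ⟨b, d⟩
    (by simpa [uIcc_of_le hab, uIcc_of_le hcd] using hh)
  simpa [rectIntegral, smul_eq_mul] using this

lemma integral_inv_sub_horizontal {y : ℝ} (hy : y ≠ ρ.im) :
    ∫ x in a..b, ((x : ℂ) + y * I - ρ)⁻¹ = log (b + y * I - ρ) - log (a + y * I - ρ) := by
  have him : ∀ x : ℝ, ((x : ℂ) + y * I - ρ).im ≠ 0 := fun x ↦ by simpa using sub_ne_zero.2 hy
  apply integral_eq_sub_of_hasDerivAt (f := fun x : ℝ ↦ log ((x : ℂ) + y * I - ρ))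
  · intro x _
    have : HasDerivAt (fun x : ℝ ↦ (x : ℂ) + y * I - ρ) 1 x := by
      simpa using ((hasDerivAt_id x).ofReal_comp.add_const (y * I)).sub_const ρ
    simpa using this.clog_real (.inr (him x))
  · exact Continuous.intervalIntegrable
      (Continuous.inv₀ (by fun_prop) fun x h0 ↦ him x (by simp [h0])) ..

lemma hasDerivAt_add_mul_I_sub (x y : ℝ) (ρ : ℂ) :
    HasDerivAt (fun y : ℝ ↦ (x : ℂ) + y * I - ρ) I y := by
  simpa using (((hasDerivAt_id y).ofReal_comp.mul_const I).const_add (x : ℂ)).sub_const ρ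

lemma integral_inv_sub_vertical_right {x : ℝ} (hx : ρ.re < x) :
    I * ∫ y in c..d, ((x : ℂ) + y * I - ρ)⁻¹ = log (x + d * I - ρ) - log (x + c * I - ρ) := by
  have hre : ∀ y : ℝ, 0 < ((x : ℂ) + y * I - ρ).re := fun y ↦ by simpa using hx
  rw [← intervalIntegral.integral_const_mul]
  apply integral_eq_sub_of_hasDerivAt (f := fun y : ℝ ↦ log ((x : ℂ) + y * I - ρ))
  · intro y _
    simpa [div_eq_mul_inv] using (hasDerivAt_add_mul_I_sub x y ρ).clog_real (.inl (hre y))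
  · exact Continuous.intervalIntegrable (continuous_const.mul
      (Continuous.inv₀ (by fun_prop) fun y h0 ↦ (hre y).ne' (by simp [h0]))) ..

lemma integral_inv_sub_vertical_left {x : ℝ} (hx : x < ρ.re) :
    I * ∫ y in c..d, ((x : ℂ) + y * I - ρ)⁻¹ =
      log (-(x + d * I - ρ)) - log (-(x + c * I - ρ)) := by
  have hre : ∀ y : ℝ, 0 < (-((x : ℂ) + y * I - ρ)).re := fun y ↦ by simpa using hx
  rw [← intervalIntegral.integral_const_mul]
  apply integral_eq_sub_of_hasDerivAt (f := fun y : ℝ ↦ log (-((x : ℂ) + y * I - ρ)))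
  · intro y _
    have := (hasDerivAt_add_mul_I_sub x y ρ).fun_neg.clog_real (.inl (hre y))
    rwa [neg_div_neg_eq, div_eq_mul_inv] at this
  · exact Continuous.intervalIntegrable (continuous_const.mul
      (Continuous.inv₀ (by fun_prop) fun y h0 ↦ (hre y).ne' (by simp [h0]))) ..

lemma log_neg_of_im_pos {z : ℂ} (hz : 0 < z.im) : log (-z) = log z - Real.pi * I := by
  apply Complex.ext <;> simp [log_re, log_im, arg_neg_eq_arg_sub_pi_of_im_pos hz]

lemma log_neg_of_im_neg {z : ℂ} (hz : z.im < 0) : log (-z) = log z + Real.pi * I := by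
  apply Complex.ext <;> simp [log_re, log_im, arg_neg_eq_arg_add_pi_of_im_neg hz]

lemma rectIntegral_inv_sub (hρ : ρ ∈ Ioo a b ×ℂ Ioo c d) :
    rectIntegral a b c d (fun s ↦ (s - ρ)⁻¹) = 2 * Real.pi * I := by
  obtain ⟨⟨hρa, hρb⟩, hρc, hρd⟩ := hρ
  unfold rectIntegral
  rw [integral_inv_sub_horizontal hρc.ne, integral_inv_sub_horizontal hρd.ne',
    integral_inv_sub_vertical_right hρb, integral_inv_sub_vertical_left hρa,
    log_neg_of_im_pos (z := a + d * I - ρ) (by simpa using hρd),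
    log_neg_of_im_neg (z := a + c * I - ρ) (by simpa using hρc)]
  ring

lemma notMem_rectBoundary_of_mem_Ioo (hρ : ρ ∈ Ioo a b ×ℂ Ioo c d) : ρ ∉ rectBoundary a b c d := by
  obtain ⟨⟨hρa, hρb⟩, hρc, hρd⟩ := hρ
  rintro ⟨-, h | h | h | h⟩ <;> linarith

lemma continuousOn_inv_sub_rectBoundary (hρ : ρ ∈ Ioo a b ×ℂ Ioo c d) :
    ContinuousOn (fun s ↦ (s - ρ)⁻¹) (rectBoundary a b c d) :=
  ContinuousOn.inv₀ (by fun_prop) fun _ hs ↦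
    sub_ne_zero.2 (ne_of_mem_of_not_mem hs (notMem_rectBoundary_of_mem_Ioo hρ))

lemma rectIntegral_mul_inv_sub {φ : ℂ → ℂ} (hφ : DifferentiableOn ℂ φ (Icc a b ×ℂ Icc c d))
    (hρ : ρ ∈ Ioo a b ×ℂ Ioo c d) :
    rectIntegral a b c d (fun s ↦ φ s * (s - ρ)⁻¹) = 2 * Real.pi * I * φ ρ := by
  have hab : a ≤ b := (hρ.1.1.trans hρ.1.2).le
  have hcd : c ≤ d := (hρ.2.1.trans hρ.2.2).le
  have hnhds : Icc a b ×ℂ Icc c d ∈ nhds ρ := Filter.mem_of_superset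
    ((isOpen_Ioo.reProdIm isOpen_Ioo).mem_nhds hρ)
    (reProdIm_subset_iff.2 (prod_mono Ioo_subset_Icc_self Ioo_subset_Icc_self))
  have hslope := (differentiableOn_dslope hnhds).2 hφ
  have hsplit : EqOn (fun s ↦ φ s * (s - ρ)⁻¹) (fun s ↦ dslope φ ρ s + φ ρ * (s - ρ)⁻¹)
      (rectBoundary a b c d) := fun s hs ↦ by
    simp only
    rw [dslope_of_ne _ (ne_of_mem_of_not_mem hs (notMem_rectBoundary_of_mem_Ioo hρ)),
      slope_def_field]
    ring
  rw [rectIntegral_congr hab hcd hsplit,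
    rectIntegral_add (k := fun s ↦ φ ρ * (s - ρ)⁻¹) hab hcd
      (hslope.continuousOn.mono rectBoundary_subset)
      (continuousOn_const.mul (continuousOn_inv_sub_rectBoundary hρ)),
    rectIntegral_eq_zero hab hcd hslope, rectIntegral_const_mul, rectIntegral_inv_sub hρ]
  ring

theorem rectIntegral_mul_logDeriv {φ : ℂ → ℂ} (hab : a ≤ b) (hcd : c ≤ d)
    (hφ : DifferentiableOn ℂ φ (Icc a b ×ℂ Icc c d))
    (hf : AnalyticOnNhd ℂ f (Icc a b ×ℂ Icc c d)) (Z : Finset ℂ)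
    (hZ : ∀ ρ ∈ Z, ρ ∈ Ioo a b ×ℂ Ioo c d) (hord : ∀ ρ ∈ Z, analyticOrderAt f ρ ≠ ⊤)
    (hfZ : ∀ s ∈ Icc a b ×ℂ Icc c d, f s = 0 → s ∈ Z) :
    rectIntegral a b c d (fun s ↦ φ s * logDeriv f s) =
      2 * Real.pi * I * ∑ ρ ∈ Z, analyticOrderNatAt f ρ * φ ρ := by
  have hIoo : Ioo a b ×ℂ Ioo c d ⊆ Icc a b ×ℂ Icc c d :=
    reProdIm_subset_iff.2 (prod_mono Ioo_subset_Icc_self Ioo_subset_Icc_self)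
  obtain ⟨g, hg, hfg, hgZ⟩ := exists_eq_prod_sub_pow_mul hf Z
    fun ρ hρ ↦ ⟨hIoo (hZ ρ hρ), hord ρ hρ⟩
  have hg0 : ∀ s ∈ Icc a b ×ℂ Icc c d, g s ≠ 0 := fun s hs ↦ hgZ s (hfZ s hs)
  have hreg : DifferentiableOn ℂ (fun s ↦ φ s * logDeriv g s) (Icc a b ×ℂ Icc c d) :=
    hφ.mul fun s hs ↦
      ((hg s hs).deriv.div (hg s hs) (hg0 s hs)).differentiableAt.differentiableWithinAt
  have hterm : ∀ ρ ∈ Z, ContinuousOn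
      (fun s ↦ (analyticOrderNatAt f ρ : ℂ) * (φ s * (s - ρ)⁻¹)) (rectBoundary a b c d) :=
    fun ρ hρ ↦ continuousOn_const.mul ((hφ.continuousOn.mono rectBoundary_subset).mul
      (continuousOn_inv_sub_rectBoundary (hZ ρ hρ)))
  have hsplit : EqOn (fun s ↦ φ s * logDeriv f s)
      (fun s ↦ (∑ ρ ∈ Z, (analyticOrderNatAt f ρ : ℂ) * (φ s * (s - ρ)⁻¹)) + φ s * logDeriv g s)
      (rectBoundary a b c d) := fun s hs ↦ by
    have hsZ : s ∉ Z := fun h ↦ notMem_rectBoundary_of_mem_Ioo (hZ s h) hs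
    simp only
    rw [logDeriv_eq_sum_add_of_eq_prod_mul hfg hsZ (hg s hs.1).differentiableAt (hg0 s hs.1),
      mul_add, Finset.mul_sum]
    simp only [mul_left_comm]
  rw [rectIntegral_congr hab hcd hsplit, rectIntegral_add hab hcd (continuousOn_finsetSum _ hterm)
    (hreg.continuousOn.mono rectBoundary_subset), rectIntegral_eq_zero hab hcd hreg, add_zero,
    rectIntegral_sum hab hcd Z hterm, Finset.mul_sum]
  refine Finset.sum_congr rfl fun ρ hρ ↦ ?_
  rw [rectIntegral_const_mul, rectIntegral_mul_inv_sub hφ (hZ ρ hρ)]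
  ring

end RectangleIntegral

section LogDerivNearZeros

open Complex MeasureTheory Metric

variable {f g : ℂ → ℂ} {c z : ℂ} {Λ M δ r R : ℝ}

lemma exists_eq_mul_exp_of_ne_zero_on_ball (hR : 0 < R) (hg : DifferentiableOn ℂ g (ball c R))
    (hg0 : ∀ s ∈ ball c R, g s ≠ 0) :
    ∃ h : ℂ → ℂ, h c = 0 ∧ ∀ s ∈ ball c R,
      HasDerivAt h (logDeriv g s) s ∧ g s = g c * exp (h s) := by
  have hgd : ∀ s ∈ ball c R, DifferentiableAt ℂ g s := fun s hs ↦
    hg.differentiableAt (isOpen_ball.mem_nhds hs)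
  have hlog : DifferentiableOn ℂ (logDeriv g) (ball c R) :=
    (hg.deriv isOpen_ball).div hg hg0
  obtain ⟨h, hhc, hh⟩ := hlog.isExactOn_ball.with_val_at c 0
  refine ⟨h, hhc, fun s hs ↦ ⟨hh s hs, ?_⟩⟩
  have hconst : ∀ s ∈ ball c R, HasDerivAt (fun s ↦ g s * exp (-h s)) 0 s := fun s hs ↦ by
    refine ((hgd s hs).hasDerivAt.mul (hh s hs).neg.cexp).congr_deriv ?_
    rw [logDeriv_apply]
    field_simp [hg0 s hs]
    ring
  have := isOpen_ball.is_const_of_deriv_eq_zero (convex_ball c R).isPreconnected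
    (fun s hs ↦ (hconst s hs).differentiableAt.differentiableWithinAt)
    (fun s hs ↦ (hconst s hs).deriv) hs (mem_ball_self hR)
  simp only [hhc, neg_zero, exp_zero, mul_one] at this
  rw [← this, mul_assoc, ← exp_add, neg_add_cancel, exp_zero, mul_one]

lemma norm_logDeriv_le_of_norm_le_exp_mul (hΛ : 0 < Λ) (hrR : r < R)
    (hg : DifferentiableOn ℂ g (ball c R)) (hg0 : ∀ s ∈ ball c R, g s ≠ 0)
    (hgΛ : ∀ s ∈ ball c R, ‖g s‖ ≤ Real.exp Λ * ‖g c‖) (hz : z ∈ closedBall c r) :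
    ‖logDeriv g z‖ ≤ 8 * R * Λ / (R - r) ^ 2 := by
  have hr : 0 ≤ r := dist_nonneg.trans (mem_closedBall.1 hz)
  have hcR : c ∈ ball c R := mem_ball_self (hr.trans_lt hrR)
  obtain ⟨h, hhc, hh⟩ := exists_eq_mul_exp_of_ne_zero_on_ball (hr.trans_lt hrR) hg hg0
  have hre : ∀ s ∈ ball c R, (h s).re ≤ Λ := fun s hs ↦ by
    have := hgΛ s hs
    rw [(hh s hs).2, norm_mul, norm_exp, mul_comm] at this
    exact Real.exp_le_exp.1 (le_of_mul_le_mul_right this (norm_pos_iff.2 (hg0 c hcR)))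
  have hshift : Set.MapsTo (fun w ↦ c + w) (ball 0 R) (ball c R) := fun w hw ↦ by
    simpa [mem_ball, dist_eq_norm] using hw
  set r' := (r + R) / 2 with hr'
  have hball : closedBall c r' ⊆ ball c R := closedBall_subset_ball (by linarith)
  have hhr' : ∀ s ∈ closedBall c r', ‖h s‖ ≤ 4 * R * Λ / (R - r) := fun s hs ↦ by
    have hsc := mem_closedBall_iff_norm.1 hs
    have hBC := borelCaratheodory_zero (f := fun w ↦ h (c + w)) (R := R) (z := s - c) hΛ
      (DifferentiableOn.comp (g := h)
        (fun s hs ↦ (hh s hs).1.differentiableAt.differentiableWithinAt) (by fun_prop) hshift)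
      (fun w hw ↦ hre _ (hshift hw)) (by linarith)
      (mem_ball_zero_iff.2 (by linarith)) (by simpa using hhc)
    rw [add_sub_cancel] at hBC
    calc ‖h s‖ ≤ 2 * Λ * ‖s - c‖ / (R - ‖s - c‖) := hBC
      _ ≤ 2 * Λ * R / ((R - r) / 2) := by
        have : 0 ≤ R := hr.trans hrR.le
        gcongr <;> linarith
      _ = 4 * R * Λ / (R - r) := by
        have : R - r ≠ 0 := by linarith
        field_simp
        ring
  have hzr' : closedBall z ((R - r) / 2) ⊆ closedBall c r' :=
    closedBall_subset_closedBall' (by linarith [mem_closedBall.1 hz])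
  have hderiv := norm_deriv_le_of_forall_mem_sphere_norm_le (f := h) (c := z) (R := (R - r) / 2)
    (by linarith)
    (DifferentiableOn.diffContOnCl_ball (U := ball c R)
      (fun s hs ↦ (hh s hs).1.differentiableAt.differentiableWithinAt) (hzr'.trans hball))
    (fun s hs ↦ hhr' s (hzr' (sphere_subset_closedBall hs)))
  rw [(hh z (hball (hzr' (mem_closedBall_self (by linarith))))).1.deriv] at hderiv
  refine hderiv.trans_eq ?_
  have : R - r ≠ 0 := by linarith
  field_simp
  ring

section CofactorBounds

variable {Z : Finset ℂ} {m : ℂ → ℕ}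

lemma norm_cofactor_center_ge (hfg : ∀ s, f s = (∏ ρ ∈ Z, (s - ρ) ^ m ρ) * g s) (hr : 0 < r)
    (hZ : ∀ ρ ∈ Z, ρ ∈ closedBall c r) (hδ : δ ≤ ‖f c‖) :
    δ / r ^ (∑ ρ ∈ Z, m ρ) ≤ ‖g c‖ := by
  rw [div_le_iff₀' (by positivity)]
  refine hδ.trans ?_
  rw [hfg c, norm_mul, norm_prod, ← Finset.prod_pow_eq_pow_sum]
  gcongr with ρ hρ
  rw [norm_pow]
  gcongr
  exact mem_closedBall_iff_norm'.1 (hZ ρ hρ)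

lemma norm_cofactor_le (hfg : ∀ s, f s = (∏ ρ ∈ Z, (s - ρ) ^ m ρ) * g s) (hr : 0 < R) (hrR : r < R)
    (hZ : ∀ ρ ∈ Z, ρ ∈ closedBall c r) (hg : DifferentiableOn ℂ g (closedBall c R))
    (hM : ∀ s ∈ closedBall c R, ‖f s‖ ≤ M) {s : ℂ} (hs : s ∈ closedBall c R) :
    ‖g s‖ ≤ M / (R - r) ^ (∑ ρ ∈ Z, m ρ) := by
  refine norm_le_of_forall_mem_frontier_norm_le (U := ball c R) isBounded_ball
    (hg.diffContOnCl_ball subset_rfl) (fun w hw ↦ ?_) (by rwa [closure_ball c hr.ne'])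
  rw [frontier_ball c hr.ne'] at hw
  have : 0 < R - r := sub_pos.2 hrR
  rw [le_div_iff₀' (by positivity)]
  refine le_trans ?_ (hM w (sphere_subset_closedBall hw))
  rw [hfg w, norm_mul, norm_prod, ← Finset.prod_pow_eq_pow_sum]
  gcongr with ρ hρ
  rw [norm_pow]
  gcongr
  have := norm_sub_norm_le (w - c) (ρ - c)
  rw [sub_sub_sub_cancel_right, mem_sphere_iff_norm.1 hw] at this
  linarith [mem_closedBall_iff_norm.1 (hZ ρ hρ)]

lemma two_pow_sum_le_of_eq_prod_mul (hfg : ∀ s, f s = (∏ ρ ∈ Z, (s - ρ) ^ m ρ) * g s)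
    (hR : 0 < R) (hZ : ∀ ρ ∈ Z, ρ ∈ closedBall c R)
    (hg : DifferentiableOn ℂ g (closedBall c (3 * R)))
    (hM : ∀ s ∈ closedBall c (3 * R), ‖f s‖ ≤ M) (hδ : 0 < δ) (hc : δ ≤ ‖f c‖) :
    (2 : ℝ) ^ (∑ ρ ∈ Z, m ρ) ≤ M / δ := by
  have hgc := (norm_cofactor_center_ge hfg hR hZ hc).trans
    (norm_cofactor_le hfg (by linarith) (by linarith) hZ hg hM (mem_closedBall_self (by linarith)))
  rw [show 3 * R - R = 2 * R by ring, mul_pow, div_le_div_iff₀ (by positivity) (by positivity),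
    ← mul_assoc] at hgc
  rw [le_div_iff₀' hδ]
  exact le_of_mul_le_mul_right hgc (by positivity)

lemma norm_cofactor_le_mul_norm_center (hfg : ∀ s, f s = (∏ ρ ∈ Z, (s - ρ) ^ m ρ) * g s)
    (hR : 0 < R) (hZ : ∀ ρ ∈ Z, ρ ∈ closedBall c R)
    (hg : DifferentiableOn ℂ g (closedBall c (3 * R)))
    (hM : ∀ s ∈ closedBall c (3 * R), ‖f s‖ ≤ M) (hδ : 0 < δ) (hc : δ ≤ ‖f c‖) {s : ℂ}
    (hs : s ∈ closedBall c (3 * R)) : ‖g s‖ ≤ M / δ * ‖g c‖ := by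
  have hM0 : 0 ≤ M := (norm_nonneg _).trans (hM s hs)
  set n := ∑ ρ ∈ Z, m ρ
  calc ‖g s‖ ≤ M / (3 * R - R) ^ n := norm_cofactor_le hfg (by linarith) (by linarith) hZ hg hM hs
    _ ≤ M / R ^ n := by gcongr; linarith
    _ = M / δ * (δ / R ^ n) := by field_simp
    _ ≤ M / δ * ‖g c‖ := by gcongr; exact norm_cofactor_center_ge hfg hR hZ hc

end CofactorBounds

/-- The zeros of `f` in `closedBall c R` are split off. The radius `3 * R` makes each factor at
least twice as large on the outer circle as at `c`, so that their number is
`O(log (M / δ))`. -/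
lemma exists_logDeriv_eq_sum_add (hR : 0 < R) (hrR : r < R) (hδ : 0 < δ)
    (hf : AnalyticOnNhd ℂ f (closedBall c (3 * R))) (hM : ∀ s ∈ closedBall c (3 * R), ‖f s‖ ≤ M)
    (hc : δ ≤ ‖f c‖) :
    ∃ (Z : Finset ℂ) (m : ℂ → ℕ) (E : ℂ → ℂ), (∀ ρ ∈ Z, ρ ∈ closedBall c R ∧ f ρ = 0) ∧
      ∑ ρ ∈ Z, (m ρ : ℝ) ≤ 2 * Real.log (M / δ) ∧
      ∀ s ∈ closedBall c r, ‖E s‖ ≤ 8 * R * (Real.log (M / δ) + 1) / (R - r) ^ 2 ∧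
        (f s ≠ 0 → logDeriv f s = ∑ ρ ∈ Z, m ρ * (s - ρ)⁻¹ + E s) := by
  have hsub : closedBall c R ⊆ closedBall c (3 * R) := closedBall_subset_closedBall (by linarith)
  have hc3 : c ∈ closedBall c (3 * R) := mem_closedBall_self (by linarith)
  have hfc : f c ≠ 0 := norm_pos_iff.1 (hδ.trans_le hc)
  have hord : ∀ z ∈ closedBall c (3 * R), analyticOrderAt f z ≠ ⊤ := fun z hz ↦
    hf.analyticOrderAt_ne_top_of_isPreconnected (convex_closedBall c _).isPreconnected hc3 hz
      (by simp [(hf c hc3).analyticOrderAt_eq_zero.2 hfc])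
  have hfin := finite_zeros_of_isCompact (isCompact_closedBall c R)
    fun z hz ↦ eventually_nhdsNE_ne_zero (hf z (hsub hz)) (hord z (hsub hz))
  set Z := hfin.toFinset
  have hZ : ∀ ρ ∈ Z, ρ ∈ closedBall c R ∧ f ρ = 0 := fun ρ hρ ↦ hfin.mem_toFinset.1 hρ
  obtain ⟨g, hg, hfg, hgZ⟩ := exists_eq_prod_sub_pow_mul hf Z
    fun ρ hρ ↦ ⟨hsub (hZ ρ hρ).1, hord ρ (hsub (hZ ρ hρ).1)⟩
  have hg0 : ∀ s ∈ closedBall c R, g s ≠ 0 := fun s hs ↦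
    hgZ s fun h0 ↦ hfin.mem_toFinset.2 ⟨hs, h0⟩
  have hgd : DifferentiableOn ℂ g (closedBall c (3 * R)) := hg.differentiableOn
  have h2n := two_pow_sum_le_of_eq_prod_mul hfg hR (fun ρ hρ ↦ (hZ ρ hρ).1) hgd hM hδ hc
  have hMδ : 0 < M / δ := (by positivity : (0 : ℝ) < 2 ^ _).trans_le h2n
  have hlog := Real.log_le_log (by positivity) h2n
  rw [Real.log_pow, Nat.cast_sum] at hlog
  have hn : 0 ≤ ∑ ρ ∈ Z, (analyticOrderNatAt f ρ : ℝ) := by positivity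
  refine ⟨Z, analyticOrderNatAt f, logDeriv g, hZ, by nlinarith [Real.log_two_gt_d9],
    fun s hs ↦ ⟨?_, fun hfs ↦ ?_⟩⟩
  · have hball : ball c R ⊆ closedBall c R := ball_subset_closedBall
    refine norm_logDeriv_le_of_norm_le_exp_mul (by nlinarith [Real.log_two_gt_d9]) hrR
      (hgd.mono (hball.trans hsub)) (fun w hw ↦ hg0 w (hball hw)) (fun w hw ↦ ?_) hs
    refine (norm_cofactor_le_mul_norm_center hfg hR (fun ρ hρ ↦ (hZ ρ hρ).1) hgd hM hδ hc
      (hsub (hball hw))).trans (mul_le_mul_of_nonneg_right ?_ (norm_nonneg _))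
    rw [← Real.log_le_iff_le_exp hMδ]
    linarith
  · have hsR : s ∈ closedBall c R := closedBall_subset_closedBall hrR.le hs
    exact logDeriv_eq_sum_add_of_eq_prod_mul hfg (fun hsZ ↦ hfs (hZ s hsZ).2)
      (hg s (hsub hsR)).differentiableAt (hg0 s hsR)

lemma integral_abs_im_inv_sub_le_pi {a b y : ℝ} {ρ : ℂ} (hy : ρ.im ≠ y) :
    IntervalIntegrable (fun x : ℝ ↦ |((x + y * I - ρ)⁻¹).im|) volume a b ∧
      ∫ x in a..b, |((x + y * I - ρ)⁻¹).im| ≤ Real.pi := by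
  have hne : ∀ x : ℝ, (x : ℂ) + y * I - ρ ≠ 0 := fun x h0 ↦
    hy (by simpa [sub_eq_zero, eq_comm] using congrArg im h0)
  have hcont : Continuous fun x : ℝ ↦ ((x : ℂ) + y * I - ρ)⁻¹ := .inv₀ (by fun_prop) hne
  refine ⟨(continuous_im.comp hcont).abs.intervalIntegrable _ _, ?_⟩
  have hInt : ∫ x in a..b, (((x : ℂ) + y * I - ρ)⁻¹).im =
      arg (b + y * I - ρ) - arg (a + y * I - ρ) := by
    have := intervalIntegral.intervalIntegral_im (hcont.intervalIntegrable (μ := volume) a b)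
    rw [integral_inv_sub_horizontal hy.symm] at this
    simpa [log_im] using this
  have him : ∀ x : ℝ, (((x : ℂ) + y * I - ρ)⁻¹).im = (ρ.im - y) / normSq (x + y * I - ρ) :=
    fun x ↦ by simp [inv_im]
  rcases lt_or_gt_of_ne hy with hlt | hgt
  · have hnonpos : ∀ x : ℝ, (((x : ℂ) + y * I - ρ)⁻¹).im ≤ 0 := fun x ↦ by
      rw [him]
      exact div_nonpos_of_nonpos_of_nonneg (by linarith) (normSq_nonneg _)
    simp only [abs_of_nonpos (hnonpos _), intervalIntegral.integral_neg, hInt]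
    have : 0 ≤ arg (b + y * I - ρ) := arg_nonneg_iff.2 (by simpa using hlt.le)
    linarith [arg_le_pi (a + y * I - ρ)]
  · have hnonneg : ∀ x : ℝ, 0 ≤ (((x : ℂ) + y * I - ρ)⁻¹).im := fun x ↦ by
      rw [him]
      exact div_nonneg (by linarith) (normSq_nonneg _)
    simp only [abs_of_nonneg (hnonneg _), hInt]
    have : arg (b + y * I - ρ) < 0 := arg_neg_iff.2 (by simpa using hgt)
    linarith [neg_pi_lt_arg (a + y * I - ρ)]

lemma integral_sum_mul_abs_im_inv_sub_le {a b y : ℝ} {Z : Finset ℂ} (m : ℂ → ℕ)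
    (hy : ∀ ρ ∈ Z, ρ.im ≠ y) :
    IntervalIntegrable (fun x : ℝ ↦ ∑ ρ ∈ Z, m ρ * |((x + y * I - ρ)⁻¹).im|) volume a b ∧
      ∫ x in a..b, ∑ ρ ∈ Z, m ρ * |((x + y * I - ρ)⁻¹).im| ≤
        (∑ ρ ∈ Z, (m ρ : ℝ)) * Real.pi := by
  have hInt := fun ρ (hρ : ρ ∈ Z) ↦
    (integral_abs_im_inv_sub_le_pi (a := a) (b := b) (hy ρ hρ)).1.const_mul (m ρ : ℝ)
  refine ⟨?_, ?_⟩
  · simpa only [Finset.sum_fn] using IntervalIntegrable.sum Z hInt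
  · rw [intervalIntegral.integral_finsetSum hInt, Finset.sum_mul]
    gcongr with ρ hρ
    rw [intervalIntegral.integral_const_mul]
    gcongr
    exact (integral_abs_im_inv_sub_le_pi (hy ρ hρ)).2

lemma abs_im_sum_mul_inv_sub_add_le (Z : Finset ℂ) (m : ℂ → ℕ) (s w : ℂ) :
    |(∑ ρ ∈ Z, m ρ * (s - ρ)⁻¹ + w).im| ≤ (∑ ρ ∈ Z, m ρ * |((s - ρ)⁻¹).im|) + ‖w‖ := by
  rw [add_im, im_sum]
  refine (abs_add_le _ _).trans (add_le_add ?_ (abs_im_le_norm _))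
  refine (Finset.abs_sum_le_sum_abs _ _).trans (Finset.sum_le_sum fun ρ _ ↦ ?_)
  rw [mul_im, natCast_im, zero_mul, add_zero, natCast_re, abs_mul, Nat.abs_cast]

/-- A zero contributes at most `π`, the variation of the argument of `s - ρ` along the segment. -/
theorem abs_integral_mul_im_logDeriv_le {φ : ℝ → ℝ} {W : ℝ} (hr : 0 ≤ r) (hrR : r < R) (hδ : 0 < δ)
    (hf : AnalyticOnNhd ℂ f (closedBall c (3 * R))) (hM : ∀ s ∈ closedBall c (3 * R), ‖f s‖ ≤ M)
    (hc : δ ≤ ‖f c‖) (hz : ∀ s ∈ closedBall c R, f s = 0 → s.im ≠ c.im)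
    (hφ : ∀ σ ∈ Set.Icc (c.re - r) c.re, |φ σ| ≤ W) :
    |∫ σ in (c.re - r)..c.re, φ σ * (logDeriv f (σ + c.im * I)).im| ≤
      W * (2 * Real.pi + r * (8 * R / (R - r) ^ 2)) * (Real.log (M / δ) + 1) := by
  obtain ⟨Z, m, E, hZ, hcard, hE⟩ :=
    exists_logDeriv_eq_sum_add (hr.trans_lt hrR) hrR hδ hf hM hc
  set B := 8 * R * (Real.log (M / δ) + 1) / (R - r) ^ 2 with hB
  have hle : c.re - r ≤ c.re := by linarith
  have hW : 0 ≤ W := (abs_nonneg _).trans (hφ _ ⟨hle, le_rfl⟩)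
  have hseg : ∀ σ ∈ Set.Icc (c.re - r) c.re, (σ + c.im * I : ℂ) ∈ closedBall c r := by
    intro σ hσ
    rw [mem_closedBall_iff_norm,
      show (σ : ℂ) + c.im * I - c = (σ - c.re : ℝ) by apply Complex.ext <;> simp,
      norm_real, Real.norm_eq_abs, abs_le]
    constructor <;> linarith [hσ.1, hσ.2]
  have hpt : ∀ σ ∈ Set.Icc (c.re - r) c.re, ‖φ σ * (logDeriv f (σ + c.im * I)).im‖ ≤
      W * ((∑ ρ ∈ Z, m ρ * |((σ + c.im * I - ρ)⁻¹).im|) + B) := fun σ hσ ↦ by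
    have hfσ : f (σ + c.im * I) ≠ 0 := fun h0 ↦
      hz _ (closedBall_subset_closedBall hrR.le (hseg σ hσ)) h0 (by simp)
    obtain ⟨hEσ, hlog⟩ := hE _ (hseg σ hσ)
    rw [norm_mul, Real.norm_eq_abs, Real.norm_eq_abs, hlog hfσ]
    gcongr
    · exact hφ σ hσ
    · exact (abs_im_sum_mul_inv_sub_add_le ..).trans (by gcongr)
  obtain ⟨hInt, hInt_le⟩ := integral_sum_mul_abs_im_inv_sub_le (a := c.re - r) (b := c.re) m
    fun ρ hρ ↦ hz ρ (hZ ρ hρ).1 (hZ ρ hρ).2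
  calc |∫ σ in (c.re - r)..c.re, φ σ * (logDeriv f (σ + c.im * I)).im|
      ≤ ∫ σ in (c.re - r)..c.re, W * ((∑ ρ ∈ Z, m ρ * |((σ + c.im * I - ρ)⁻¹).im|) + B) :=
        intervalIntegral.norm_integral_le_of_norm_le hle
          (.of_forall fun σ hσ ↦ hpt σ ⟨hσ.1.le, hσ.2⟩)
          ((hInt.add intervalIntegrable_const).const_mul _)
    _ = W * ((∫ σ in (c.re - r)..c.re, ∑ ρ ∈ Z, m ρ * |((σ + c.im * I - ρ)⁻¹).im|) + r * B) := by
        rw [intervalIntegral.integral_const_mul,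
          intervalIntegral.integral_add hInt intervalIntegrable_const,
          intervalIntegral.integral_const, smul_eq_mul, sub_sub_cancel]
    _ ≤ W * ((2 * (Real.log (M / δ) + 1)) * Real.pi + r * B) := by
        gcongr
        refine hInt_le.trans ?_
        gcongr
        linarith
    _ = W * (2 * Real.pi + r * (8 * R / (R - r) ^ 2)) * (Real.log (M / δ) + 1) := by
        rw [hB]; ring

end LogDerivNearZeros

section DecayingVerticalIntegral

open Complex MeasureTheory intervalIntegral Filter

variable {x₀ K c : ℝ}

lemma norm_integral_le_of_norm_le_exp {E : Type*} [NormedAddCommGroup E] [NormedSpace ℝ E]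
    {h : ℝ → E} {X : ℝ} (hc : 0 < c) (hK : 0 ≤ K) (hX : x₀ ≤ X)
    (hh : ∀ x, x₀ ≤ x → ‖h x‖ ≤ K * Real.exp (-c * (x - x₀))) :
    ‖∫ x in x₀..X, h x‖ ≤ K / c := by
  have hderiv : ∀ x ∈ Set.uIcc x₀ X, HasDerivAt (fun x ↦ -(K / c) * Real.exp (-c * (x - x₀)))
      (K * Real.exp (-c * (x - x₀))) x := fun x _ ↦ by
    refine ((((hasDerivAt_id x).sub_const x₀).const_mul (-c)).exp.const_mul _).congr_deriv ?_
    simp only [id]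
    field_simp
  have hcont : Continuous fun x : ℝ ↦ K * Real.exp (-c * (x - x₀)) := by fun_prop
  calc ‖∫ x in x₀..X, h x‖ ≤ ∫ x in x₀..X, K * Real.exp (-c * (x - x₀)) :=
        norm_integral_le_of_norm_le hX (.of_forall fun x hx ↦ hh x hx.1.le)
          (hcont.intervalIntegrable _ _)
    _ = K / c - K / c * Real.exp (-c * (X - x₀)) := by
        rw [integral_eq_sub_of_hasDerivAt hderiv (hcont.intervalIntegrable _ _)]
        simp only [sub_self, mul_zero, Real.exp_zero]
        ring
    _ ≤ K / c := sub_le_self _ (by positivity)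

/-- The integral is pushed to `re s = ∞` by Cauchy's theorem. -/
lemma norm_integral_vertical_le_of_norm_le_exp {g : ℂ → ℂ} (hc : 0 < c) (hK : 0 ≤ K)
    (hgd : ∀ s : ℂ, x₀ ≤ s.re → DifferentiableAt ℂ g s)
    (hg : ∀ s : ℂ, x₀ ≤ s.re → ‖g s‖ ≤ K * Real.exp (-c * (s.re - x₀))) (y₁ y₂ : ℝ) :
    ‖∫ y in y₁..y₂, g (x₀ + y * I)‖ ≤ 2 * (K / c) := by
  have hright : ∀ X, x₀ ≤ X → ‖∫ y in y₁..y₂, g (x₀ + y * I)‖ ≤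
      2 * (K / c) + K * Real.exp (-c * (X - x₀)) * |y₂ - y₁| := fun X hX ↦ by
    have hhor : ∀ y : ℝ, ‖∫ x in x₀..X, g (x + y * I)‖ ≤ K / c := fun y ↦
      norm_integral_le_of_norm_le_exp hc hK hX fun x hx ↦ by simpa using hg (x + y * I) (by simpa)
    have hver : ‖∫ y in y₁..y₂, g (X + y * I)‖ ≤ K * Real.exp (-c * (X - x₀)) * |y₂ - y₁| :=
      norm_integral_le_of_norm_le_const fun y _ ↦ by simpa using hg (X + y * I) (by simpa)
    have hrect := integral_boundary_rect_eq_zero_of_differentiableOn g (x₀ + y₁ * I) (X + y₂ * I)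
      fun s hs ↦ (hgd s (by
        have := hs.1
        simp only [add_re, ofReal_re, mul_re, I_re, mul_zero, ofReal_im, I_im, mul_one, sub_self,
          add_zero, Set.uIcc_of_le hX, Set.mem_preimage, Set.mem_Icc] at this
        exact this.1)).differentiableWithinAt
    simp only [add_re, ofReal_re, mul_re, I_re, mul_zero, ofReal_im, I_im, mul_one, sub_self,
      add_zero, add_im, mul_im, zero_add, smul_eq_mul] at hrect
    have hmove : I * ∫ y in y₁..y₂, g (x₀ + y * I) =
        (∫ x in x₀..X, g (x + y₁ * I)) - (∫ x in x₀..X, g (x + y₂ * I)) +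
          I * ∫ y in y₁..y₂, g (X + y * I) := by
      linear_combination -hrect
    calc ‖∫ y in y₁..y₂, g (x₀ + y * I)‖ = ‖I * ∫ y in y₁..y₂, g (x₀ + y * I)‖ := by
          rw [norm_mul, norm_I, one_mul]
      _ ≤ K / c + K / c + K * Real.exp (-c * (X - x₀)) * |y₂ - y₁| := by
          rw [hmove]
          refine (norm_add_le _ _).trans (add_le_add ((norm_sub_le _ _).trans ?_) ?_)
          · exact add_le_add (hhor y₁) (hhor y₂)
          · rwa [norm_mul, norm_I, one_mul]
      _ = _ := by ring
  have hexp : Tendsto (fun X ↦ Real.exp (-c * (X - x₀))) atTop (nhds 0) :=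
    Real.tendsto_exp_atBot.comp ((tendsto_atTop_add_const_right _ (-x₀)
      tendsto_id).const_mul_atTop_of_neg (neg_neg_of_pos hc))
  have hlim := ((hexp.const_mul K).mul_const |y₂ - y₁|).const_add (2 * (K / c))
  simpa using ge_of_tendsto hlim (eventually_atTop.2 ⟨x₀, hright⟩)

end DecayingVerticalIntegral

section LerchTail

open Complex MeasureTheory Filter

variable {a : ℝ}

/-- The ratio `α / (n + α)` of the bases of the leading and the `n`-th term of the Lerch series,
for `n = m + 1`. -/
noncomputable def lerchRatio (a : ℝ) (m : ℕ) : ℝ := a / (m + 1 + a)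

/-- `lerchTail μ α s = α ^ s * L(μ, α, s) - 1`: the Lerch series normalized by its leading term,
with this term removed. -/
noncomputable def lerchTail (μ a : ℝ) (s : ℂ) : ℂ :=
  ∑' m : ℕ, exp (2 * Real.pi * I * μ * (m + 1 : ℕ)) * (lerchRatio a m : ℂ) ^ s

lemma lerchRatio_pos (ha : 0 < a) (m : ℕ) : 0 < lerchRatio a m := by
  unfold lerchRatio
  positivity

lemma lerchRatio_lt_one (ha : 0 < a) (m : ℕ) : lerchRatio a m < 1 := by
  rw [lerchRatio, div_lt_one (by positivity)]
  linarith [m.cast_nonneg (α := ℝ)]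

lemma lerchRatio_le_lerchRatio_zero (ha : 0 < a) (m : ℕ) : lerchRatio a m ≤ lerchRatio a 0 := by
  unfold lerchRatio
  gcongr
  simp

lemma summable_lerchRatio_rpow {x : ℝ} (ha : 0 < a) (hx : 1 < x) :
    Summable fun m ↦ lerchRatio a m ^ x := by
  refine .of_nonneg_of_le (fun m ↦ (Real.rpow_pos_of_pos (lerchRatio_pos ha m) _).le) (fun m ↦ ?_)
    (((summable_nat_add_iff 1).2 (Real.summable_one_div_nat_rpow.2 hx)).mul_left (a ^ x))
  rw [lerchRatio, Real.div_rpow ha.le (by positivity), div_eq_mul_one_div]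
  gcongr
  push_cast
  linarith

lemma div_add_one_rpow_lt_sub {x : ℝ} (ha : 0 < a) (hx : 0 < x) :
    (a / (x + 1)) ^ (1 + a) < (a / x) ^ a - (a / (x + 1)) ^ a := by
  have hsplit : (a / (x + 1)) ^ a = (a / x) ^ a * (x / (x + 1)) ^ a := by
    rw [← Real.mul_rpow (by positivity) (by positivity)]
    congr 1
    field_simp
  have hexp : (x / (x + 1)) ^ a ≤ Real.exp (-(a / (x + 1))) := by
    calc (x / (x + 1)) ^ a ≤ Real.exp (-(x + 1)⁻¹) ^ a := by
          gcongr
          refine le_trans (le_of_eq ?_) (Real.add_one_le_exp _)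
          field_simp
          ring
      _ = Real.exp (-(a / (x + 1))) := by rw [← Real.exp_mul]; ring_nf
  have hlt : (x / (x + 1)) ^ a * (1 + a / (x + 1)) < 1 := by
    calc (x / (x + 1)) ^ a * (1 + a / (x + 1))
        < Real.exp (-(a / (x + 1))) * Real.exp (a / (x + 1)) := by
          refine mul_lt_mul' hexp ?_ (by positivity) (Real.exp_pos _)
          rw [add_comm]
          exact Real.add_one_lt_exp (by positivity)
      _ = 1 := by rw [← Real.exp_add, neg_add_cancel, Real.exp_zero]
  rw [lt_sub_iff_add_lt]
  calc (a / (x + 1)) ^ (1 + a) + (a / (x + 1)) ^ a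
      = (a / x) ^ a * ((x / (x + 1)) ^ a * (1 + a / (x + 1))) := by
        rw [Real.rpow_add (by positivity), Real.rpow_one, hsplit]
        ring
    _ < (a / x) ^ a := mul_lt_of_lt_one_right (by positivity) hlt

/-- The exponent `1 + a` makes the comparison series telescope to exactly `1`; this is why the
half-plane `1 + α ≤ re s` is free of zeros. -/
lemma tsum_lerchRatio_rpow_lt_one (ha : 0 < a) : ∑' m, lerchRatio a m ^ (1 + a) < 1 := by
  set g : ℕ → ℝ := fun m ↦ (a / (m + a)) ^ a with hg
  have hstep : ∀ m : ℕ, lerchRatio a m ^ (1 + a) < g m - g (m + 1) := fun m ↦ by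
    have := div_add_one_rpow_lt_sub ha (x := m + a) (by positivity)
    simp only [hg, lerchRatio]
    push_cast
    rwa [add_right_comm] at this
  have hlim : Tendsto g atTop (nhds 0) := by
    have := (Tendsto.const_div_atTop (tendsto_atTop_add_const_right _ a
      tendsto_natCast_atTop_atTop) a).rpow_const (p := a) (Or.inr ha.le)
    rwa [Real.zero_rpow ha.ne'] at this
  have hsum : HasSum (fun m ↦ g m - g (m + 1)) 1 := by
    rw [hasSum_iff_tendsto_nat_of_nonneg fun m ↦
      ((Real.rpow_pos_of_pos (lerchRatio_pos ha m) _).trans (hstep m)).le]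
    simp only [Finset.sum_range_sub', show g 0 = 1 by simp [hg, ha.ne']]
    simpa using hlim.const_sub 1
  refine lt_of_lt_of_eq ?_ hsum.tsum_eq
  exact Summable.tsum_lt_tsum (i := 0) (fun m ↦ (hstep m).le) (hstep 0)
    (summable_lerchRatio_rpow ha (by linarith)) hsum.summable

lemma norm_exp_two_pi_I_mul_natCast (μ : ℝ) (m : ℕ) : ‖exp (2 * Real.pi * I * μ * m)‖ = 1 := by
  rw [show (2 * Real.pi * I * μ * m : ℂ) = ((2 * Real.pi * μ * m : ℝ) : ℂ) * I by push_cast; ring,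
    norm_exp_ofReal_mul_I]

lemma norm_lerchTail_term (ha : 0 < a) (μ : ℝ) (s : ℂ) (m : ℕ) :
    ‖exp (2 * Real.pi * I * μ * (m + 1 : ℕ)) * (lerchRatio a m : ℂ) ^ s‖ =
      lerchRatio a m ^ s.re := by
  rw [norm_mul, norm_exp_two_pi_I_mul_natCast, one_mul,
    norm_cpow_eq_rpow_re_of_pos (lerchRatio_pos ha m)]

lemma summable_lerchTail_term (ha : 0 < a) (μ : ℝ) {s : ℂ} (hs : 1 < s.re) :
    Summable fun m : ℕ ↦
      exp (2 * Real.pi * I * μ * (m + 1 : ℕ)) * (lerchRatio a m : ℂ) ^ s := by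
  refine .of_norm ?_
  simp only [norm_lerchTail_term ha]
  exact summable_lerchRatio_rpow ha hs

lemma lerchSeries_term_succ (ha : 0 < a) (μ : ℝ) (s : ℂ) (m : ℕ) :
    exp (2 * Real.pi * I * μ * (m + 1 : ℕ)) / (((m + 1 : ℕ) : ℂ) + a) ^ s =
      (a : ℂ) ^ (-s) *
        (exp (2 * Real.pi * I * μ * (m + 1 : ℕ)) * (lerchRatio a m : ℂ) ^ s) := by
  have hratio : (lerchRatio a m : ℂ) ^ s = (a : ℂ) ^ s / (((m + 1 : ℕ) : ℂ) + a) ^ s := by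
    rw [show (((m + 1 : ℕ) : ℂ) + a) = ((m + 1 + a : ℝ) : ℂ) by push_cast; ring, lerchRatio,
      ofReal_div, div_cpow_ofReal_nonneg ha.le (by positivity)]
  have : (a : ℂ) ^ s ≠ 0 := by simp [cpow_eq_zero_iff, ha.ne']
  rw [hratio, cpow_neg]
  field_simp

lemma summable_lerchSeries_term (ha : 0 < a) (μ : ℝ) {s : ℂ} (hs : 1 < s.re) :
    Summable fun m : ℕ ↦ exp (2 * Real.pi * I * μ * m) / ((m : ℂ) + a) ^ s := by
  rw [← summable_nat_add_iff 1]
  simp only [lerchSeries_term_succ ha]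
  exact (summable_lerchTail_term ha μ hs).mul_left _

lemma lerchSeries_eq_cpow_mul_one_add_lerchTail (ha : 0 < a) (μ : ℝ) {s : ℂ} (hs : 1 < s.re) :
    lerchSeries μ a s = (a : ℂ) ^ (-s) * (1 + lerchTail μ a s) := by
  rw [lerchSeries, (summable_lerchSeries_term ha μ hs).tsum_eq_zero_add]
  simp only [lerchSeries_term_succ ha, tsum_mul_left]
  simp only [Nat.cast_zero, mul_zero, exp_zero, zero_add, cpow_neg, lerchTail]
  ring

lemma norm_lerchTail_le_mul_rpow (ha : 0 < a) (μ : ℝ) {s : ℂ} (hs : 1 + a ≤ s.re) :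
    ‖lerchTail μ a s‖ ≤
      (∑' m, lerchRatio a m ^ (1 + a)) * lerchRatio a 0 ^ (s.re - (1 + a)) := by
  have hsum := summable_lerchRatio_rpow ha (x := 1 + a) (by linarith)
  calc ‖lerchTail μ a s‖ ≤ ∑' m, lerchRatio a m ^ s.re := by
        refine (norm_tsum_le_tsum_norm ?_).trans_eq (by simp only [norm_lerchTail_term ha])
        exact (summable_lerchTail_term ha μ (by linarith)).norm
    _ ≤ ∑' m, lerchRatio a m ^ (1 + a) * lerchRatio a 0 ^ (s.re - (1 + a)) := by
        refine (summable_lerchRatio_rpow ha (by linarith)).tsum_le_tsum (fun m ↦ ?_)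
          (hsum.mul_right _)
        have hm := lerchRatio_pos ha m
        conv_lhs => rw [← add_sub_cancel (1 + a) s.re, Real.rpow_add hm]
        gcongr
        exact lerchRatio_le_lerchRatio_zero ha m
    _ = _ := tsum_mul_right

lemma tsum_lerchRatio_rpow_nonneg (ha : 0 < a) : 0 ≤ ∑' m, lerchRatio a m ^ (1 + a) :=
  tsum_nonneg fun m ↦ (Real.rpow_pos_of_pos (lerchRatio_pos ha m) _).le

lemma norm_lerchTail_le_tsum (ha : 0 < a) (μ : ℝ) {s : ℂ} (hs : 1 + a ≤ s.re) :
    ‖lerchTail μ a s‖ ≤ ∑' m, lerchRatio a m ^ (1 + a) :=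
  (norm_lerchTail_le_mul_rpow ha μ hs).trans <|
    mul_le_of_le_one_right (tsum_lerchRatio_rpow_nonneg ha) <|
      Real.rpow_le_one (lerchRatio_pos ha 0).le (lerchRatio_lt_one ha 0).le (by linarith)

lemma norm_lerchTail_lt_one (ha : 0 < a) (μ : ℝ) {s : ℂ} (hs : 1 + a ≤ s.re) :
    ‖lerchTail μ a s‖ < 1 :=
  (norm_lerchTail_le_tsum ha μ hs).trans_lt (tsum_lerchRatio_rpow_lt_one ha)

lemma differentiableAt_lerchTail (ha : 0 < a) (μ : ℝ) {s : ℂ} (hs : 1 < s.re) :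
    DifferentiableAt ℂ (lerchTail μ a) s := by
  obtain ⟨x, hx1, hxs⟩ := exists_between hs
  have hopen : IsOpen {s : ℂ | x < s.re} := isOpen_lt continuous_const continuous_re
  refine (differentiableOn_tsum_of_summable_norm (summable_lerchRatio_rpow ha hx1)
    (fun m s _ ↦ ?_) hopen (fun m s hs ↦ ?_)).differentiableAt (hopen.mem_nhds hxs)
  · have : (lerchRatio a m : ℂ) ≠ 0 := ofReal_ne_zero.2 (lerchRatio_pos ha m).ne'
    exact ((differentiableAt_id.const_cpow (Or.inl this)).const_mul _).differentiableWithinAt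
  · rw [norm_lerchTail_term ha]
    exact Real.rpow_le_rpow_of_exponent_ge (lerchRatio_pos ha m) (lerchRatio_lt_one ha m).le
      (le_of_lt hs)

lemma norm_log_one_add_le_mul {z : ℂ} {q : ℝ} (hz : ‖z‖ ≤ q) (hq : q < 1) :
    ‖log (1 + z)‖ ≤ ((1 - q)⁻¹ + 1) * ‖z‖ := by
  have : 0 < 1 - q := sub_pos.2 hq
  calc ‖log (1 + z)‖ ≤ ‖z‖ ^ 2 * (1 - ‖z‖)⁻¹ / 2 + ‖z‖ := norm_log_one_add_le (hz.trans_lt hq)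
    _ ≤ ‖z‖ * 1 * (1 - q)⁻¹ + ‖z‖ := by
        have : 0 < 1 - ‖z‖ := by linarith
        rw [sq]
        refine add_le_add_left ((half_le_self (by positivity)).trans ?_) _
        gcongr
        exact hz.trans hq.le
    _ = _ := by ring

lemma one_add_lerchTail_mem_slitPlane (ha : 0 < a) (μ : ℝ) {s : ℂ} (hs : 1 + a ≤ s.re) :
    1 + lerchTail μ a s ∈ slitPlane :=
  mem_slitPlane_of_norm_lt_one (norm_lerchTail_lt_one ha μ hs)

lemma exists_norm_integral_log_one_add_lerchTail_le {x : ℝ} (ha : 0 < a) (hx : 1 + a ≤ x) (μ : ℝ) :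
    ∃ C, ∀ y₁ y₂ : ℝ, ‖∫ y in y₁..y₂, log (1 + lerchTail μ a (x + y * I))‖ ≤ C := by
  set q := ∑' m, lerchRatio a m ^ (1 + a)
  have hq : q < 1 := tsum_lerchRatio_rpow_lt_one ha
  have hK : 0 ≤ (1 - q)⁻¹ + 1 := by
    have := sub_pos.2 hq
    positivity
  refine ⟨_, norm_integral_vertical_le_of_norm_le_exp (g := fun s ↦ log (1 + lerchTail μ a s))
    (neg_pos.2 (Real.log_neg (lerchRatio_pos ha 0) (lerchRatio_lt_one ha 0))) hK
    (fun s hs ↦ ?_) (fun s hs ↦ ?_)⟩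
  · exact ((differentiableAt_lerchTail ha μ (by linarith)).const_add 1).clog
      (one_add_lerchTail_mem_slitPlane ha μ (by linarith))
  · refine (norm_log_one_add_le_mul (norm_lerchTail_le_tsum ha μ (by linarith)) hq).trans
      (mul_le_mul_of_nonneg_left ?_ hK)
    calc ‖lerchTail μ a s‖ ≤ q * lerchRatio a 0 ^ (s.re - (1 + a)) :=
          norm_lerchTail_le_mul_rpow ha μ (by linarith)
      _ ≤ 1 * lerchRatio a 0 ^ (s.re - x) := by
          refine mul_le_mul hq.le ?_ (Real.rpow_nonneg (lerchRatio_pos ha 0).le _) zero_le_one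
          exact Real.rpow_le_rpow_of_exponent_ge (lerchRatio_pos ha 0)
            (lerchRatio_lt_one ha 0).le (by linarith)
      _ = _ := by rw [one_mul, Real.rpow_def_of_pos (lerchRatio_pos ha 0), neg_neg]

end LerchTail

section ComplexStirling

open Complex Filter

variable {s : ℂ}

/-- The main factor in Stirling's formula for `Gamma s / √(2 * π)`. -/
noncomputable def stirlingMain (s : ℂ) : ℂ := exp ((s - 1 / 2) * log s - s)

/-- The defect of the recursion `Gamma (s + 1) = s * Gamma s` for `stirlingMain`, on the
logarithmic scale. -/
noncomputable def stirlingDefect (s : ℂ) : ℂ := (s + 1 / 2) * (log (s + 1) - log s) - 1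

lemma stirlingMain_ne_zero (s : ℂ) : stirlingMain s ≠ 0 := exp_ne_zero _

lemma stirlingMain_add_one (h0 : s ≠ 0) :
    stirlingMain (s + 1) = stirlingMain s * s * exp (stirlingDefect s) := by
  have : stirlingMain s * s = exp ((s - 1 / 2) * log s - s + log s) := by
    rw [exp_add, exp_log h0, stirlingMain]
  rw [this, stirlingMain, stirlingDefect, ← exp_add]
  ring_nf

lemma add_natCast_ne_zero_of_re_pos (hs : 0 < s.re) (n : ℕ) : s + n ≠ 0 :=
  ne_zero_of_re_pos (by simpa using by positivity)

lemma stirlingMain_add_natCast (hs : 0 < s.re) (n : ℕ) :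
    stirlingMain (s + n) = stirlingMain s * (∏ j ∈ Finset.range n, (s + j)) *
      exp (∑ j ∈ Finset.range n, stirlingDefect (s + j)) := by
  induction n with
  | zero => simp
  | succ n ih =>
    rw [Nat.cast_succ, ← add_assoc, stirlingMain_add_one (add_natCast_ne_zero_of_re_pos hs n), ih,
      Finset.prod_range_succ, Finset.sum_range_succ, exp_add]
    ring

lemma log_add_of_re_pos {w : ℂ} (hs : 0 < s.re) (hw : 0 < (1 + w / s).re) :
    log (s + w) = log s + log (1 + w / s) := by
  have h0 : s ≠ 0 := ne_zero_of_re_pos hs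
  have hargs := abs_lt.1 (abs_arg_lt_pi_div_two_iff.2 (Or.inl hs))
  have hargw := abs_lt.1 (abs_arg_lt_pi_div_two_iff.2 (Or.inl hw))
  rw [← log_mul h0 (ne_zero_of_re_pos hw) ⟨by linarith [hargs.1, hargw.1],
    by linarith [hargs.2, hargw.2]⟩]
  congr 1
  field_simp

lemma norm_log_one_add_sub_le {z : ℂ} (hz : ‖z‖ ≤ 1 / 2) :
    ‖log (1 + z) - (z - z ^ 2 / 2)‖ ≤ 2 / 3 * ‖z‖ ^ 3 := by
  have htaylor := norm_log_sub_logTaylor_le 2 (z := z) (by linarith)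
  have hpoly : logTaylor (2 + 1) z = z - z ^ 2 / 2 := by
    simp [logTaylor_succ, logTaylor_zero]
    ring
  have hinv : (1 - ‖z‖)⁻¹ ≤ 2 := inv_le_of_inv_le₀ (by norm_num) (by linarith)
  rw [hpoly] at htaylor
  calc _ ≤ ‖z‖ ^ 3 * (1 - ‖z‖)⁻¹ / 3 := by convert htaylor using 2; norm_num
    _ ≤ ‖z‖ ^ 3 * 2 / 3 := by gcongr
    _ = _ := by ring

lemma norm_stirlingDefect_le (hs : 0 < s.re) (h2 : 2 ≤ ‖s‖) :
    ‖stirlingDefect s‖ ≤ 2 / ‖s‖ ^ 2 := by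
  have h0 : s ≠ 0 := ne_zero_of_re_pos hs
  have : 0 < ‖s‖ := norm_pos_iff.2 h0
  have hre : 0 < (1 + 1 / s).re := by
    have : 0 ≤ s.re / normSq s := div_nonneg hs.le (normSq_nonneg _)
    simp only [one_div, add_re, one_re, inv_re]
    linarith
  have hz : ‖s⁻¹‖ ≤ 1 / 2 := by
    rw [norm_inv, one_div]
    exact inv_anti₀ (by norm_num) h2
  set R := log (1 + s⁻¹) - (s⁻¹ - s⁻¹ ^ 2 / 2) with hR
  have hRle : ‖R‖ ≤ 2 / 3 * ‖s⁻¹‖ ^ 3 := norm_log_one_add_sub_le hz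
  have hdefect : stirlingDefect s = -(s⁻¹ ^ 2 / 4) + s * R + R / 2 := by
    rw [stirlingDefect, log_add_of_re_pos hs hre, hR, one_div s]
    field_simp
    ring
  calc ‖stirlingDefect s‖ ≤ ‖s⁻¹‖ ^ 2 / 4 + ‖s‖ * ‖R‖ + ‖R‖ / 2 := by
        rw [hdefect]
        refine (norm_add₃_le ..).trans_eq ?_
        simp only [norm_neg, norm_div, norm_pow, norm_mul, norm_ofNat]
    _ ≤ ‖s⁻¹‖ ^ 2 / 4 + ‖s‖ * (2 / 3 * ‖s⁻¹‖ ^ 3) + 2 / 3 * (‖s⁻¹‖ ^ 2 * (1 / 2)) / 2 := by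
        gcongr
        exact hRle.trans (by rw [pow_succ ‖s⁻¹‖ 2]; gcongr)
    _ = 13 / 12 / ‖s‖ ^ 2 := by
        rw [norm_inv]
        field_simp
        norm_num
    _ ≤ 2 / ‖s‖ ^ 2 := by gcongr; norm_num

lemma norm_sq_add_natCast_sq_le (hs : 0 ≤ s.re) (k : ℕ) : ‖s‖ ^ 2 + (k : ℝ) ^ 2 ≤ ‖s + k‖ ^ 2 := by
  rw [← normSq_eq_norm_sq, ← normSq_eq_norm_sq, normSq_apply, normSq_apply]
  simp only [add_re, natCast_re, add_im, natCast_im]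
  nlinarith [mul_nonneg hs (k.cast_nonneg (α := ℝ))]

lemma norm_stirlingDefect_add_natCast_le (hs : 0 < s.re) (h2 : 2 ≤ ‖s‖) (k : ℕ) :
    ‖stirlingDefect (s + k)‖ ≤ 4 * (1 / (‖s‖ - 1 + k) - 1 / (‖s‖ - 1 + (k + 1 : ℕ))) := by
  have := k.cast_nonneg (α := ℝ)
  have hsk := norm_sq_add_natCast_sq_le hs.le k
  have hle : ‖s‖ ≤ ‖s + k‖ := le_of_sq_le_sq (by nlinarith) (norm_nonneg _)
  have hpos : 0 < ‖s‖ - 1 + k := by linarith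
  have htele : 4 * (1 / (‖s‖ - 1 + k) - 1 / (‖s‖ - 1 + (k + 1 : ℕ))) =
      4 / ((‖s‖ - 1 + k) * (‖s‖ + k)) := by
    have : ‖s‖ + k ≠ 0 := by linarith
    rw [show ‖s‖ - 1 + (k + 1 : ℕ) = ‖s‖ + k by push_cast; ring]
    field_simp
    ring
  have hre : 0 < (s + k).re := by
    rw [add_re, natCast_re]
    positivity
  refine (norm_stirlingDefect_le hre (h2.trans hle)).trans ?_
  rw [htele, div_le_div_iff₀ (pow_pos (by linarith) 2) (mul_pos hpos (by linarith))]
  nlinarith [sq_nonneg (‖s‖ - k)]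

lemma hasSum_one_div_add_natCast_sub {x : ℝ} (hx : 0 < x) :
    HasSum (fun k : ℕ ↦ 1 / (x + k) - 1 / (x + (k + 1 : ℕ))) (1 / x) := by
  rw [hasSum_iff_tendsto_nat_of_nonneg fun k ↦ by
    rw [sub_nonneg]
    gcongr
    simp]
  simp only [Finset.sum_range_sub' (fun k : ℕ ↦ 1 / (x + k))]
  have : Tendsto (fun n : ℕ ↦ 1 / (x + n)) atTop (nhds 0) :=
    (tendsto_atTop_add_const_left _ _ tendsto_natCast_atTop_atTop).const_div_atTop _
  simpa using this.const_sub (1 / (x + (0 : ℕ)))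

lemma summable_stirlingDefect (hs : 0 < s.re) (h2 : 2 ≤ ‖s‖) :
    Summable fun k : ℕ ↦ stirlingDefect (s + k) :=
  .of_norm_bounded ((hasSum_one_div_add_natCast_sub (x := ‖s‖ - 1) (by linarith)).summable.mul_left
    4) (norm_stirlingDefect_add_natCast_le hs h2)

lemma norm_tsum_stirlingDefect_le (hs : 0 < s.re) (h2 : 2 ≤ ‖s‖) :
    ‖∑' k : ℕ, stirlingDefect (s + k)‖ ≤ 8 / ‖s‖ := by
  refine (tsum_of_norm_bounded ((hasSum_one_div_add_natCast_sub (x := ‖s‖ - 1)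
    (by linarith)).mul_left 4) (norm_stirlingDefect_add_natCast_le hs h2)).trans ?_
  rw [mul_one_div, div_le_div_iff₀ (by linarith) (by linarith)]
  linarith

lemma factorial_eq_stirlingSeq_mul_exp {n : ℕ} (hn : 0 < n) :
    (n.factorial : ℝ) =
      Stirling.stirlingSeq n * √2 * Real.exp ((n + 1 / 2) * Real.log n - n) := by
  have hn' : (0 : ℝ) < n := Nat.cast_pos.2 hn
  have hexp : Real.exp ((n + 1 / 2) * Real.log n - n) = √n * (n / Real.exp 1) ^ n := by
    rw [Real.sqrt_eq_rpow, Real.rpow_def_of_pos hn', div_pow, ← Real.exp_nat_mul, mul_one,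
      ← Real.rpow_natCast, Real.rpow_def_of_pos hn', ← Real.exp_sub, ← Real.exp_add]
    ring_nf
  have : √(n : ℝ) ≠ 0 := (Real.sqrt_pos.2 hn').ne'
  rw [hexp, Stirling.stirlingSeq, Real.sqrt_mul (by norm_num)]
  field_simp

lemma tendsto_exp_sub_mul_log_one_add_div (w b : ℂ) :
    Tendsto (fun n : ℕ ↦ exp (w - (b * log (1 + w / n) + n * log (1 + w / n)))) atTop
      (nhds 1) := by
  have hdiv : Tendsto (fun n : ℕ ↦ 1 + w / n) atTop (nhds 1) := by
    simpa [div_eq_mul_inv] using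
      ((tendsto_inv_atTop_nhds_zero_nat (𝕜 := ℂ)).const_mul w).const_add 1
  have hlog : Tendsto (fun n : ℕ ↦ log (1 + w / n)) atTop (nhds 0) := by
    simpa [Function.comp_def] using (continuousAt_clog (x := 1) (by simp)).tendsto.comp hdiv
  have hmul : Tendsto (fun n : ℕ ↦ n * log (1 + w / n)) atTop (nhds w) := by
    refine tendsto_nat_mul_log_one_add_of_tendsto (tendsto_const_nhds.congr' ?_)
    filter_upwards [eventually_gt_atTop 0] with n hn
    have : (n : ℂ) ≠ 0 := Nat.cast_ne_zero.2 hn.ne'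
    field_simp
  simpa [Function.comp_def] using
    (continuous_exp.tendsto _).comp (((hlog.const_mul b).add hmul).const_sub w)

lemma cpow_mul_factorial_div_stirlingMain (hs : 0 < s.re) {n : ℕ} (hn : 0 < n) :
    (n : ℂ) ^ s * n.factorial / stirlingMain (s + (n + 1 : ℕ)) =
      ((Stirling.stirlingSeq n * √2 : ℝ) : ℂ) * exp (s + 1 - ((s + 1 / 2) *
        log (1 + (s + 1) / n) + n * log (1 + (s + 1) / n))) := by
  have hn' : (0 : ℝ) < n := Nat.cast_pos.2 hn
  have hnc : (n : ℂ) ≠ 0 := Nat.cast_ne_zero.2 hn.ne'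
  have hre : 0 < (1 + (s + 1) / (n : ℂ)).re := by
    simp only [add_re, one_re, div_natCast_re]
    positivity
  have hlog : log (s + (n + 1 : ℕ)) = log n + log (1 + (s + 1) / n) := by
    rw [← log_add_of_re_pos (by simpa using hn') hre]
    push_cast
    ring_nf
  have hfac := congrArg ofReal (factorial_eq_stirlingSeq_mul_exp hn)
  push_cast at hfac
  rw [hfac, stirlingMain, hlog, cpow_def_of_ne_zero hnc, mul_comm (exp _) (_ * exp _), mul_assoc,
    mul_div_assoc, ← exp_add, ← exp_sub]
  push_cast
  ring_nf

lemma tendsto_cpow_mul_factorial_div_stirlingMain (hs : 0 < s.re) :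
    Tendsto (fun n : ℕ ↦ (n : ℂ) ^ s * n.factorial / stirlingMain (s + (n + 1 : ℕ))) atTop
      (nhds √(2 * Real.pi)) := by
  have hseq : Tendsto (fun n : ℕ ↦ ((Stirling.stirlingSeq n * √2 : ℝ) : ℂ)) atTop
      (nhds √(2 * Real.pi)) := by
    rw [mul_comm, Real.sqrt_mul Real.pi_pos.le]
    exact (continuous_ofReal.tendsto _).comp
      (Stirling.tendsto_stirlingSeq_sqrt_pi.mul_const √2)
  have hmul := hseq.mul (tendsto_exp_sub_mul_log_one_add_div (s + 1) (s + 1 / 2))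
  rw [mul_one] at hmul
  refine hmul.congr' ?_
  filter_upwards [eventually_gt_atTop 0] with n hn
  exact (cpow_mul_factorial_div_stirlingMain hs hn).symm

theorem Gamma_eq_stirlingMain_mul_exp_tsum (hs : 0 < s.re) (h2 : 2 ≤ ‖s‖) :
    Gamma s = √(2 * Real.pi) * stirlingMain s * exp (∑' k : ℕ, stirlingDefect (s + k)) := by
  have hlim := ((tendsto_cpow_mul_factorial_div_stirlingMain hs).mul_const (stirlingMain s)).mul
    ((continuous_exp.tendsto _).comp ((tendsto_add_atTop_iff_nat 1).2
      (summable_stirlingDefect hs h2).hasSum.tendsto_sum_nat))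
  refine tendsto_nhds_unique (GammaSeq_tendsto_Gamma s) (hlim.congr fun n ↦ ?_)
  have hprod : ∏ j ∈ Finset.range (n + 1), (s + j) ≠ 0 :=
    Finset.prod_ne_zero_iff.2 fun j _ ↦ add_natCast_ne_zero_of_re_pos hs j
  have := stirlingMain_ne_zero s
  have := exp_ne_zero (∑ j ∈ Finset.range (n + 1), stirlingDefect (s + j))
  simp only [Function.comp]
  rw [stirlingMain_add_natCast hs (n + 1), GammaSeq]
  field_simp

end ComplexStirling

section TaylorTrapezoid

open Set

variable {f f' f'' : ℝ → ℂ} {h M : ℝ}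

lemma norm_sub_sub_mul_deriv_le (hh : 0 ≤ h) (hf : ∀ x ∈ Icc 0 h, HasDerivAt f (f' x) x)
    (hf' : ∀ x ∈ Icc 0 h, HasDerivAt f' (f'' x) x) (hM : ∀ x ∈ Icc 0 h, ‖f'' x‖ ≤ M) :
    ‖f h - f 0 - h * f' 0‖ ≤ M * h ^ 2 := by
  have hM0 : 0 ≤ M := (norm_nonneg _).trans (hM 0 ⟨le_rfl, hh⟩)
  have hbound : ∀ x ∈ Icc 0 h, ‖f' x - f' 0‖ ≤ M * h := fun x hx ↦
    (norm_image_sub_le_of_norm_deriv_le_segment' (fun x hx ↦ (hf' x hx).hasDerivWithinAt)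
      (fun x hx ↦ hM x ⟨hx.1, hx.2.le⟩) x hx).trans (by gcongr; linarith [hx.2])
  have hderiv : ∀ x ∈ Icc 0 h, HasDerivAt (fun x : ℝ ↦ f x - x * f' 0) (f' x - f' 0) x :=
    fun x hx ↦ by
      simpa using (hf x hx).fun_sub (((hasDerivAt_id x).ofReal_comp).mul_const (f' 0))
  calc ‖f h - f 0 - h * f' 0‖ = ‖f h - h * f' 0 - (f 0 - (0 : ℝ) * f' 0)‖ := by
        congr 1; push_cast; ring
    _ ≤ M * h * (h - 0) := norm_image_sub_le_of_norm_deriv_le_segment'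
        (fun x hx ↦ (hderiv x hx).hasDerivWithinAt) (fun x hx ↦ hbound x ⟨hx.1, hx.2.le⟩) h
        ⟨hh, le_rfl⟩
    _ = M * h ^ 2 := by ring

lemma norm_second_difference_le (hf : ∀ x ∈ Icc 0 2, HasDerivAt f (f' x) x)
    (hf' : ∀ x ∈ Icc 0 2, HasDerivAt f' (f'' x) x) (hM : ∀ x ∈ Icc 0 2, ‖f'' x‖ ≤ M) :
    ‖f 2 - 2 * f 1 + f 0‖ ≤ 6 * M := by
  have taylor : ∀ h ∈ Icc (0 : ℝ) 2, ‖f h - f 0 - h * f' 0‖ ≤ M * h ^ 2 := fun h hh ↦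
    norm_sub_sub_mul_deriv_le hh.1 (fun x hx ↦ hf x ⟨hx.1, hx.2.trans hh.2⟩)
      (fun x hx ↦ hf' x ⟨hx.1, hx.2.trans hh.2⟩) fun x hx ↦ hM x ⟨hx.1, hx.2.trans hh.2⟩
  calc ‖f 2 - 2 * f 1 + f 0‖
      = ‖(f 2 - f 0 - (2 : ℝ) * f' 0) - 2 * (f 1 - f 0 - (1 : ℝ) * f' 0)‖ := by
        congr 1; push_cast; ring
    _ ≤ M * 2 ^ 2 + 2 * (M * 1 ^ 2) := by
        refine (norm_sub_le _ _).trans (add_le_add (taylor 2 (by simp)) ?_)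
        rw [norm_mul, RCLike.norm_ofNat]
        gcongr
        exact taylor 1 (by simp)
    _ = 6 * M := by ring

lemma norm_trapezoid_sub_le {P : ℝ → ℂ} (hP : ∀ x ∈ Icc 0 1, HasDerivAt P (f x) x)
    (hf : ∀ x ∈ Icc 0 1, HasDerivAt f (f' x) x) (hf' : ∀ x ∈ Icc 0 1, HasDerivAt f' (f'' x) x)
    (hM : ∀ x ∈ Icc 0 1, ‖f'' x‖ ≤ M) :
    ‖1 / 2 * (f 0 + f 1) - (P 1 - P 0)‖ ≤ M := by
  have hhalf (x : ℝ) : HasDerivAt (fun x : ℝ ↦ (1 / 2 : ℂ) * x) (1 / 2) x := by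
    simpa using ((hasDerivAt_id x).ofReal_comp).const_mul (1 / 2 : ℂ)
  have key := norm_sub_sub_mul_deriv_le (M := M) zero_le_one
    (f := fun h ↦ 1 / 2 * h * (f 0 + f h) - (P h - P 0))
    (f' := fun h ↦ 1 / 2 * (f 0 - f h) + 1 / 2 * h * f' h) (f'' := fun h ↦ 1 / 2 * h * f'' h)
    (fun x hx ↦ (((hhalf x).mul ((hf x hx).const_add (f 0))).sub
      ((hP x hx).sub_const (P 0))).congr_deriv (by ring))
    (fun x hx ↦ ((((hf x hx).const_sub (f 0)).const_mul (1 / 2 : ℂ)).add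
      ((hhalf x).mul (hf' x hx))).congr_deriv (by ring))
    (fun x hx ↦ by
      have hx1 : ‖(1 / 2 : ℂ) * x‖ ≤ 1 := by
        rw [norm_mul, Complex.norm_real, Real.norm_of_nonneg hx.1]
        norm_num
        linarith [hx.2]
      rw [norm_mul]
      exact (mul_le_of_le_one_left (norm_nonneg _) hx1).trans (hM x hx))
  simpa using key

end TaylorTrapezoid

section CpowDifferences

open Complex Set

variable {a u x : ℝ} {s : ℂ}

lemma hasDerivAt_ofReal_add_cpow_neg (s : ℂ) (hx : 0 < u + x) :
    HasDerivAt (fun x : ℝ ↦ ((u + x : ℝ) : ℂ) ^ (-s))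
      (-s * ((u + x : ℝ) : ℂ) ^ (-(s + 1))) x := by
  have : HasDerivAt (fun z : ℂ ↦ z ^ (-s)) (-s * ((u + x : ℝ) : ℂ) ^ (-s - 1)) (u + x : ℝ) := by
    simpa using (hasDerivAt_id ((u + x : ℝ) : ℂ)).cpow_const (c := -s) (.inl (by simpa using hx))
  rw [neg_add']
  exact HasDerivAt.comp_const_add (f := fun x : ℝ ↦ (x : ℂ) ^ (-s)) u x this.comp_ofReal

lemma hasDerivAt_ofReal_add_cpow_one_sub_div (hs : s ≠ 1) (hx : 0 < u + x) :
    HasDerivAt (fun x : ℝ ↦ ((u + x : ℝ) : ℂ) ^ (1 - s) / (1 - s))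
      (((u + x : ℝ) : ℂ) ^ (-s)) x := by
  have := (hasDerivAt_ofReal_add_cpow_neg (s - 1) hx).div_const (1 - s)
  simp only [neg_sub, sub_add_cancel] at this
  exact this.congr_deriv (mul_div_cancel_left₀ _ (sub_ne_zero.2 hs.symm))

lemma norm_ofReal_cpow_neg (s : ℂ) (hx : 0 < x) : ‖(x : ℂ) ^ (-s)‖ = x ^ (-s.re) := by
  rw [norm_cpow_eq_rpow_re_of_pos hx, neg_re]

lemma norm_deriv2_ofReal_add_cpow_neg_le (hs : -2 ≤ s.re) (hu : 0 < u) (hx : 0 ≤ x) :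
    ‖-s * (-(s + 1) * ((u + x : ℝ) : ℂ) ^ (-(s + 1 + 1)))‖ ≤
      ‖s‖ * ‖s + 1‖ * u ^ (-(s.re + 2)) := by
  rw [norm_mul, norm_mul, norm_neg, norm_neg, norm_ofReal_cpow_neg _ (by linarith), mul_assoc,
    show (s + 1 + 1).re = s.re + 2 by simp; ring]
  have := Real.rpow_le_rpow_of_nonpos hu (le_add_of_nonneg_right hx)
    (by linarith : -(s.re + 2) ≤ 0)
  gcongr

/-- The second difference at `u` of the function `x ↦ x ^ (-s)`. -/
noncomputable def cpowSecondDiff (s : ℂ) (u : ℝ) : ℂ :=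
  ((u + 2 : ℝ) : ℂ) ^ (-s) - 2 * ((u + 1 : ℝ) : ℂ) ^ (-s) + (u : ℂ) ^ (-s)

/-- The error of the trapezoidal rule for the integral of `x ↦ x ^ (-s)` over `[u, u + 1]`, where
`s ≠ 1`. -/
noncomputable def cpowTrapezoidError (s : ℂ) (u : ℝ) : ℂ :=
  1 / 2 * ((u : ℂ) ^ (-s) + ((u + 1 : ℝ) : ℂ) ^ (-s)) -
    (((u + 1 : ℝ) : ℂ) ^ (1 - s) / (1 - s) - (u : ℂ) ^ (1 - s) / (1 - s))

lemma norm_cpowSecondDiff_le (hs : -2 ≤ s.re) (hu : 0 < u) :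
    ‖cpowSecondDiff s u‖ ≤ 6 * (‖s‖ * ‖s + 1‖ * u ^ (-(s.re + 2))) := by
  have := norm_second_difference_le (f := fun x ↦ ((u + x : ℝ) : ℂ) ^ (-s))
    (fun x hx ↦ hasDerivAt_ofReal_add_cpow_neg s (by linarith [hx.1]))
    (fun x hx ↦ (hasDerivAt_ofReal_add_cpow_neg (s + 1) (by linarith [hx.1])).const_mul (-s))
    fun x hx ↦ norm_deriv2_ofReal_add_cpow_neg_le hs hu hx.1
  simpa only [cpowSecondDiff, add_zero] using this

lemma norm_cpowTrapezoidError_le (hs : -2 ≤ s.re) (hs1 : s ≠ 1) (hu : 0 < u) :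
    ‖cpowTrapezoidError s u‖ ≤ ‖s‖ * ‖s + 1‖ * u ^ (-(s.re + 2)) := by
  have := norm_trapezoid_sub_le (f := fun x ↦ ((u + x : ℝ) : ℂ) ^ (-s))
    (fun x hx ↦ hasDerivAt_ofReal_add_cpow_one_sub_div hs1 (by linarith [hx.1]))
    (fun x hx ↦ hasDerivAt_ofReal_add_cpow_neg s (by linarith [hx.1]))
    (fun x hx ↦ (hasDerivAt_ofReal_add_cpow_neg (s + 1) (by linarith [hx.1])).const_mul (-s))
    fun x hx ↦ norm_deriv2_ofReal_add_cpow_neg_le hs hu hx.1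
  simpa only [cpowTrapezoidError, add_zero] using this

lemma differentiableAt_ofReal_cpow_neg (hu : 0 < u) (s : ℂ) :
    DifferentiableAt ℂ (fun s ↦ (u : ℂ) ^ (-s)) s :=
  differentiableAt_id.neg.const_cpow (.inl (ofReal_ne_zero.2 hu.ne'))

lemma differentiableAt_ofReal_cpow_one_sub (hu : 0 < u) (s : ℂ) :
    DifferentiableAt ℂ (fun s ↦ (u : ℂ) ^ (1 - s)) s :=
  (differentiableAt_id.const_sub 1).const_cpow (.inl (ofReal_ne_zero.2 hu.ne'))

lemma differentiableAt_cpowSecondDiff (hu : 0 < u) (s : ℂ) :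
    DifferentiableAt ℂ (cpowSecondDiff · u) s :=
  ((differentiableAt_ofReal_cpow_neg (by linarith) s).sub
    ((differentiableAt_ofReal_cpow_neg (by linarith) s).const_mul 2)).add
    (differentiableAt_ofReal_cpow_neg hu s)

lemma differentiableAt_cpowTrapezoidError (hu : 0 < u) (hs : s ≠ 1) :
    DifferentiableAt ℂ (cpowTrapezoidError · u) s := by
  have hs' : 1 - s ≠ 0 := sub_ne_zero.2 hs.symm
  have hquot : ∀ v : ℝ, 0 < v → DifferentiableAt ℂ (fun s ↦ (v : ℂ) ^ (1 - s) / (1 - s)) s :=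
    fun v hv ↦ (differentiableAt_ofReal_cpow_one_sub hv s).fun_div
      (differentiableAt_id.const_sub 1) hs'
  exact (((differentiableAt_ofReal_cpow_neg hu s).add
    (differentiableAt_ofReal_cpow_neg (by linarith) s)).const_mul _).sub
    ((hquot _ (by linarith)).sub (hquot u hu))

lemma summable_natCast_add_rpow_neg (ha : 0 < a) (hx : 1 < x) :
    Summable fun m : ℕ ↦ ((m : ℝ) + a) ^ (-x) :=
  ((Real.summable_one_div_nat_add_rpow a x).2 hx).congr fun m ↦ by
    rw [abs_of_pos (by positivity), Real.rpow_neg (by positivity), one_div]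

lemma rpow_le_rpow_add_rpow {p q : ℝ} (hu : 0 < u) (hp : p ≤ x) (hq : x ≤ q) :
    u ^ x ≤ u ^ p + u ^ q := by
  rcases le_total 1 u with h | h
  · exact (Real.rpow_le_rpow_of_exponent_le h hq).trans (le_add_of_nonneg_left (by positivity))
  · exact (Real.rpow_le_rpow_of_exponent_ge hu h hp).trans (le_add_of_nonneg_right (by positivity))

lemma differentiableAt_tsum_mul_of_norm_le {K : ℝ} {U : Set ℂ} {c : ℕ → ℂ} {E : ℂ → ℝ → ℂ}
    (ha : 0 < a) (hc : ∀ m, ‖c m‖ ≤ 1) (hU : IsOpen U) (hK : 0 ≤ K)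
    (hE : ∀ s ∈ U, ∀ u : ℝ, 0 < u → -2 ≤ s.re →
      ‖E s u‖ ≤ K * (‖s‖ * ‖s + 1‖ * u ^ (-(s.re + 2))))
    (hd : ∀ s ∈ U, ∀ u : ℝ, 0 < u → DifferentiableAt ℂ (E · u) s) (hs : -1 < s.re) (hsU : s ∈ U) :
    DifferentiableAt ℂ (fun s ↦ ∑' m : ℕ, c m * E s (m + a)) s := by
  obtain ⟨y, hy, hys⟩ := exists_between hs
  set R := ‖s‖ + 1
  have hR : 0 ≤ R := by positivity
  set V : Set ℂ := U ∩ {z | y < z.re} ∩ Metric.ball 0 R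
  have hVo : IsOpen V :=
    (hU.inter (isOpen_lt continuous_const continuous_re)).inter Metric.isOpen_ball
  have hsV : s ∈ V := ⟨⟨hsU, hys⟩, by simp [R]⟩
  have hsum : Summable fun m : ℕ ↦
      K * (R * (R + 1) * (((m : ℝ) + a) ^ (-(R + 2)) + ((m : ℝ) + a) ^ (-(y + 2)))) :=
    (((summable_natCast_add_rpow_neg ha (by linarith)).add
      (summable_natCast_add_rpow_neg ha (by linarith))).mul_left _).mul_left _
  have hdiff : DifferentiableOn ℂ (fun s ↦ ∑' m : ℕ, c m * E s (m + a)) V := by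
    refine differentiableOn_tsum_of_summable_norm hsum (fun m z hz ↦
      ((hd z hz.1.1 _ (by positivity)).const_mul _).differentiableWithinAt) hVo fun m z hz ↦ ?_
    have hyz : y < z.re := hz.1.2
    have hzR : ‖z‖ < R := by simpa using hz.2
    have hz1 : ‖z + 1‖ ≤ R + 1 := (norm_add_le _ _).trans (by simpa using hzR.le)
    rw [norm_mul]
    refine (mul_le_of_le_one_left (norm_nonneg _) (hc m)).trans
      ((hE z hz.1.1 (m + a) (by positivity) (by linarith)).trans ?_)
    gcongr
    exact rpow_le_rpow_add_rpow (by positivity) (by linarith [re_le_norm z]) (by linarith)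
  exact hdiff.differentiableAt (hVo.mem_nhds hsV)

lemma exists_norm_tsum_le_mul_norm_sq {K p : ℝ} (ha : 0 < a) (hK : 0 ≤ K) (hp : -1 < p) (q : ℝ) :
    ∃ C, ∀ (t : ℕ → ℂ) (s : ℂ), s.re ∈ Icc p q → 1 ≤ ‖s‖ →
      (∀ m, ‖t m‖ ≤ K * (‖s‖ * ‖s + 1‖ * ((m : ℝ) + a) ^ (-(s.re + 2)))) →
      ‖∑' m, t m‖ ≤ C * ‖s‖ ^ 2 := by
  have hsum : Summable fun m : ℕ ↦
      ((m : ℝ) + a) ^ (-(max p q + 2)) + ((m : ℝ) + a) ^ (-(p + 2)) :=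
    (summable_natCast_add_rpow_neg ha (by linarith [le_max_left p q])).add
      (summable_natCast_add_rpow_neg ha (by linarith))
  refine ⟨2 * K * ∑' m : ℕ, (((m : ℝ) + a) ^ (-(max p q + 2)) + ((m : ℝ) + a) ^ (-(p + 2))),
    fun t s hs hs1 ht ↦ ?_⟩
  have hs2 : ‖s + 1‖ ≤ 2 * ‖s‖ := (norm_add_le _ _).trans (by rw [norm_one]; linarith)
  calc ‖∑' m, t m‖
      ≤ 2 * K * ‖s‖ ^ 2 *
        ∑' m : ℕ, (((m : ℝ) + a) ^ (-(max p q + 2)) + ((m : ℝ) + a) ^ (-(p + 2))) := by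
        refine tsum_of_norm_bounded (hsum.hasSum.mul_left _) fun m ↦ (ht m).trans ?_
        calc K * (‖s‖ * ‖s + 1‖ * ((m : ℝ) + a) ^ (-(s.re + 2)))
            ≤ K * (‖s‖ * (2 * ‖s‖) *
              (((m : ℝ) + a) ^ (-(max p q + 2)) + ((m : ℝ) + a) ^ (-(p + 2)))) := by
              gcongr
              exact rpow_le_rpow_add_rpow (by positivity)
                (by linarith [hs.2, le_max_right p q]) (by linarith [hs.1])
          _ = _ := by ring
    _ = _ := by ring

lemma exists_norm_ofReal_cpow_neg_le (hu : 0 < u) (p q : ℝ) :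
    ∃ C, ∀ s : ℂ, s.re ∈ Icc p q → 1 ≤ ‖s‖ → ‖(u : ℂ) ^ (-s)‖ ≤ C * ‖s‖ ^ 2 := by
  refine ⟨u ^ (-q) + u ^ (-p), fun s hs hs1 ↦ ?_⟩
  rw [norm_ofReal_cpow_neg s hu]
  exact (rpow_le_rpow_add_rpow hu (neg_le_neg hs.2) (neg_le_neg hs.1)).trans
    (le_mul_of_one_le_right (by positivity) (one_le_pow₀ hs1))

end CpowDifferences

section SummationFormulas

open Complex Set Filter

variable {a μ p : ℝ} {s z : ℂ}

/-- The twice summed-by-parts form of `∑ m, z ^ m * (m + a) ^ (-s)`, which continues this series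
to `-1 < re s` if `‖z‖ = 1` and `z ≠ 1`. -/
noncomputable def twistedHurwitz (z : ℂ) (a : ℝ) (s : ℂ) : ℂ :=
  (a : ℂ) ^ (-s) / (1 - z) + z * (((a + 1 : ℝ) : ℂ) ^ (-s) - (a : ℂ) ^ (-s)) / (1 - z) ^ 2 +
    z ^ 2 / (1 - z) ^ 2 * ∑' m : ℕ, z ^ m * cpowSecondDiff s (m + a)

/-- The Euler–Maclaurin form of `∑ m, (m + a) ^ (-s)`, which continues this series to
`-1 < re s`, `s ≠ 1`. -/
noncomputable def trapezoidHurwitz (a : ℝ) (s : ℂ) : ℂ :=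
  1 / 2 * (a : ℂ) ^ (-s) + (a : ℂ) ^ (1 - s) / (s - 1) +
    ∑' m : ℕ, 1 * cpowTrapezoidError s (m + a)

lemma differentiableAt_twistedHurwitz (hz : ‖z‖ = 1) (ha : 0 < a) (hs : -1 < s.re) :
    DifferentiableAt ℂ (twistedHurwitz z a) s := by
  have ha1 : 0 < a + 1 := by linarith
  have htail : DifferentiableAt ℂ (fun s ↦ ∑' m : ℕ, z ^ m * cpowSecondDiff s (m + a)) s :=
    differentiableAt_tsum_mul_of_norm_le ha (fun m ↦ by rw [norm_pow, hz, one_pow]) isOpen_univ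
      (by norm_num) (fun s _ u hu h ↦ norm_cpowSecondDiff_le h hu)
      (fun s _ u hu ↦ differentiableAt_cpowSecondDiff hu s) hs (mem_univ s)
  exact (((differentiableAt_ofReal_cpow_neg ha s).div_const _).fun_add
    ((((differentiableAt_ofReal_cpow_neg ha1 s).sub
      (differentiableAt_ofReal_cpow_neg ha s)).const_mul z).div_const _)).fun_add
    (htail.const_mul _)

lemma differentiableAt_trapezoidHurwitz (ha : 0 < a) (hs : -1 < s.re) (hs1 : s ≠ 1) :
    DifferentiableAt ℂ (trapezoidHurwitz a) s := by
  have htail : DifferentiableAt ℂ (fun s ↦ ∑' m : ℕ, 1 * cpowTrapezoidError s (m + a)) s :=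
    differentiableAt_tsum_mul_of_norm_le (K := 1) ha (fun _ ↦ norm_one.le)
      isOpen_compl_singleton zero_le_one
      (fun s hs u hu h ↦ by rw [one_mul]; exact norm_cpowTrapezoidError_le h hs hu)
      (fun s hs u hu ↦ differentiableAt_cpowTrapezoidError hu hs) hs hs1
  exact (((differentiableAt_ofReal_cpow_neg ha s).const_mul _).fun_add
    ((differentiableAt_ofReal_cpow_one_sub ha s).fun_div (differentiableAt_id.sub_const 1)
      (sub_ne_zero.2 hs1))).fun_add htail

lemma summable_and_one_sub_mul_tsum_pow_mul {b : ℕ → ℂ} (hb : Summable fun m ↦ z ^ m * b m)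
    (hz : z ≠ 0) :
    (Summable fun m ↦ z ^ m * (b (m + 1) - b m)) ∧
      (1 - z) * ∑' m, z ^ m * b m = b 0 + z * ∑' m, z ^ m * (b (m + 1) - b m) := by
  have hshift : Summable fun m ↦ z ^ m * b (m + 1) :=
    (((summable_nat_add_iff 1).2 hb).mul_left z⁻¹).congr fun m ↦ by
      rw [pow_succ]
      field_simp
  have hhead : ∑' m, z ^ m * b m = b 0 + z * ∑' m, z ^ m * b (m + 1) := by
    rw [hb.tsum_eq_zero_add, pow_zero, one_mul, ← tsum_mul_left]
    congr 1
    exact tsum_congr fun m ↦ by rw [pow_succ]; ring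
  simp only [mul_sub]
  refine ⟨hshift.sub hb, ?_⟩
  rw [hshift.tsum_sub hb]
  linear_combination hhead

lemma lerchSeries_term_eq (μ a : ℝ) (s : ℂ) (m : ℕ) :
    exp (2 * Real.pi * I * μ * m) / ((m : ℂ) + a) ^ s =
      exp (2 * Real.pi * I * μ) ^ m * (((m + a : ℝ) : ℂ) ^ (-s)) := by
  rw [← exp_nat_mul, cpow_neg, div_eq_mul_inv]
  push_cast
  congr 2
  ring

lemma lerchSeries_eq_twistedHurwitz (ha : 0 < a) (hμ : exp (2 * Real.pi * I * μ) ≠ 1)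
    (hs : 1 < s.re) : lerchSeries μ a s = twistedHurwitz (exp (2 * Real.pi * I * μ)) a s := by
  have hsum := summable_lerchSeries_term ha μ hs
  simp only [lerchSeries, lerchSeries_term_eq] at hsum ⊢
  have hz0 := exp_ne_zero (2 * Real.pi * I * μ)
  set z := exp (2 * Real.pi * I * μ)
  have h1z : 1 - z ≠ 0 := sub_ne_zero.2 hμ.symm
  set b : ℕ → ℂ := fun m ↦ ((m + a : ℝ) : ℂ) ^ (-s) with hb
  obtain ⟨hsum', hparts⟩ := summable_and_one_sub_mul_tsum_pow_mul hsum hz0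
  obtain ⟨-, hparts'⟩ := summable_and_one_sub_mul_tsum_pow_mul (b := fun m ↦ b (m + 1) - b m)
    hsum' hz0
  have hdiff (m : ℕ) :
      cpowSecondDiff s (m + a) = b (m + 1 + 1) - b (m + 1) - (b (m + 1) - b m) := by
    simp only [cpowSecondDiff, hb]
    push_cast
    ring_nf
  have hb0 : b 0 = (a : ℂ) ^ (-s) := by simp [hb]
  have hb1 : b 1 = ((a + 1 : ℝ) : ℂ) ^ (-s) := by simp [hb, add_comm]
  change (1 - z) * ∑' m, z ^ m * b m = b 0 + z * ∑' m, z ^ m * (b (m + 1) - b m) at hparts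
  simp only [twistedHurwitz, hdiff, ← hb0, ← hb1]
  rw [zero_add] at hparts'
  field_simp
  linear_combination (1 - z) * hparts + z * hparts'

lemma tendsto_natCast_add_cpow_one_sub (ha : 0 < a) (hs : 1 < s.re) :
    Tendsto (fun n : ℕ ↦ ((n + a : ℝ) : ℂ) ^ (1 - s)) atTop (nhds 0) := by
  rw [tendsto_zero_iff_norm_tendsto_zero]
  refine ((tendsto_rpow_neg_atTop (sub_pos.2 hs)).comp
    (tendsto_atTop_add_const_right _ a tendsto_natCast_atTop_atTop)).congr fun n ↦ ?_
  rw [norm_cpow_eq_rpow_re_of_pos (by positivity), Function.comp_apply, sub_re, one_re, neg_sub]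

lemma summable_cpowTrapezoidError (ha : 0 < a) (hs : -1 < s.re) (hs1 : s ≠ 1) :
    Summable fun m : ℕ ↦ cpowTrapezoidError s (m + a) :=
  .of_norm_bounded ((summable_natCast_add_rpow_neg ha (by linarith)).mul_left _)
    fun _ ↦ norm_cpowTrapezoidError_le (by linarith) hs1 (by positivity)

lemma tsum_cpowTrapezoidError (ha : 0 < a) (hs : 1 < s.re) :
    ∑' m : ℕ, cpowTrapezoidError s (m + a) =
      1 / 2 * (∑' m : ℕ, ((m + a : ℝ) : ℂ) ^ (-s) +
        ∑' m : ℕ, (((m + 1 : ℕ) + a : ℝ) : ℂ) ^ (-s)) + (a : ℂ) ^ (1 - s) / (1 - s) := by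
  have hs1 : s ≠ 1 := by
    rintro rfl
    simp at hs
  set P : ℕ → ℂ := fun m ↦ ((m + a : ℝ) : ℂ) ^ (1 - s) / (1 - s) with hP
  have hsum : Summable fun m : ℕ ↦ ((m + a : ℝ) : ℂ) ^ (-s) :=
    .of_norm_bounded (summable_natCast_add_rpow_neg ha hs) fun _ ↦
      (norm_ofReal_cpow_neg s (by positivity)).le
  have hsum' := (summable_nat_add_iff 1).2 hsum
  have hterm (m : ℕ) : cpowTrapezoidError s (m + a) =
      1 / 2 * (((m + a : ℝ) : ℂ) ^ (-s) + (((m + 1 : ℕ) + a : ℝ) : ℂ) ^ (-s)) -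
        (P (m + 1) - P m) := by
    rw [cpowTrapezoidError, show (m : ℝ) + a + 1 = (m + 1 : ℕ) + a by push_cast; ring]
  have htele : HasSum (fun m ↦ P (m + 1) - P m) (0 - P 0) := by
    have hS : Summable fun m ↦ P (m + 1) - P m :=
      (((hsum.add hsum').mul_left (1 / 2)).sub
        (summable_cpowTrapezoidError ha (by linarith) hs1)).congr fun m ↦ by rw [hterm]; ring
    rw [hS.hasSum_iff_tendsto_nat]
    simp only [Finset.sum_range_sub]
    refine .sub_const ?_ _
    simpa [hP] using (tendsto_natCast_add_cpow_one_sub ha hs).div_const (1 - s)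
  have hP0 : P 0 = (a : ℂ) ^ (1 - s) / (1 - s) := by simp [hP]
  rw [((((hsum.hasSum.add hsum'.hasSum).mul_left (1 / 2 : ℂ)).sub htele).congr_fun hterm).tsum_eq,
    ← hP0]
  ring

lemma lerchSeries_one_eq_trapezoidHurwitz (ha : 0 < a) (hs : 1 < s.re) :
    lerchSeries 1 a s = trapezoidHurwitz a s := by
  have hsum := summable_lerchSeries_term ha 1 hs
  have hz : exp (2 * Real.pi * I * (1 : ℝ)) = 1 := by simp
  simp only [lerchSeries, lerchSeries_term_eq, hz, one_pow, one_mul] at hsum ⊢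
  have hhead := hsum.tsum_eq_zero_add
  simp only [Nat.cast_zero, zero_add] at hhead
  simp only [trapezoidHurwitz, one_mul, tsum_cpowTrapezoidError ha hs]
  rw [← neg_sub 1 s, div_neg]
  linear_combination (1 / 2 : ℂ) * hhead

lemma exists_norm_twistedHurwitz_le (hz : ‖z‖ = 1) (ha : 0 < a) (hp : -1 < p) (q : ℝ) :
    ∃ C, ∀ s : ℂ, s.re ∈ Icc p q → 1 ≤ |s.im| → ‖twistedHurwitz z a s‖ ≤ C * ‖s‖ ^ 2 := by
  obtain ⟨C₁, hC₁⟩ := exists_norm_tsum_le_mul_norm_sq (K := 6) ha (by norm_num) hp q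
  obtain ⟨C₂, hC₂⟩ := exists_norm_ofReal_cpow_neg_le ha p q
  obtain ⟨C₃, hC₃⟩ := exists_norm_ofReal_cpow_neg_le (u := a + 1) (by linarith) p q
  refine ⟨C₂ / ‖1 - z‖ + (C₃ + C₂) / ‖1 - z‖ ^ 2 + 1 / ‖1 - z‖ ^ 2 * C₁, fun s hs him ↦ ?_⟩
  have hs1 : 1 ≤ ‖s‖ := him.trans (abs_im_le_norm s)
  have htail := hC₁ (fun m ↦ z ^ m * cpowSecondDiff s (m + a)) s hs hs1 fun m ↦ by
    rw [norm_mul, norm_pow, hz, one_pow, one_mul]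
    exact norm_cpowSecondDiff_le (by linarith [hs.1]) (by positivity)
  have hdiff := (norm_sub_le (((a + 1 : ℝ) : ℂ) ^ (-s)) ((a : ℂ) ^ (-s))).trans
    (add_le_add (hC₃ s hs hs1) (hC₂ s hs hs1))
  refine norm_add₃_le.trans ?_
  simp only [norm_div, norm_mul, norm_pow, hz, one_mul, one_pow]
  calc _ ≤ C₂ * ‖s‖ ^ 2 / ‖1 - z‖ + (C₃ * ‖s‖ ^ 2 + C₂ * ‖s‖ ^ 2) / ‖1 - z‖ ^ 2 +
        1 / ‖1 - z‖ ^ 2 * (C₁ * ‖s‖ ^ 2) := by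
        gcongr
        exact hC₂ s hs hs1
    _ = _ := by ring

lemma exists_norm_trapezoidHurwitz_le (ha : 0 < a) (hp : -1 < p) (q : ℝ) :
    ∃ C, ∀ s : ℂ, s.re ∈ Icc p q → 1 ≤ |s.im| → ‖trapezoidHurwitz a s‖ ≤ C * ‖s‖ ^ 2 := by
  obtain ⟨C₁, hC₁⟩ := exists_norm_tsum_le_mul_norm_sq (K := 1) ha zero_le_one hp q
  obtain ⟨C₂, hC₂⟩ := exists_norm_ofReal_cpow_neg_le ha p q
  refine ⟨1 / 2 * C₂ + a * C₂ + C₁, fun s hs him ↦ ?_⟩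
  have hs1 : 1 ≤ ‖s‖ := him.trans (abs_im_le_norm s)
  have hs2 : 1 ≤ ‖s - 1‖ := him.trans ((abs_im_le_norm (s - 1)).trans' (by simp))
  have hne : s ≠ 1 := sub_ne_zero.1 (norm_pos_iff.1 (by linarith))
  have htail := hC₁ (fun m ↦ 1 * cpowTrapezoidError s (m + a)) s hs hs1 fun m ↦ by
    rw [one_mul, one_mul]
    exact norm_cpowTrapezoidError_le (by linarith [hs.1]) hne (by positivity)
  have hpole : ‖(a : ℂ) ^ (1 - s) / (s - 1)‖ ≤ a * (C₂ * ‖s‖ ^ 2) := by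
    rw [sub_eq_add_neg, cpow_add _ _ (ofReal_ne_zero.2 ha.ne'), cpow_one, norm_div, norm_mul,
      norm_real, Real.norm_of_nonneg ha.le]
    refine (div_le_self (by positivity) hs2).trans ?_
    gcongr
    exact hC₂ s hs hs1
  have hhead : ‖1 / 2 * (a : ℂ) ^ (-s)‖ ≤ 1 / 2 * (C₂ * ‖s‖ ^ 2) := by
    rw [norm_mul, show ‖(1 / 2 : ℂ)‖ = 1 / 2 by norm_num]
    gcongr
    exact hC₂ s hs hs1
  refine norm_add₃_le.trans ?_
  linarith

end SummationFormulas

section RationalFunctionalEquation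

open Complex Function

variable {q : ℕ} {a : ℝ} {s w : ℂ}

lemma tsum_ite_natCast_zmod_eq {n₀ : ℕ} (hn₀ : 1 ≤ n₀) (hq : n₀ ≤ q) {f : ℕ → ℂ} (hf : f 0 = 0) :
    ∑' n : ℕ, (if (n : ZMod q) = n₀ then f n else 0) = ∑' k : ℕ, f (q * k + n₀) := by
  have hinj : Injective fun k : ℕ ↦ q * k + n₀ := fun k l h ↦
    Nat.eq_of_mul_eq_mul_left (hn₀.trans hq) (Nat.add_right_cancel h)
  rw [← hinj.tsum_eq]
  · exact tsum_congr fun k ↦ if_pos (by simp)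
  · intro n hn
    have hmod : (n : ZMod q) = n₀ := by
      by_contra h
      exact hn (if_neg h)
    have hn0 : n ≠ 0 := by
      rintro rfl
      exact hn ((if_pos hmod).trans hf)
    have hle : n₀ ≤ n := by
      by_contra! h
      have := Nat.le_of_dvd (by omega)
        ((Nat.modEq_iff_dvd' h.le).1 ((ZMod.natCast_eq_natCast_iff _ _ _).1 hmod))
      omega
    obtain ⟨k, hk⟩ := (Nat.modEq_iff_dvd' hle).1 ((ZMod.natCast_eq_natCast_iff _ _ _).1 hmod.symm)
    exact ⟨k, by change q * k + n₀ = n; omega⟩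

variable [NeZero q]

lemma stdAddChar_mul_exp_add_mul_val (p : ZMod q) (β : ℝ) (ε : ℤ) (j : ZMod q) (n : ℕ) :
    ZMod.stdAddChar (j * p) * exp (2 * Real.pi * I * ((β + ε * j.val) / q : ℝ) * n) =
      ZMod.stdAddChar (j * (p + (ε : ZMod q) * (n : ZMod q))) *
        exp (2 * Real.pi * I * (β / q) * n) := by
  have hχ : ZMod.stdAddChar (j * ((ε : ZMod q) * (n : ZMod q))) =
      exp (2 * Real.pi * I * (ε * j.val * n : ℤ) / q) := by
    rw [← ZMod.stdAddChar_coe]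
    push_cast
    rw [ZMod.natCast_zmod_val]
    ring_nf
  rw [mul_add, AddChar.map_add_eq_mul, hχ, mul_assoc (ZMod.stdAddChar _), ← exp_add]
  congr 2
  push_cast
  ring

lemma natCast_mul_add_cpow {n₀ : ℕ} (k : ℕ) (w : ℂ) :
    ((q * k + n₀ : ℕ) : ℂ) ^ w = (q : ℂ) ^ w * ((k : ℂ) + (n₀ / q : ℝ)) ^ w := by
  have hq : (q : ℝ) ≠ 0 := NeZero.ne _
  rw [show ((q * k + n₀ : ℕ) : ℂ) = ((q : ℝ) : ℂ) * ((k + n₀ / q : ℝ) : ℂ) by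
    rw [← ofReal_mul, mul_add, mul_div_cancel₀ _ hq]; push_cast; rfl,
    mul_cpow_ofReal_nonneg (by positivity) (by positivity)]
  push_cast
  rfl

lemma sum_stdAddChar_mul_expZeta {n₀ : ℕ} (hn₀ : 1 ≤ n₀) (hq : n₀ ≤ q) {p : ZMod q} {ε : ℤ}
    (hε : IsUnit ε) (hp : p + ε * n₀ = 0) (β : ℝ) (hw : 1 < w.re) :
    ∑ j : ZMod q, ZMod.stdAddChar (j * p) *
        HurwitzZeta.expZeta (((β + ε * j.val) / q : ℝ) : UnitAddCircle) w =
      (q : ℂ) ^ (1 - w) * exp (2 * Real.pi * I * (β * (n₀ / q : ℝ))) *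
        lerchSeries β (n₀ / q : ℝ) w := by
  have hq0 : (q : ℂ) ≠ 0 := NeZero.ne _
  have hw0 : w ≠ 0 := by
    rintro rfl
    norm_num at hw
  set f : ℕ → ℂ := fun n ↦ q * (exp (2 * Real.pi * I * (β / q) * n) / (n : ℂ) ^ w) with hf
  have hS := hasSum_sum fun j (_ : j ∈ Finset.univ) ↦
    (HurwitzZeta.hasSum_expZeta_of_one_lt_re ((β + ε * j.val) / q) hw).mul_left
      (ZMod.stdAddChar (N := q) (j * p))
  have hunit (n : ℕ) : p + ε * n = 0 ↔ (n : ZMod q) = n₀ := by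
    rw [← hp, add_right_inj]
    exact (hε.map (Int.castRingHom (ZMod q))).mul_right_inj
  have horth (n : ℕ) : ∑ j : ZMod q, ZMod.stdAddChar (j * p) *
      (exp (2 * Real.pi * I * ((β + ε * j.val) / q : ℝ) * n) / (n : ℂ) ^ w) =
      if (n : ZMod q) = n₀ then f n else 0 := by
    simp only [← mul_div_assoc, stdAddChar_mul_exp_add_mul_val]
    rw [← Finset.sum_div, ← Finset.sum_mul,
      AddChar.sum_mulShift _ (ZMod.isPrimitive_stdAddChar q), ZMod.card]
    simp only [hunit, hf]
    split_ifs <;> simp [mul_div_assoc]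
  rw [← hS.tsum_eq, tsum_congr horth, tsum_ite_natCast_zmod_eq hn₀ hq (by simp [hf, hw0]),
    lerchSeries, ← tsum_mul_left]
  refine tsum_congr fun k ↦ ?_
  have hexp : exp (2 * Real.pi * I * (β / q) * (q * k + n₀ : ℕ)) =
      exp (2 * Real.pi * I * (β * (n₀ / q : ℝ))) * exp (2 * Real.pi * I * β * k) := by
    rw [← exp_add]
    push_cast
    field_simp
    ring_nf
  have hqw : (q : ℂ) ^ w ≠ 0 := by simp [cpow_eq_zero_iff, hq0]
  simp only [hf]
  rw [natCast_mul_add_cpow, hexp, cpow_sub _ _ hq0, cpow_one]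
  field_simp

/-- The right-hand side of the functional equation `L(λ, α, 1 - w) = lerchDual λ μ α w`, where `μ`
stands for `1 - {λ}`. -/
noncomputable def lerchDual (lam mu a : ℝ) (w : ℂ) : ℂ :=
  (2 * Real.pi) ^ (-w) * Gamma w *
    (exp (Real.pi * I * w / 2) *
        (exp (2 * Real.pi * I * (-a * lam)) * lerchSeries (-a) lam w) +
      exp (-Real.pi * I * w / 2) *
        (exp (2 * Real.pi * I * (a * mu)) * lerchSeries a mu w))

/-- The combination of Hurwitz zeta functions that continues `lerchSeries (p / q) a`. -/
noncomputable def rationalLerch (p : ZMod q) (a : ℝ) (s : ℂ) : ℂ :=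
  (q : ℂ) ^ (-s) * ∑ j : ZMod q, ZMod.stdAddChar (j * p) *
    HurwitzZeta.hurwitzZeta (((a + j.val) / q : ℝ) : UnitAddCircle) s

lemma differentiableAt_rationalLerch (p : ZMod q) (a : ℝ) (hs : s ≠ 1) :
    DifferentiableAt ℂ (rationalLerch p a) s :=
  (differentiableAt_id.neg.const_cpow (.inl (NeZero.ne (q : ℂ)))).fun_mul
    (.fun_sum fun _ _ ↦ (HurwitzZeta.differentiableAt_hurwitzZeta _ hs).const_mul _)

lemma hurwitzZeta_one_sub_of_one_lt_re (x : UnitAddCircle) (hw : 1 < w.re) :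
    HurwitzZeta.hurwitzZeta x (1 - w) = (2 * Real.pi) ^ (-w) * Gamma w *
      (exp (-Real.pi * I * w / 2) * HurwitzZeta.expZeta x w +
        exp (Real.pi * I * w / 2) * HurwitzZeta.expZeta (-x) w) := by
  refine HurwitzZeta.hurwitzZeta_one_sub x (fun n hn ↦ ?_) (.inr ?_)
  · have := congrArg re hn
    simp only [neg_re, natCast_re] at this
    linarith [n.cast_nonneg (α := ℝ)]
  · rintro rfl
    simp at hw

lemma rationalLerch_one_sub {p p' : ℕ} (hp : 1 ≤ p) (hpq : p ≤ q) (hp' : 1 ≤ p') (hpq' : p' ≤ q)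
    (hdvd : q ∣ p + p') (a : ℝ) (hw : 1 < w.re) :
    rationalLerch (p : ZMod q) a (1 - w) = lerchDual (p / q) (p' / q) a w := by
  have hq : (q : ℂ) ≠ 0 := NeZero.ne _
  have hpos := sum_stdAddChar_mul_expZeta (p := (p : ZMod q)) hp' hpq' isUnit_one
    (by rw [Int.cast_one, one_mul]; exact_mod_cast (ZMod.natCast_eq_zero_iff _ _).2 hdvd) a hw
  have hneg := sum_stdAddChar_mul_expZeta (p := (p : ZMod q)) hp hpq isUnit_one.neg (by simp) (-a)
    hw
  have hzeta (j : ZMod q) : ZMod.stdAddChar (j * (p : ZMod q)) *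
      HurwitzZeta.hurwitzZeta (((a + j.val) / q : ℝ) : UnitAddCircle) (1 - w) =
      (2 * Real.pi) ^ (-w) * Gamma w * (exp (-Real.pi * I * w / 2) *
          (ZMod.stdAddChar (j * (p : ZMod q)) *
          HurwitzZeta.expZeta (((a + (1 : ℤ) * j.val) / q : ℝ) : UnitAddCircle) w) +
        exp (Real.pi * I * w / 2) * (ZMod.stdAddChar (j * (p : ZMod q)) *
          HurwitzZeta.expZeta (((-a + (-1 : ℤ) * j.val) / q : ℝ) : UnitAddCircle) w)) := by
    rw [hurwitzZeta_one_sub_of_one_lt_re _ hw, ← AddCircle.coe_neg]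
    push_cast
    ring_nf
  have hcancel : (q : ℂ) ^ (-(1 - w)) * (q : ℂ) ^ (1 - w) = 1 := by
    rw [← cpow_add _ _ hq, neg_add_cancel, cpow_zero]
  rw [rationalLerch, Finset.sum_congr rfl fun j _ ↦ hzeta j, ← Finset.mul_sum,
    Finset.sum_add_distrib, ← Finset.mul_sum, ← Finset.mul_sum, hpos, hneg, lerchDual]
  push_cast
  linear_combination ((2 * Real.pi) ^ (-w) * Gamma w * (exp (Real.pi * I * w / 2) *
      (exp (2 * Real.pi * I * (-a * (p / q))) * lerchSeries (-a) (p / q) w) +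
    exp (-Real.pi * I * w / 2) *
      (exp (2 * Real.pi * I * (a * (p' / q))) * lerchSeries a (p' / q) w))) * hcancel

lemma lerchSeries_eq_rationalLerch (p : ℕ) (ha : 0 < a) (ha1 : a ≤ 1) (hs : 1 < s.re) :
    lerchSeries (p / q) a s = rationalLerch (p : ZMod q) a s := by
  have hq0 : (0 : ℝ) < q := Nat.cast_pos.2 (NeZero.pos q)
  have hq : (q : ℂ) ≠ 0 := NeZero.ne _
  rw [lerchSeries, rationalLerch, Nat.sumByResidueClasses (summable_lerchSeries_term ha _ hs) q,
    Finset.mul_sum]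
  refine Finset.sum_congr rfl fun j _ ↦ ?_
  have hmem : (a + j.val) / q ∈ Set.Icc (0 : ℝ) 1 := by
    refine ⟨by positivity, (div_le_one hq0).2 ?_⟩
    have : (j.val : ℝ) + 1 ≤ q := by exact_mod_cast j.val_lt
    linarith
  rw [← (HurwitzZeta.hasSum_hurwitzZeta_of_one_lt_re hmem hs).tsum_eq, ← mul_assoc, ← tsum_mul_left]
  refine tsum_congr fun m ↦ ?_
  have hden : (((j.val + q * m : ℕ) : ℂ) + a) ^ s =
      (q : ℂ) ^ s * ((m : ℂ) + ((a + j.val) / q : ℝ)) ^ s := by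
    have hmul : ((j.val + q * m : ℕ) : ℂ) + a = (q : ℝ) * ((m + (a + j.val) / q : ℝ) : ℂ) := by
      push_cast
      field_simp
      ring
    rw [hmul, mul_cpow_ofReal_nonneg hq0.le (by positivity)]
    push_cast
    rfl
  have hχ : exp (2 * Real.pi * I * (p / q : ℝ) * (j.val + q * m : ℕ)) =
      ZMod.stdAddChar (j * (p : ZMod q)) := by
    rw [show j * (p : ZMod q) = ((j.val * p : ℤ) : ZMod q) by
      push_cast; rw [ZMod.natCast_zmod_val], ZMod.stdAddChar_coe, exp_eq_exp_iff_exists_int]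
    refine ⟨p * m, ?_⟩
    push_cast
    field_simp
  rw [hden, hχ, cpow_neg, div_eq_mul_inv, mul_inv, one_div]
  ring

end RationalFunctionalEquation

section FunctionalEquation

open Complex Set Filter Topology

variable {lam mu μ a : ℝ} {s w : ℂ} {F f g : ℂ → ℂ}

lemma eqOn_of_isPreconnected_of_eventuallyEq {U : Set ℂ} (hU : IsOpen U) (hUc : IsPreconnected U)
    (hf : ∀ s ∈ U, DifferentiableAt ℂ f s) (hg : ∀ s ∈ U, DifferentiableAt ℂ g s) (hw : w ∈ U)
    (h : f =ᶠ[𝓝 w] g) : EqOn f g U :=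
  (DifferentiableOn.analyticOnNhd (fun s hs ↦ (hf s hs).differentiableWithinAt)
    hU).eqOn_of_preconnected_of_eventuallyEq
    (DifferentiableOn.analyticOnNhd (fun s hs ↦ (hg s hs).differentiableWithinAt) hU) hUc hw h

lemma isPreconnected_re_gt_diff_one {x : ℝ} (hx : x < 1) :
    IsPreconnected ({s : ℂ | x < s.re} \ {1}) := by
  have hupper : IsPreconnected ({s : ℂ | x < s.re} ∩ {s | 0 < s.im}) :=
    ((convex_halfSpace_re_gt x).inter (convex_halfSpace_im_gt 0)).isPreconnected
  have hlower : IsPreconnected ({s : ℂ | x < s.re} ∩ {s | s.im < 0}) :=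
    ((convex_halfSpace_re_gt x).inter (convex_halfSpace_im_lt 0)).isPreconnected
  have hright : IsPreconnected {s : ℂ | 1 < s.re} := (convex_halfSpace_re_gt 1).isPreconnected
  have hleft : IsPreconnected ({s : ℂ | x < s.re} ∩ {s | s.re < 1}) :=
    ((convex_halfSpace_re_gt x).inter (convex_halfSpace_re_lt 1)).isPreconnected
  obtain ⟨c, hxc, hc1⟩ := exists_between hx
  have hunion := ((hright.union ⟨2, 1⟩ (by simp) (by simp; linarith) hupper).union ⟨2, -1⟩
    (by simp) (by simp; linarith) hlower).union ⟨c, 1⟩ (by simp [hxc]) (by simp [hxc, hc1]) hleft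
  convert hunion using 1
  refine Subset.antisymm (fun s ⟨hs, hs1⟩ ↦ ?_) ?_
  · rcases lt_trichotomy s.re 1 with h | h | h
    · exact .inr ⟨hs, h⟩
    · rcases lt_or_gt_of_ne (a := s.im) (b := 0) (fun him ↦ hs1 (Complex.ext h him)) with him | him
      · exact .inl (.inr ⟨hs, him⟩)
      · exact .inl (.inl (.inr ⟨hs, him⟩))
    · exact .inl (.inl (.inl h))
  · rintro s (((hs | hs) | hs) | hs)
    · exact ⟨hx.trans hs, by rintro rfl; simp at hs⟩
    all_goals exact ⟨hs.1, by rintro rfl; simp at hs⟩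

lemma norm_exp_two_pi_I_mul (μ : ℝ) : ‖exp (2 * Real.pi * I * μ)‖ = 1 := by
  simpa using norm_exp_two_pi_I_mul_natCast μ 1

lemma exp_two_pi_I_mul_ne_one (hμ : μ ∈ Ioo (0 : ℝ) 1) : exp (2 * Real.pi * I * μ) ≠ 1 := by
  intro h
  obtain ⟨n, hn⟩ := exp_eq_one_iff.1 h
  have hμn : (μ : ℂ) = n := mul_left_cancel₀ two_pi_I_ne_zero (by rw [hn]; ring)
  obtain rfl : μ = n := by exact_mod_cast hμn
  have hn0 : 0 < n := by exact_mod_cast hμ.1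
  have hn1 : n < 1 := by exact_mod_cast hμ.2
  omega

/-- The continuation of the Lerch series to `-1 < re s`, `s ≠ 1`, obtained from summation by
parts if `lam < 1` and from Euler–Maclaurin summation if `lam = 1`. -/
noncomputable def lerchContinuation (lam a : ℝ) (s : ℂ) : ℂ :=
  if lam = 1 then trapezoidHurwitz a s else twistedHurwitz (exp (2 * Real.pi * I * lam)) a s

lemma differentiableAt_lerchContinuation (lam : ℝ) (ha : 0 < a) (hs : -1 < s.re) (hs1 : s ≠ 1) :
    DifferentiableAt ℂ (lerchContinuation lam a) s := by
  by_cases hl : lam = 1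
  · exact (differentiableAt_trapezoidHurwitz ha hs hs1).congr_of_eventuallyEq
      (.of_forall fun _ ↦ if_pos hl)
  · exact (differentiableAt_twistedHurwitz (norm_exp_two_pi_I_mul lam) ha
      hs).congr_of_eventuallyEq (.of_forall fun _ ↦ if_neg hl)

lemma lerchSeries_eq_lerchContinuation (hl : lam ∈ Ioc (0 : ℝ) 1) (ha : 0 < a) (hs : 1 < s.re) :
    lerchSeries lam a s = lerchContinuation lam a s := by
  rw [lerchContinuation]
  split_ifs with h
  · rw [h, lerchSeries_one_eq_trapezoidHurwitz ha hs]
  · exact lerchSeries_eq_twistedHurwitz ha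
      (exp_two_pi_I_mul_ne_one ⟨hl.1, lt_of_le_of_ne hl.2 h⟩) hs

lemma exists_norm_lerchContinuation_le (lam : ℝ) (ha : 0 < a) {p : ℝ} (hp : -1 < p) (q : ℝ) :
    ∃ C, ∀ s : ℂ, s.re ∈ Icc p q → 1 ≤ |s.im| → ‖lerchContinuation lam a s‖ ≤ C * ‖s‖ ^ 2 := by
  by_cases hl : lam = 1
  · simpa only [lerchContinuation, hl, if_true] using exists_norm_trapezoidHurwitz_le ha hp q
  · simpa only [lerchContinuation, hl, if_false] using
      exists_norm_twistedHurwitz_le (norm_exp_two_pi_I_mul lam) ha hp q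

lemma eq_lerchContinuation (hl : lam ∈ Ioc (0 : ℝ) 1) (ha : 0 < a)
    (hf : ∀ s ≠ 1, DifferentiableAt ℂ f s) (h : ∀ s, 1 < s.re → f s = lerchSeries lam a s)
    (hs : -1 < s.re) (hs1 : s ≠ 1) : f s = lerchContinuation lam a s := by
  have hopen : IsOpen ({s : ℂ | -1 < s.re} \ {1}) := (isOpen_re_gt _).sdiff isClosed_singleton
  refine eqOn_of_isPreconnected_of_eventuallyEq hopen (isPreconnected_re_gt_diff_one (by norm_num))
    (fun s hs ↦ hf s hs.2) (fun s hs ↦ differentiableAt_lerchContinuation lam ha hs.1 hs.2)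
    (w := 2) (by norm_num) ?_ ⟨hs, hs1⟩
  filter_upwards [(isOpen_re_gt 1).mem_nhds (show (2 : ℂ) ∈ {s : ℂ | 1 < s.re} by simp)] with z hz
  rw [h z hz, lerchSeries_eq_lerchContinuation hl ha hz]

lemma differentiableAt_lerchSeries (μ : ℝ) (ha : 0 < a) (hs : 1 < s.re) :
    DifferentiableAt ℂ (lerchSeries μ a) s := by
  refine DifferentiableAt.congr_of_eventuallyEq ((differentiableAt_ofReal_cpow_neg ha s).fun_mul
    ((differentiableAt_lerchTail ha μ hs).const_add 1)) ?_
  filter_upwards [(isOpen_re_gt 1).mem_nhds hs] with z hz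
  exact lerchSeries_eq_cpow_mul_one_add_lerchTail ha μ hz

lemma differentiableAt_lerchDual (hl : 0 < lam) (hm : 0 < mu) (a : ℝ) (hw : 1 < w.re) :
    DifferentiableAt ℂ (lerchDual lam mu a) w := by
  have hΓ : DifferentiableAt ℂ Gamma w := differentiableAt_Gamma w fun m h ↦ by
    have := congrArg re h
    simp only [neg_re, natCast_re] at this
    linarith [m.cast_nonneg (α := ℝ)]
  have hpow : DifferentiableAt ℂ (fun w : ℂ ↦ (2 * Real.pi : ℂ) ^ (-w)) w :=
    differentiableAt_id.neg.const_cpow (.inl (by simp [Real.pi_ne_zero]))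
  have hexp (z : ℂ) : DifferentiableAt ℂ (fun w : ℂ ↦ exp (z * I * w / 2)) w := by fun_prop
  exact (hpow.fun_mul hΓ).fun_mul
    (((hexp _).fun_mul ((differentiableAt_lerchSeries (-a) hl hw).const_mul _)).fun_add
      ((hexp _).fun_mul ((differentiableAt_lerchSeries a hm hw).const_mul _)))

lemma continuousOn_twistedHurwitz_exp (ha : 0 < a) (hs : -1 < s.re) :
    ContinuousOn (fun μ : ℝ ↦ twistedHurwitz (exp (2 * Real.pi * I * μ)) a s) (Ioo 0 1) := by
  have hexp : ContinuousOn (fun μ : ℝ ↦ exp (2 * Real.pi * I * μ)) (Ioo 0 1) := by fun_prop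
  have hne : ∀ μ ∈ Ioo (0 : ℝ) 1, 1 - exp (2 * Real.pi * I * μ) ≠ 0 := fun μ hμ ↦
    sub_ne_zero.2 (exp_two_pi_I_mul_ne_one hμ).symm
  have hne2 : ∀ μ ∈ Ioo (0 : ℝ) 1, (1 - exp (2 * Real.pi * I * μ)) ^ 2 ≠ 0 := fun μ hμ ↦
    pow_ne_zero _ (hne μ hμ)
  have htail : ContinuousOn (fun μ : ℝ ↦
      ∑' m : ℕ, exp (2 * Real.pi * I * μ) ^ m * cpowSecondDiff s (m + a)) (Ioo 0 1) := by
    refine continuousOn_tsum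
      (u := fun m : ℕ ↦ 6 * (‖s‖ * ‖s + 1‖ * ((m : ℝ) + a) ^ (-(s.re + 2))))
      (fun m ↦ (hexp.pow m).mul continuousOn_const)
      (((summable_natCast_add_rpow_neg ha (by linarith)).mul_left _).mul_left _) fun m μ _ ↦ ?_
    rw [norm_mul, norm_pow, norm_exp_two_pi_I_mul, one_pow, one_mul]
    exact norm_cpowSecondDiff_le (by linarith) (by positivity)
  have hsub := continuousOn_const (c := (1 : ℂ)).sub hexp
  exact ((continuousOn_const.div hsub hne).add
    ((hexp.mul continuousOn_const).div (hsub.pow 2) hne2)).add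
    (((hexp.pow 2).div (hsub.pow 2) hne2).mul htail)

lemma lerchRatio_le_one_div_succ (ha : a ∈ Ioo (0 : ℝ) 1) (m : ℕ) :
    lerchRatio a m ≤ 1 / ((m + 1 : ℕ) : ℝ) := by
  have ha0 := ha.1
  rw [lerchRatio, div_le_div_iff₀ (by positivity) (by positivity)]
  push_cast
  nlinarith [ha.2, Nat.cast_nonneg (α := ℝ) m]

lemma continuousOn_lerchTail_shift (μ : ℝ) (hw : 1 < w.re) :
    ContinuousOn (fun a : ℝ ↦ lerchTail μ a w) (Ioo 0 1) := by
  refine continuousOn_tsum (u := fun m : ℕ ↦ (1 / ((m + 1 : ℕ) : ℝ)) ^ w.re)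
    (fun m ↦ continuousOn_const.mul fun a ha ↦ ?_) ?_ fun m a ha ↦ ?_
  · have hratio : ContinuousAt (fun a : ℝ ↦ lerchRatio a m) a := by
      have hne : (m : ℝ) + 1 + a ≠ 0 := by have := ha.1; positivity
      unfold lerchRatio
      fun_prop (disch := assumption)
    exact (ContinuousAt.comp (f := fun a : ℝ ↦ lerchRatio a m) (g := fun x : ℝ ↦ (x : ℂ) ^ w)
      (continuousAt_ofReal_cpow_const _ _ (.inr (lerchRatio_pos ha.1 m).ne'))
      hratio).continuousWithinAt
  · simp only [one_div, Real.inv_rpow (Nat.cast_nonneg _)]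
    exact (summable_nat_add_iff 1).2 (Real.summable_nat_rpow_inv.2 hw)
  · rw [norm_lerchTail_term ha.1]
    exact Real.rpow_le_rpow (lerchRatio_pos ha.1 m).le (lerchRatio_le_one_div_succ ha m)
      (by linarith)

lemma continuousOn_lerchSeries_shift (μ : ℝ) (hw : 1 < w.re) :
    ContinuousOn (fun a : ℝ ↦ lerchSeries μ a w) (Ioo 0 1) := by
  have hpow : ContinuousOn (fun a : ℝ ↦ (a : ℂ) ^ (-w)) (Ioo 0 1) := fun a ha ↦
    (continuousAt_ofReal_cpow_const a _ (.inr ha.1.ne')).continuousWithinAt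
  exact (hpow.mul (continuousOn_const.add (continuousOn_lerchTail_shift μ hw))).congr
    fun a ha ↦ lerchSeries_eq_cpow_mul_one_add_lerchTail ha.1 μ hw

lemma continuousOn_lerchDual (a : ℝ) (hw : 1 < w.re) :
    ContinuousOn (fun μ : ℝ ↦ lerchDual μ (1 - μ) a w) (Ioo 0 1) := by
  have hreflect : ContinuousOn (fun μ : ℝ ↦ lerchSeries a (1 - μ) w) (Ioo 0 1) :=
    (continuousOn_lerchSeries_shift a hw).comp (f := fun μ : ℝ ↦ 1 - μ) (by fun_prop)
      fun μ hμ ↦ ⟨by linarith [hμ.2], by linarith [hμ.1]⟩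
  refine continuousOn_const.mul ((continuousOn_const.mul
    (ContinuousOn.mul ?_ (continuousOn_lerchSeries_shift (-a) hw))).add
      (continuousOn_const.mul (ContinuousOn.mul ?_ hreflect)))
  · fun_prop
  · fun_prop

lemma lerchContinuation_one_sub_of_rat {q p : ℕ} (hp : 1 ≤ p) (hpq : p ≤ q) (ha : a ∈ Ioc (0 : ℝ) 1)
    {mu : ℝ} {p' : ℕ} (hp' : 1 ≤ p') (hpq' : p' ≤ q) (hdvd : q ∣ p + p') (hmu : mu = p' / q)
    (hw : 1 < w.re) (hw2 : w.re < 2) :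
    lerchContinuation (p / q) a (1 - w) = lerchDual (p / q) mu a w := by
  have : NeZero q := ⟨by omega⟩
  have hq : (0 : ℝ) < q := Nat.cast_pos.2 (by omega)
  have hp0 : (0 : ℝ) < p := Nat.cast_pos.2 (by omega)
  rw [hmu, ← rationalLerch_one_sub hp hpq hp' hpq' hdvd a hw]
  refine (eq_lerchContinuation ⟨div_pos hp0 hq, ?_⟩ ha.1
    (fun s hs ↦ differentiableAt_rationalLerch (p : ZMod q) a hs)
    (fun s hs ↦ (lerchSeries_eq_rationalLerch p ha.1 ha.2 hs).symm) ?_ ?_).symm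
  · rw [div_le_one hq]
    exact_mod_cast hpq
  · rw [sub_re, one_re]
    linarith
  · rw [Ne, sub_eq_self]
    rintro rfl
    norm_num at hw

/-- Rational `lam` reduces to the functional equation of the Hurwitz zeta function; both sides are
continuous in `lam`. -/
lemma lerchContinuation_one_sub_of_lt_one (hl : lam ∈ Ioo (0 : ℝ) 1) (ha : a ∈ Ioc (0 : ℝ) 1)
    (hw : 1 < w.re) (hw2 : w.re < 2) :
    lerchContinuation lam a (1 - w) = lerchDual lam (1 - lam) a w := by
  have hcont : ContinuousOn (fun μ : ℝ ↦ lerchContinuation μ a (1 - w)) (Ioo 0 1) :=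
    (continuousOn_twistedHurwitz_exp ha.1 (by rw [sub_re, one_re]; linarith)).congr
      fun μ hμ ↦ if_neg hμ.2.ne
  have hrat : EqOn (fun μ : ℝ ↦ lerchContinuation μ a (1 - w))
      (fun μ : ℝ ↦ lerchDual μ (1 - μ) a w) (Ioo 0 1 ∩ range ((↑) : ℚ → ℝ)) := by
    rintro _ ⟨⟨hr0, hr1⟩, r, rfl⟩
    have hnum : 0 < r.num := Rat.num_pos.2 (by exact_mod_cast hr0)
    have hlt : r.num < r.den := by
      simpa using (Rat.lt_iff r 1).1 (by exact_mod_cast hr1)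
    obtain ⟨p, hp⟩ := Int.eq_ofNat_of_zero_le hnum.le
    have hr : (r : ℝ) = (p : ℝ) / (r.den : ℝ) := by
      rw [Rat.cast_def (K := ℝ) r, hp, Int.cast_natCast]
    have hden : (r.den : ℝ) ≠ 0 := Nat.cast_ne_zero.2 r.den_ne_zero
    simp only [hr]
    refine lerchContinuation_one_sub_of_rat (p' := r.den - p) (by omega) (by omega) ha (by omega)
      (by omega) (by rw [Nat.add_sub_cancel' (by omega)]) ?_ hw hw2
    rw [Nat.cast_sub (by omega)]
    field_simp
  exact hrat.of_subset_closure hcont (continuousOn_lerchDual a hw) inter_subset_left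
    (Rat.denseRange_cast.open_subset_closure_inter isOpen_Ioo) hl

lemma lerchContinuation_one_sub (hl : lam ∈ Ioc (0 : ℝ) 1) (ha : a ∈ Ioc (0 : ℝ) 1) (hw : 1 < w.re)
    (hw2 : w.re < 2) :
    lerchContinuation lam a (1 - w) = lerchDual lam (1 - Int.fract lam) a w := by
  rcases hl.2.eq_or_lt with rfl | hl1
  · simpa using lerchContinuation_one_sub_of_rat (q := 1) (p := 1) (p' := 1) (mu := 1) le_rfl le_rfl
      ha le_rfl le_rfl (one_dvd _) (by norm_num) hw hw2
  · rw [Int.fract_eq_self.2 ⟨hl.1.le, hl1⟩]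
    exact lerchContinuation_one_sub_of_lt_one ⟨hl.1, hl1⟩ ha hw hw2

lemma IsLerch.eq_lerchContinuation (hF : IsLerch lam a F) (hl : lam ∈ Ioc (0 : ℝ) 1) (ha : 0 < a)
    (hs : -1 < s.re) (hs1 : s ≠ 1) : F s = lerchContinuation lam a s :=
  _root_.eq_lerchContinuation hl ha hF.1 hF.2 hs hs1

theorem IsLerch.one_sub_eq_lerchDual (hF : IsLerch lam a F) (hl : lam ∈ Ioc (0 : ℝ) 1)
    (ha : a ∈ Ioc (0 : ℝ) 1) (hw : 1 < w.re) :
    F (1 - w) = lerchDual lam (1 - Int.fract lam) a w := by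
  have hne {w : ℂ} (hw : 1 < w.re) : 1 - w ≠ 1 := by
    rw [Ne, sub_eq_self]
    rintro rfl
    norm_num at hw
  have hw₀ : (3 / 2 : ℂ) ∈ {w : ℂ | 1 < w.re} ∩ {w | w.re < 2} := by norm_num
  refine eqOn_of_isPreconnected_of_eventuallyEq (isOpen_re_gt 1)
    (convex_halfSpace_re_gt 1).isPreconnected (f := fun w ↦ F (1 - w))
    (fun w hw ↦ (hF.1 _ (hne hw)).comp w (differentiableAt_id.const_sub 1))
    (fun w hw ↦ differentiableAt_lerchDual hl.1 (sub_pos.2 (Int.fract_lt_one _)) a hw)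
    hw₀.1 ?_ hw
  filter_upwards [((isOpen_re_gt 1).inter (isOpen_re_lt 2)).mem_nhds hw₀] with z ⟨hz, hz2⟩
  rw [mem_ofPred_eq] at hz hz2
  rw [hF.eq_lerchContinuation hl ha.1 (by rw [sub_re, one_re]; linarith) (hne hz),
    lerchContinuation_one_sub hl ha hz hz2]

end FunctionalEquation

section LerchDualAsymptotics

open Complex Set

lemma log_ofReal_sub_mul_I {σ t : ℝ} (hσ : 0 < σ) (ht : 0 < t) :
    log (σ - t * I) = Real.log t - Real.pi / 2 * I + log (1 + (σ / t : ℝ) * I) := by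
  have hfactor : (σ - t * I : ℂ) = t * (-I * (1 + (σ / t : ℝ) * I)) := by
    have : (t : ℂ) ≠ 0 := ofReal_ne_zero.2 ht.ne'
    push_cast
    field_simp
    linear_combination (σ : ℂ) * I_sq
  have hne : 1 + (σ / t : ℝ) * I ≠ 0 := fun h ↦ by simpa using congrArg re h
  have harg : 0 ≤ arg (1 + (σ / t : ℝ) * I) := by
    rw [arg_nonneg_iff]
    simp only [add_im, one_im, im_ofReal_mul, I_im, mul_one, zero_add]
    positivity
  have hlog : log (-I * (1 + (σ / t : ℝ) * I)) = log (-I) + log (1 + (σ / t : ℝ) * I) := by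
    refine log_mul (neg_ne_zero.2 I_ne_zero) hne ?_
    rw [arg_neg_I]
    constructor <;> linarith [Real.pi_pos, arg_le_pi (1 + (σ / t : ℝ) * I)]
  rw [hfactor, log_ofReal_mul ht (mul_ne_zero (neg_ne_zero.2 I_ne_zero) hne), hlog, log_neg_I]
  ring

lemma norm_log_one_add_sub_self_le_sq {z : ℂ} (hz : ‖z‖ ≤ 1 / 2) :
    ‖log (1 + z) - z‖ ≤ ‖z‖ ^ 2 := by
  have hinv : (1 - ‖z‖)⁻¹ ≤ 2 := by
    rw [inv_le_comm₀ (by linarith) two_pos]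
    linarith
  refine (norm_log_one_add_sub_self_le (by linarith)).trans ?_
  nlinarith [sq_nonneg ‖z‖]

theorem exists_Gamma_mul_exp_eq {σ t : ℝ} (hσ : 1 / 2 ≤ σ) (ht : 2 ≤ t) (hσt : 2 * σ ≤ t) :
    ∃ E : ℂ, ‖E‖ ≤ (8 + 5 / 2 * σ ^ 2) / t ∧
      Gamma (σ - t * I) * exp (Real.pi * I * (σ - t * I) / 2) =
        √(2 * Real.pi) * exp (((σ - 1 / 2) * Real.log t : ℝ) +
          (t - t * Real.log t + Real.pi / 4 : ℝ) * I + E) := by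
  have ht0 : 0 < t := by linarith
  set w : ℂ := σ - t * I with hw
  have hwre : w.re = σ := by simp [hw]
  have hwt : t ≤ ‖w‖ := by
    simpa [hw, abs_of_pos ht0] using abs_im_le_norm w
  set z : ℂ := (σ / t : ℝ) * I with hz
  have hzn : ‖z‖ = σ / t := by
    rw [hz, norm_mul, norm_I, mul_one, norm_real, Real.norm_of_nonneg (by positivity)]
  have hz2 : ‖z‖ ≤ 1 / 2 := by
    rw [hzn, div_le_iff₀ ht0]
    linarith
  set S := ∑' k : ℕ, stirlingDefect (w + k)
  refine ⟨S + ((σ - 1 / 2 : ℝ) : ℂ) * log (1 + z) - t * I * (log (1 + z) - z), ?_, ?_⟩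
  · have hS : ‖S‖ ≤ 8 / t :=
      (norm_tsum_stirlingDefect_le (by linarith) (by linarith)).trans (by gcongr)
    have hlog : ‖((σ - 1 / 2 : ℝ) : ℂ) * log (1 + z)‖ ≤ σ * (3 / 2 * (σ / t)) := by
      rw [norm_mul, norm_real, Real.norm_of_nonneg (by linarith), ← hzn]
      exact mul_le_mul (by linarith) (norm_log_one_add_half_le_self hz2) (norm_nonneg _)
        (by linarith)
    have hquad : ‖t * I * (log (1 + z) - z)‖ ≤ t * (σ / t) ^ 2 := by
      rw [norm_mul, norm_mul, norm_I, mul_one, norm_real, Real.norm_of_nonneg ht0.le, ← hzn]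
      gcongr
      exact norm_log_one_add_sub_self_le_sq hz2
    calc _ ≤ ‖S‖ + ‖((σ - 1 / 2 : ℝ) : ℂ) * log (1 + z)‖ + ‖t * I * (log (1 + z) - z)‖ :=
          (norm_sub_le _ _).trans (by gcongr; exact norm_add_le _ _)
      _ ≤ 8 / t + σ * (3 / 2 * (σ / t)) + t * (σ / t) ^ 2 := by gcongr
      _ = (8 + 5 / 2 * σ ^ 2) / t := by
          field_simp
          ring
  · have htz : t * z = σ * I := by
      rw [hz, ← mul_assoc, ← ofReal_mul, mul_div_cancel₀ _ ht0.ne']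
    rw [Gamma_eq_stirlingMain_mul_exp_tsum (by linarith) (by linarith), stirlingMain, mul_assoc,
      mul_assoc, ← exp_add, ← exp_add, log_ofReal_sub_mul_I (by linarith) ht0, ← hz, hw]
    congr 2
    push_cast
    linear_combination -I * htz - (σ : ℂ) * I_sq

lemma norm_Gamma_mul_exp_le {σ t : ℝ} {n : ℕ} (hσ : σ ∈ Icc (1 / 2 : ℝ) n) (ht : 2 ≤ t)
    (hnt : 2 * n ≤ t) :
    ‖Gamma (σ - t * I) * exp (Real.pi * I * (σ - t * I) / 2)‖ ≤
      √(2 * Real.pi) * Real.exp (8 + 5 / 2 * n ^ 2) * t ^ n := by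
  obtain ⟨hσ1, hσn⟩ := hσ
  have ht0 : 0 < t := by linarith
  obtain ⟨E, hE, hG⟩ := exists_Gamma_mul_exp_eq hσ1 ht (by linarith)
  have hEre : E.re ≤ 8 + 5 / 2 * n ^ 2 := by
    refine (re_le_norm E).trans (hE.trans ((div_le_self (by positivity) (by linarith)).trans ?_))
    gcongr
  have htn : t ^ n = Real.exp (n * Real.log t) := by rw [Real.exp_nat_mul, Real.exp_log ht0]
  rw [hG, norm_mul, norm_real, Real.norm_of_nonneg (Real.sqrt_nonneg _), norm_exp, mul_assoc, htn,
    ← Real.exp_add]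
  simp only [add_re, re_ofReal_mul, ofReal_re, I_re, mul_zero, add_zero]
  gcongr ?_ * Real.exp ?_
  nlinarith [Real.log_nonneg (x := t) (by linarith)]

lemma exists_norm_lerchSeries_le {a p : ℝ} (ha : 0 < a) (μ : ℝ) (hp : 1 < p) (q : ℝ) :
    ∃ C, 0 ≤ C ∧ ∀ s : ℂ, s.re ∈ Icc p q → ‖lerchSeries μ a s‖ ≤ C := by
  rcases lt_or_ge q p with hqp | hpq
  · exact ⟨0, le_rfl, fun s hs ↦ absurd (hs.1.trans hs.2) hqp.not_ge⟩
  have hsum : Summable fun m : ℕ ↦ (m + a) ^ (-q) + (m + a) ^ (-p) :=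
    (summable_natCast_add_rpow_neg ha (hp.trans_le hpq)).add (summable_natCast_add_rpow_neg ha hp)
  refine ⟨∑' m : ℕ, ((m + a) ^ (-q) + (m + a) ^ (-p)), tsum_nonneg fun m ↦ by positivity,
    fun s hs ↦ tsum_of_norm_bounded hsum.hasSum fun m ↦ ?_⟩
  rw [lerchSeries_term_eq, norm_mul, norm_pow, norm_exp_two_pi_I_mul, one_pow, one_mul,
    norm_ofReal_cpow_neg s (by positivity)]
  exact rpow_le_rpow_add_rpow (by positivity) (by linarith [hs.2]) (by linarith [hs.1])

lemma lerchDual_eq_mul (lam mu a : ℝ) (w : ℂ) :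
    lerchDual lam mu a w =
      ((2 * Real.pi : ℝ) : ℂ) ^ (-w) * (Gamma w * exp (Real.pi * I * w / 2)) *
      (exp (2 * Real.pi * I * (-a * lam : ℝ)) * lerchSeries (-a) lam w +
        exp (-Real.pi * I * w) * (exp (2 * Real.pi * I * (a * mu : ℝ)) * lerchSeries a mu w)) := by
  have : exp (-Real.pi * I * w / 2) = exp (Real.pi * I * w / 2) * exp (-Real.pi * I * w) := by
    rw [← exp_add]
    ring_nf
  rw [lerchDual, this]
  push_cast
  ring

lemma norm_exp_neg_pi_I_mul (σ t : ℝ) :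
    ‖exp (-Real.pi * I * (σ - t * I))‖ = Real.exp (-(Real.pi * t)) := by
  rw [norm_exp]
  simp

lemma exists_norm_lerchDual_le {lam mu p : ℝ} (hl : 0 < lam) (hm : 0 < mu) (a : ℝ) (hp : 1 < p)
    (n : ℕ) : ∃ C, 0 ≤ C ∧ ∀ σ ∈ Icc p n, ∀ t : ℝ, 2 ≤ t → 2 * n ≤ t →
      ‖lerchDual lam mu a (σ - t * I)‖ ≤ C * t ^ n := by
  obtain ⟨A, hA0, hA⟩ := exists_norm_lerchSeries_le hl (-a) hp n
  obtain ⟨B, hB0, hB⟩ := exists_norm_lerchSeries_le hm a hp n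
  refine ⟨√(2 * Real.pi) * Real.exp (8 + 5 / 2 * n ^ 2) * (A + B), by positivity,
    fun σ hσ t ht hnt ↦ ?_⟩
  have hwre : (σ - t * I : ℂ).re = σ := by simp
  have hpow : ‖((2 * Real.pi : ℝ) : ℂ) ^ (-(σ - t * I : ℂ))‖ ≤ 1 := by
    rw [norm_ofReal_cpow_neg _ (by positivity), hwre]
    exact Real.rpow_le_one_of_one_le_of_nonpos (by linarith [Real.pi_gt_three])
      (by linarith [hσ.1])
  have hGamma := norm_Gamma_mul_exp_le (n := n) ⟨by linarith [hσ.1], hσ.2⟩ ht hnt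
  have hbracket : ‖exp (2 * Real.pi * I * (-a * lam : ℝ)) * lerchSeries (-a) lam (σ - t * I) +
      exp (-Real.pi * I * (σ - t * I)) *
        (exp (2 * Real.pi * I * (a * mu : ℝ)) * lerchSeries a mu (σ - t * I))‖ ≤ A + B := by
    refine (norm_add_le _ _).trans (add_le_add ?_ ?_)
    · rw [norm_mul, norm_exp_two_pi_I_mul, one_mul]
      exact hA _ (by rwa [hwre])
    · rw [norm_mul, norm_mul, norm_exp_two_pi_I_mul, one_mul, norm_exp_neg_pi_I_mul]
      have hexp : Real.exp (-(Real.pi * t)) ≤ 1 :=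
        Real.exp_le_one_iff.2 (neg_nonpos.2 (by positivity))
      exact (mul_le_of_le_one_left (norm_nonneg _) hexp).trans (hB _ (by rwa [hwre]))
  rw [lerchDual_eq_mul, norm_mul, norm_mul]
  calc _ ≤ 1 * (√(2 * Real.pi) * Real.exp (8 + 5 / 2 * n ^ 2) * t ^ n) * (A + B) := by gcongr
    _ = _ := by ring

lemma one_sub_fract_pos (x : ℝ) : 0 < 1 - Int.fract x := sub_pos.2 (Int.fract_lt_one x)

theorem IsLerch.exists_norm_le {lam a : ℝ} {F : ℂ → ℂ} (hF : IsLerch lam a F)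
    (hl : lam ∈ Ioc (0 : ℝ) 1) (ha : a ∈ Ioc (0 : ℝ) 1) {n : ℕ} (hn : 2 ≤ n) (q : ℝ) :
    ∃ C, 0 < C ∧ ∀ s : ℂ, s.re ∈ Icc (1 - n : ℝ) q → 2 * n ≤ s.im → ‖F s‖ ≤ C * ‖s‖ ^ n := by
  obtain ⟨A, hA0, hA⟩ := exists_norm_lerchDual_le hl.1 (one_sub_fract_pos lam) a
    (show (1 : ℝ) < 3 / 2 by norm_num) n
  obtain ⟨B, hB⟩ := exists_norm_lerchContinuation_le lam ha.1 (show (-1 : ℝ) < -1 / 2 by norm_num) q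
  refine ⟨A + |B| + 1, by positivity, fun s hs him ↦ ?_⟩
  have hn2 : (2 : ℝ) ≤ n := by exact_mod_cast hn
  have hsn : s.im ≤ ‖s‖ := im_le_norm s
  rcases le_total (-1 / 2) s.re with hre | hre
  · have hs1 : s ≠ 1 := fun h ↦ by simp only [h, one_im] at him; linarith
    rw [hF.eq_lerchContinuation hl ha.1 (by linarith) hs1]
    refine (hB s ⟨hre, hs.2⟩ ((by linarith : 1 ≤ s.im).trans (le_abs_self _))).trans ?_
    have : ‖s‖ ^ 2 ≤ ‖s‖ ^ n := pow_le_pow_right₀ (by linarith) hn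
    calc B * ‖s‖ ^ 2 ≤ |B| * ‖s‖ ^ n := by gcongr; exact le_abs_self B
      _ ≤ (A + |B| + 1) * ‖s‖ ^ n := by gcongr; linarith
  · have hrefl : s = 1 - (((1 - s.re : ℝ) : ℂ) - s.im * I) := by apply Complex.ext <;> simp
    have hdual := hA (1 - s.re) ⟨by linarith, by linarith [hs.1]⟩ s.im (by linarith) him
    rw [← hF.one_sub_eq_lerchDual hl ha (by simp; linarith), ← hrefl] at hdual
    have him0 : 0 ≤ s.im := by linarith
    calc ‖F s‖ ≤ A * s.im ^ n := hdual
      _ ≤ (A + |B| + 1) * ‖s‖ ^ n := by gcongr; linarith [abs_nonneg B]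

lemma exists_le_norm_lerchSeries {a x : ℝ} (ha : 0 < a) (μ : ℝ) (hx : 1 + a ≤ x) :
    ∃ c, 0 < c ∧ ∀ s : ℂ, s.re = x → c ≤ ‖lerchSeries μ a s‖ := by
  have hq : 0 < 1 - ∑' m, lerchRatio a m ^ (1 + a) := sub_pos.2 (tsum_lerchRatio_rpow_lt_one ha)
  refine ⟨a ^ (-x) * (1 - ∑' m, lerchRatio a m ^ (1 + a)), by positivity, fun s hs ↦ ?_⟩
  have htail := norm_lerchTail_le_tsum ha μ (hx.trans_eq hs.symm)
  have hone := norm_sub_norm_le 1 (-lerchTail μ a s)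
  rw [norm_one, norm_neg, sub_neg_eq_add] at hone
  rw [lerchSeries_eq_cpow_mul_one_add_lerchTail ha μ (by linarith), norm_mul,
    norm_ofReal_cpow_neg s ha, hs]
  gcongr
  linarith

/-- The exponent of the leading factor of `lerchDual lam mu a (σ - t * I)` as `t → ∞`; its real and
imaginary parts are displayed separately. -/
noncomputable def lerchPhase (lam a σ t : ℝ) : ℂ :=
  (-σ * Real.log (2 * Real.pi * lam) + 1 / 2 * Real.log (2 * Real.pi) +
    (σ - 1 / 2) * Real.log t : ℝ) +
  (t * Real.log (2 * Real.pi * lam) + t - t * Real.log t +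
    (Real.pi / 4 - 2 * Real.pi * a * lam) : ℝ) * I

lemma ofReal_cpow_eq_exp {x : ℝ} (hx : 0 < x) (s : ℂ) : (x : ℂ) ^ s = exp (Real.log x * s) := by
  rw [cpow_def_of_ne_zero (ofReal_ne_zero.2 hx.ne'), ofReal_log hx.le]

lemma exp_lerchPhase {lam : ℝ} (hl : 0 < lam) (a σ t : ℝ) :
    exp (lerchPhase lam a σ t) = ((2 * Real.pi : ℝ) : ℂ) ^ (-(σ - t * I : ℂ)) *
      (√(2 * Real.pi) * exp (((σ - 1 / 2) * Real.log t : ℝ) +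
        (t - t * Real.log t + Real.pi / 4 : ℝ) * I)) *
      (exp (2 * Real.pi * I * (-a * lam : ℝ)) * (lam : ℂ) ^ (-(σ - t * I : ℂ))) := by
  have hsqrt : (√(2 * Real.pi) : ℂ) = exp (1 / 2 * Real.log (2 * Real.pi) : ℝ) := by
    rw [← ofReal_exp, Real.sqrt_eq_rpow, Real.rpow_def_of_pos (by positivity), mul_comm]
  rw [hsqrt, ofReal_cpow_eq_exp hl, ofReal_cpow_eq_exp (by positivity), ← exp_add, ← exp_add,
    ← exp_add, ← exp_add, lerchPhase, Real.log_mul (by positivity) hl.ne']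
  congr 1
  push_cast
  ring

lemma exists_norm_exp_mul_lerchSeries_div_le {lam mu σ : ℝ} (hl : 0 < lam) (hm : 0 < mu) (a : ℝ)
    (hσ : 1 + lam ≤ σ) : ∃ K, 0 ≤ K ∧ ∀ t : ℝ, 0 < t →
      ‖exp (-Real.pi * I * (σ - t * I)) *
        (exp (2 * Real.pi * I * (a * mu : ℝ)) * lerchSeries a mu (σ - t * I)) /
        (exp (2 * Real.pi * I * (-a * lam : ℝ)) * lerchSeries (-a) lam (σ - t * I))‖ ≤ K / t := by
  obtain ⟨B, hB0, hB⟩ := exists_norm_lerchSeries_le hm a (by linarith : 1 < σ) σ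
  obtain ⟨c, hc0, hc⟩ := exists_le_norm_lerchSeries hl (-a) hσ
  refine ⟨B / c, by positivity, fun t ht ↦ ?_⟩
  have hre : (σ - t * I : ℂ).re = σ := by simp
  have hexp : Real.exp (-(Real.pi * t)) ≤ t⁻¹ := by
    rw [Real.exp_neg]
    gcongr
    nlinarith [Real.add_one_le_exp (Real.pi * t), Real.pi_gt_three]
  rw [norm_div, norm_mul, norm_mul, norm_mul, norm_exp_two_pi_I_mul, norm_exp_two_pi_I_mul, one_mul,
    one_mul, norm_exp_neg_pi_I_mul]
  calc _ ≤ t⁻¹ * B / c := by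
        gcongr
        exacts [hB _ ⟨hre.ge, hre.le⟩, hc _ hre]
    _ = B / c / t := by ring

theorem exists_lerchDual_eq_exp_lerchPhase_mul {lam mu σ : ℝ} (hl : 0 < lam) (hm : 0 < mu) (a : ℝ)
    (hσ : 1 + lam ≤ σ) : ∃ C, 0 ≤ C ∧ ∀ t : ℝ, 8 + 5 / 2 * σ ^ 2 ≤ t → ∃ η : ℂ, ‖η‖ ≤ C / t ∧
      lerchDual lam mu a (σ - t * I) =
        exp (lerchPhase lam a σ t) * (1 + lerchTail (-a) lam (σ - t * I)) * (1 + η) := by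
  obtain ⟨K, hK0, hK⟩ := exists_norm_exp_mul_lerchSeries_div_le hl hm a hσ
  refine ⟨2 * (8 + 5 / 2 * σ ^ 2) + 3 * K, by positivity, fun t ht ↦ ?_⟩
  have ht0 : 0 < t := by nlinarith
  obtain ⟨E, hE, hG⟩ := exists_Gamma_mul_exp_eq (σ := σ) (t := t) (by linarith) (by nlinarith)
    (by nlinarith [sq_nonneg (σ - 1)])
  have hE1 : (8 + 5 / 2 * σ ^ 2) / t ≤ 1 := (div_le_one ht0).2 ht
  have hexpE : ‖exp E - 1‖ ≤ 2 * ((8 + 5 / 2 * σ ^ 2) / t) :=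
    (norm_exp_sub_one_le (hE.trans hE1)).trans (by gcongr)
  set w : ℂ := σ - t * I with hw
  have hwre : w.re = σ := by simp [hw]
  set A := exp (2 * Real.pi * I * (-a * lam : ℝ)) * lerchSeries (-a) lam w with hA
  set B := exp (-Real.pi * I * w) * (exp (2 * Real.pi * I * (a * mu : ℝ)) * lerchSeries a mu w)
  have hBA : ‖B / A‖ ≤ K / t := hK t ht0
  have hA0 : A ≠ 0 := by
    obtain ⟨c, hc0, hc⟩ := exists_le_norm_lerchSeries hl (-a) hσ
    exact mul_ne_zero (exp_ne_zero _) (norm_pos_iff.1 (hc0.trans_le (hc w hwre)))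
  refine ⟨(exp E - 1) + B / A + (exp E - 1) * (B / A), ?_, ?_⟩
  · calc _ ≤ ‖exp E - 1‖ + ‖B / A‖ + ‖exp E - 1‖ * ‖B / A‖ :=
          (norm_add_le _ _).trans (add_le_add (norm_add_le _ _) (norm_mul_le _ _))
      _ ≤ 2 * ((8 + 5 / 2 * σ ^ 2) / t) + K / t + 2 * (K / t) := by
          gcongr
          linarith
      _ = (2 * (8 + 5 / 2 * σ ^ 2) + 3 * K) / t := by ring
  · have hAB : A + B = A * (1 + B / A) := by field_simp
    rw [lerchDual_eq_mul, hG, hAB, hA, exp_lerchPhase hl, exp_add _ E,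
      lerchSeries_eq_cpow_mul_one_add_lerchTail hl (-a) (by linarith : 1 < w.re)]
    ring

end LerchDualAsymptotics

section LittlewoodFormula

open Complex MeasureTheory intervalIntegral Set

variable {f : ℂ → ℂ} {ψ : ℝ → ℂ} {a b c d x t₀ κ : ℝ}

/-- `ψ` is a differentiable logarithm of `f` along the vertical half-line `x + i t`, `t > t₀`:
on the vertical edges of a rectangle it stands for `log f` with its continuous argument. -/
structure IsLogOnVertical (f : ℂ → ℂ) (x t₀ : ℝ) (ψ : ℝ → ℂ) : Prop where
  exp_eq : ∀ t : ℝ, t₀ < t → exp (ψ t) = f (x + t * I)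
  differentiableAt : ∀ t : ℝ, t₀ < t → DifferentiableAt ℝ ψ t

lemma IsLogOnVertical.ne_zero (h : IsLogOnVertical f x t₀ ψ) {t : ℝ} (ht : t₀ < t) :
    f (x + t * I) ≠ 0 := h.exp_eq t ht ▸ exp_ne_zero _

lemma IsLogOnVertical.log_norm (h : IsLogOnVertical f x t₀ ψ) {t : ℝ} (ht : t₀ < t) :
    Real.log ‖f (x + t * I)‖ = (ψ t).re := by
  rw [← h.exp_eq t ht, norm_exp, Real.log_exp]

lemma IsLogOnVertical.continuousOn (h : IsLogOnVertical f x t₀ ψ) (hc : t₀ < c) :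
    ContinuousOn ψ (Icc c d) := fun t ht ↦
  (h.differentiableAt t (hc.trans_le ht.1)).continuousAt.continuousWithinAt

lemma IsLogOnVertical.hasDerivAt (h : IsLogOnVertical f x t₀ ψ) {t : ℝ} (ht : t₀ < t)
    (hf : DifferentiableAt ℂ f (x + t * I)) :
    HasDerivAt ψ (I * logDeriv f (x + t * I)) t := by
  have hexp := (h.differentiableAt t ht).hasDerivAt.cexp
  have hline : HasDerivAt (fun t : ℝ ↦ (x + t * I : ℂ)) I t := by
    simpa using hasDerivAt_add_mul_I_sub x t 0
  have hcomp : HasDerivAt (fun t : ℝ ↦ f (x + t * I)) (deriv f (x + t * I) * I) t :=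
    hf.hasDerivAt.comp t hline
  have heq : (fun t ↦ exp (ψ t)) =ᶠ[nhds t] fun t : ℝ ↦ f (x + t * I) := by
    filter_upwards [Ioi_mem_nhds ht] with u hu using h.exp_eq u hu
  have hderiv := hexp.unique (hcomp.congr_of_eventuallyEq heq)
  refine (h.differentiableAt t ht).hasDerivAt.congr_deriv ?_
  rw [h.exp_eq t ht] at hderiv
  rw [logDeriv_apply, ← mul_div_assoc, eq_div_iff (h.ne_zero ht)]
  linear_combination hderiv

lemma continuousOn_logDeriv_comp {g : ℝ → ℂ} {u : Set ℝ} (hg : ContinuousOn g u)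
    (hf : ∀ t ∈ u, AnalyticAt ℂ f (g t)) (h0 : ∀ t ∈ u, f (g t) ≠ 0) :
    ContinuousOn (fun t ↦ logDeriv f (g t)) u := fun t ht ↦
  ((hf t ht).deriv.continuousAt.comp_continuousWithinAt (hg t ht)).div
    ((hf t ht).continuousAt.comp_continuousWithinAt (hg t ht)) (h0 t ht)

lemma hasDerivAt_log_norm {g : ℝ → ℂ} {g' : ℂ} (hg : HasDerivAt g g' x) (h0 : g x ≠ 0) :
    HasDerivAt (fun t ↦ Real.log ‖g t‖) (g' / g x).re x := by
  have hlog : (fun t ↦ Real.log ‖g t‖) = fun t ↦ 1 / 2 * Real.log (‖g t‖ ^ 2) := by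
    ext t; rw [Real.log_pow]; push_cast; ring
  rw [hlog]
  refine ((hg.norm_sq.log (by positivity)).const_mul (1 / 2 : ℝ)).congr_deriv ?_
  rw [div_eq_mul_inv g', inv_def, ← mul_assoc, re_mul_ofReal, normSq_eq_norm_sq,
    Complex.inner]
  ring

lemma im_I_mul_integral_sub_mul_logDeriv_vertical (hcd : c ≤ d) (hc : t₀ < c)
    (hψ : IsLogOnVertical f x t₀ ψ)
    (hf : ∀ t ∈ Icc c d, AnalyticAt ℂ f (x + t * I)) :
    (I * ∫ t in c..d, ((x + t * I : ℂ) - κ) * logDeriv f (x + t * I)).im =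
      (x - κ) * ((ψ d).im - (ψ c).im) + d * (ψ d).re - c * (ψ c).re
        - ∫ t in c..d, (ψ t).re := by
  rw [← uIcc_of_le hcd] at hf
  have hlt : ∀ t ∈ uIcc c d, t₀ < t := fun t ht ↦
    hc.trans_le (uIcc_of_le hcd ▸ ht : t ∈ Icc c d).1
  have hψc : ContinuousOn ψ (uIcc c d) := uIcc_of_le hcd ▸ hψ.continuousOn hc
  have hL : ContinuousOn (fun t : ℝ ↦ I * logDeriv f (x + t * I)) (uIcc c d) :=
    continuousOn_const.mul (continuousOn_logDeriv_comp (by fun_prop) hf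
      fun t ht ↦ hψ.ne_zero (hlt t ht))
  have hparts := intervalIntegral.integral_mul_deriv_eq_deriv_mul
    (u := fun t : ℝ ↦ (x : ℂ) + t * I - κ)
    (fun t _ ↦ hasDerivAt_add_mul_I_sub x t κ)
    (fun t ht ↦ hψ.hasDerivAt (hlt t ht) (hf t ht).differentiableAt)
    (continuous_const.intervalIntegrable c d) hL.intervalIntegrable
  have hre : ∫ t in c..d, (ψ t).re = (∫ t in c..d, ψ t).re :=
    intervalIntegral_re (μ := volume) (f := ψ) hψc.intervalIntegrable
  have hcomm : I * ∫ t in c..d, ((x + t * I : ℂ) - κ) * logDeriv f (x + t * I) =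
      ∫ t in c..d, ((x + t * I : ℂ) - κ) * (I * logDeriv f (x + t * I)) := by
    rw [← intervalIntegral.integral_const_mul]
    exact integral_congr fun t _ ↦ mul_left_comm _ _ _
  rw [hcomm, hparts, intervalIntegral.integral_const_mul, hre]
  simp only [sub_im, sub_re, add_re, add_im, mul_im, mul_re, ofReal_re, ofReal_im, I_re, I_im]
  ring

lemma im_integral_sub_mul_logDeriv_horizontal {y : ℝ} (hab : a ≤ b)
    (hf : ∀ x ∈ Icc a b, AnalyticAt ℂ f (x + y * I)) (h0 : ∀ x ∈ Icc a b, f (x + y * I) ≠ 0) :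
    (∫ x in a..b, ((x + y * I : ℂ) - κ) * logDeriv f (x + y * I)).im =
      (∫ x in a..b, (x - κ) * (logDeriv f (x + y * I)).im)
        + y * (Real.log ‖f (b + y * I)‖ - Real.log ‖f (a + y * I)‖) := by
  rw [← uIcc_of_le hab] at hf h0
  have hL : ContinuousOn (fun x : ℝ ↦ logDeriv f (x + y * I)) (uIcc a b) :=
    continuousOn_logDeriv_comp (by fun_prop) hf h0
  have hderiv : ∀ x ∈ uIcc a b, HasDerivAt (fun x : ℝ ↦ Real.log ‖f (x + y * I)‖)
      (logDeriv f (x + y * I)).re x := fun x hx ↦ by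
    have hline : HasDerivAt (fun x : ℝ ↦ (x + y * I : ℂ)) 1 x := by
      simpa using (hasDerivAt_id x).ofReal_comp.add_const (y * I : ℂ)
    have hcomp := (hf x hx).differentiableAt.hasDerivAt.comp x hline
    rw [mul_one] at hcomp
    exact hasDerivAt_log_norm hcomp (h0 x hx)
  have hre : ContinuousOn (fun x : ℝ ↦ (logDeriv f (x + y * I)).re) (uIcc a b) :=
    continuous_re.comp_continuousOn hL
  have him : ContinuousOn (fun x : ℝ ↦ (x - κ) * (logDeriv f (x + y * I)).im) (uIcc a b) :=
    ContinuousOn.mul (by fun_prop) (continuous_im.comp_continuousOn hL)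
  have hprod : ContinuousOn (fun x : ℝ ↦ ((x + y * I : ℂ) - κ) * logDeriv f (x + y * I))
      (uIcc a b) := ContinuousOn.mul (by fun_prop) hL
  rw [← integral_eq_sub_of_hasDerivAt hderiv hre.intervalIntegrable,
    ← intervalIntegral.integral_const_mul,
    ← integral_add him.intervalIntegrable (hre.intervalIntegrable.const_mul y)]
  refine (intervalIntegral_im (μ := volume) hprod.intervalIntegrable).symm.trans
    (integral_congr fun x _ ↦ ?_)
  simp

/-- The contribution of the horizontal edge at height `y` to Littlewood's formula: the change of
`(σ - κ) arg f` between the endpoints minus the integral of `(σ - κ) Im (f'/f)`; the arguments at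
the endpoints are those of the logarithms `ψa`, `ψb` along the vertical edges. -/
noncomputable def littlewoodEdge (f : ℂ → ℂ) (κ a b : ℝ) (ψa ψb : ℝ → ℂ) (y : ℝ) : ℝ :=
  (b - κ) * (ψb y).im - (a - κ) * (ψa y).im
    - ∫ x in a..b, (x - κ) * (logDeriv f (x + y * I)).im

theorem two_pi_mul_sum_analyticOrder_mul_re_sub (hab : a ≤ b) (hcd : c ≤ d) (hc : t₀ < c)
    {ψa ψb : ℝ → ℂ} (ha : IsLogOnVertical f a t₀ ψa) (hb : IsLogOnVertical f b t₀ ψb)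
    (hf : AnalyticOnNhd ℂ f (Icc a b ×ℂ Icc c d)) (Z : Finset ℂ)
    (hZ : ∀ ρ ∈ Z, ρ ∈ Ioo a b ×ℂ Ioo c d) (hord : ∀ ρ ∈ Z, analyticOrderAt f ρ ≠ ⊤)
    (hfZ : ∀ s ∈ Icc a b ×ℂ Icc c d, f s = 0 → s ∈ Z) (κ : ℝ) :
    2 * Real.pi * ∑ ρ ∈ Z, (analyticOrderNatAt f ρ : ℝ) * (ρ.re - κ) =
      littlewoodEdge f κ a b ψa ψb d - littlewoodEdge f κ a b ψa ψb c
        + (∫ t in c..d, (ψa t).re) - ∫ t in c..d, (ψb t).re := by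
  have hmem : ∀ x ∈ Icc a b, ∀ y ∈ Icc c d, (x + y * I : ℂ) ∈ Icc a b ×ℂ Icc c d :=
    fun x hx y hy ↦ ⟨by simpa using hx, by simpa using hy⟩
  have hedge : ∀ x ∈ Icc a b, ∀ y ∈ Icc c d, (y = c ∨ y = d) → f (x + y * I) ≠ 0 := by
    intro x hx y hy hycd h
    have him : y ∈ Ioo c d := by simpa using (hZ _ (hfZ _ (hmem x hx y hy) h)).2
    rcases hycd with rfl | rfl
    exacts [him.1.false, him.2.false]
  have hcm : c ∈ Icc c d := left_mem_Icc.2 hcd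
  have hdm : d ∈ Icc c d := right_mem_Icc.2 hcd
  have horiz := fun y hy (hy' : y = c ∨ y = d) ↦ im_integral_sub_mul_logDeriv_horizontal (κ := κ)
    hab (fun x hx ↦ hf _ (hmem x hx y hy)) (fun x hx ↦ hedge x hx y hy hy')
  have harg := congrArg im (rectIntegral_mul_logDeriv (φ := fun s ↦ s - κ) hab hcd
    (by fun_prop) hf Z hZ hord hfZ)
  have hsum : (2 * Real.pi * I * ∑ ρ ∈ Z, (analyticOrderNatAt f ρ : ℂ) * (ρ - κ)).im =
      2 * Real.pi * ∑ ρ ∈ Z, (analyticOrderNatAt f ρ : ℝ) * (ρ.re - κ) := by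
    rw [mul_assoc, mul_comm I]
    simp [re_sum]
  rw [hsum, rectIntegral, sub_im, add_im, sub_im, horiz c hcm (.inl rfl), horiz d hdm (.inr rfl),
    im_I_mul_integral_sub_mul_logDeriv_vertical hcd hc hb
      (fun t ht ↦ hf _ (hmem b (right_mem_Icc.2 hab) t ht)),
    im_I_mul_integral_sub_mul_logDeriv_vertical hcd hc ha
      (fun t ht ↦ hf _ (hmem a (left_mem_Icc.2 hab) t ht)),
    ha.log_norm hc, hb.log_norm hc, ha.log_norm (hc.trans_le hcd),
    hb.log_norm (hc.trans_le hcd)] at harg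
  rw [← harg, littlewoodEdge, littlewoodEdge]
  ring

end LittlewoodFormula

section LogarithmsOnVerticalLines

open Complex Set MeasureTheory Filter Asymptotics Topology

variable {lam a σ x τ : ℝ} {F : ℂ → ℂ}

lemma IsLerch.analyticAt (hF : IsLerch lam a F) {s : ℂ} (hs : s ≠ 1) : AnalyticAt ℂ F s :=
  DifferentiableOn.analyticAt (fun z hz ↦ (hF.1 z hz).differentiableWithinAt)
    (isOpen_compl_singleton.mem_nhds hs)

lemma IsLerch.ne_zero_of_one_add_le_re (hF : IsLerch lam a F) (ha : 0 < a) {s : ℂ}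
    (hs : 1 + a ≤ s.re) : F s ≠ 0 := by
  have hs1 : 1 < s.re := by linarith
  rw [hF.2 s hs1, lerchSeries_eq_cpow_mul_one_add_lerchTail ha lam hs1, ofReal_cpow_eq_exp ha]
  exact mul_ne_zero (exp_ne_zero _) (slitPlane_ne_zero (one_add_lerchTail_mem_slitPlane ha lam hs))

lemma IsLerch.analyticOrderAt_ne_top (hF : IsLerch lam a F) (ha : 0 < a) {s : ℂ} (hs : s ≠ 1) :
    analyticOrderAt F s ≠ ⊤ := by
  intro h
  have hzero := AnalyticOnNhd.eqOn_zero_of_preconnected_of_eventuallyEq_zero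
    (fun z hz ↦ hF.analyticAt hz)
    (isConnected_compl_singleton_of_one_lt_rank (by simp) 1).isPreconnected hs
    (analyticOrderAt_eq_top.1 h)
  have hne : ((1 + a : ℝ) : ℂ) ≠ 1 := by
    rw [Ne, ofReal_eq_one]
    linarith
  exact hF.ne_zero_of_one_add_le_re ha (by simp) (hzero hne)

lemma IsLerch.eventually_nhdsNE_one_eq_lerchContinuation (hF : IsLerch lam a F)
    (hl : lam ∈ Ioc 0 1) (ha : 0 < a) : ∀ᶠ s in 𝓝[≠] 1, F s = lerchContinuation lam a s := by
  filter_upwards [self_mem_nhdsWithin, mem_nhdsWithin_of_mem_nhds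
    ((isOpen_re_gt (-1)).mem_nhds (show (1 : ℂ) ∈ {s : ℂ | -1 < s.re} by simp))] with s hs1 hs
  exact hF.eq_lerchContinuation hl ha hs hs1

lemma isLerch_one_hurwitzZeta (ha : a ∈ Icc 0 1) : IsLerch 1 a (HurwitzZeta.hurwitzZeta a) := by
  refine ⟨fun s hs ↦ HurwitzZeta.differentiableAt_hurwitzZeta _ hs, fun s hs ↦ ?_⟩
  rw [← (HurwitzZeta.hasSum_hurwitzZeta_of_one_lt_re ha hs).tsum_eq, lerchSeries]
  refine tsum_congr fun m ↦ ?_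
  rw [ofReal_one, mul_one, mul_comm, exp_nat_mul, exp_two_pi_mul_I, one_pow]

lemma IsLerch.eventually_nhdsNE_one_ne_zero (hF : IsLerch lam a F) (hl : lam ∈ Ioc 0 1)
    (ha : a ∈ Ioc 0 1) : ∀ᶠ s in 𝓝[≠] 1, F s ≠ 0 := by
  have hcont := hF.eventually_nhdsNE_one_eq_lerchContinuation hl ha.1
  obtain rfl | hl1 := eq_or_ne lam 1
  · have hζ := (isLerch_one_hurwitzZeta (Ioc_subset_Icc_self ha)
      ).eventually_nhdsNE_one_eq_lerchContinuation hl ha.1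
    filter_upwards [hcont, hζ, (HurwitzZeta.hurwitzZeta_residue_one a).eventually_ne one_ne_zero]
      with s hs hζs hres
    rw [hs, ← hζs]
    exact right_ne_zero_of_mul hres
  · have hana : AnalyticAt ℂ (twistedHurwitz (exp (2 * Real.pi * I * lam)) a) 1 :=
      DifferentiableOn.analyticAt (fun z hz ↦ (differentiableAt_twistedHurwitz
        (norm_exp_two_pi_I_mul lam) ha.1 hz).differentiableWithinAt)
        ((isOpen_re_gt (-1)).mem_nhds (show (1 : ℂ) ∈ {s : ℂ | -1 < s.re} by simp))
    simp only [lerchContinuation, hl1, if_false] at hcont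
    refine (hana.meromorphicAt.congr (hcont.mono fun s hs ↦
      hs.symm)).eventually_eq_zero_or_eventually_ne_zero.resolve_left fun hzero ↦ ?_
    obtain ⟨s, hs, hs1⟩ :=
      ((eventually_eventually_nhdsWithin.2 hzero).and self_mem_nhdsWithin).exists
    rw [isOpen_compl_singleton.nhdsWithin_eq hs1] at hs
    exact hF.analyticOrderAt_ne_top ha.1 hs1 (analyticOrderAt_eq_top.2 hs)

lemma IsLerch.finite_zeros_of_isCompact (hF : IsLerch lam a F) (hl : lam ∈ Ioc 0 1)
    (ha : a ∈ Ioc 0 1) {K : Set ℂ} (hK : IsCompact K) : {s ∈ K | F s = 0}.Finite := by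
  refine _root_.finite_zeros_of_isCompact hK fun z _ ↦ ?_
  obtain rfl | hz := eq_or_ne z 1
  · exact hF.eventually_nhdsNE_one_ne_zero hl ha
  · exact eventually_nhdsNE_ne_zero (hF.analyticAt hz) (hF.analyticOrderAt_ne_top ha.1 hz)

/-- The principal logarithm of the normalised Lerch series `a ^ s * lerchSeries μ a s` at the
point `s = x + i t` of a vertical line on which the normalised series stays within distance `1`
of `1`. -/
noncomputable def lerchTailLog (μ a x t : ℝ) : ℂ := log (1 + lerchTail μ a (x + t * I))

lemma exp_lerchTailLog (ha : 0 < a) (hx : 1 + a ≤ x) (μ t : ℝ) :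
    exp (lerchTailLog μ a x t) = 1 + lerchTail μ a (x + t * I) :=
  exp_log (slitPlane_ne_zero (one_add_lerchTail_mem_slitPlane ha μ (by simpa using hx)))

lemma abs_im_lerchTailLog_le (μ a x t : ℝ) : |(lerchTailLog μ a x t).im| ≤ Real.pi := by
  rw [lerchTailLog, log_im]
  exact abs_arg_le_pi _

lemma differentiable_lerchTailLog (ha : 0 < a) (hx : 1 + a ≤ x) (μ : ℝ) :
    Differentiable ℝ (lerchTailLog μ a x) := by
  intro t
  have hline : HasDerivAt (fun t : ℝ ↦ (x + t * I : ℂ)) I t := by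
    simpa using hasDerivAt_add_mul_I_sub x t 0
  have htail := (differentiableAt_lerchTail ha μ (s := x + t * I)
    (by simpa using (by linarith : 1 < x))).hasDerivAt.comp t hline
  exact ((htail.const_add 1).clog_real
    (one_add_lerchTail_mem_slitPlane ha μ (by simpa using hx))).differentiableAt

lemma exists_abs_integral_re_lerchTailLog_le (ha : 0 < a) (hx : 1 + a ≤ x) (μ : ℝ) :
    ∃ C, ∀ y₁ y₂ : ℝ, |∫ t in y₁..y₂, (lerchTailLog μ a x t).re| ≤ C := by
  obtain ⟨C, hC⟩ := exists_norm_integral_log_one_add_lerchTail_le ha hx μ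
  refine ⟨C, fun y₁ y₂ ↦ ?_⟩
  rw [show ∫ t in y₁..y₂, (lerchTailLog μ a x t).re = (∫ t in y₁..y₂, lerchTailLog μ a x t).re from
    intervalIntegral.intervalIntegral_re (μ := volume)
      ((differentiable_lerchTailLog ha hx μ).continuous.intervalIntegrable _ _)]
  exact (abs_re_le_norm _).trans (hC y₁ y₂)

theorem IsLerch.exists_isLogOnVertical_right (hF : IsLerch lam a F) (ha : 0 < a)
    (hx : 1 + a ≤ x) :
    ∃ ψ : ℝ → ℂ, (∀ t₀, IsLogOnVertical F x t₀ ψ) ∧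
      ((fun T ↦ (ψ T).im + T * Real.log a) =O[atTop] fun _ ↦ (1 : ℝ)) ∧
      ∀ τ, (fun T ↦ (∫ t in τ..T, (ψ t).re) + x * Real.log a * T) =O[atTop] fun _ ↦ (1 : ℝ) := by
  have hdiff := differentiable_lerchTailLog ha hx lam
  obtain ⟨C, hC⟩ := exists_abs_integral_re_lerchTailLog_le ha hx lam
  refine ⟨fun t ↦ -(Real.log a * (x + t * I)) + lerchTailLog lam a x t,
    fun t₀ ↦ ⟨fun t _ ↦ ?_, fun t _ ↦ ?_⟩, .of_bound Real.pi (.of_forall fun T ↦ ?_), fun τ ↦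
    .of_bound (C + |x * Real.log a * τ|) (.of_forall fun T ↦ ?_)⟩
  · have hre : 1 < (x + t * I : ℂ).re := by simpa using (by linarith : 1 < x)
    rw [hF.2 _ hre, lerchSeries_eq_cpow_mul_one_add_lerchTail ha lam hre, exp_add,
      exp_lerchTailLog ha hx, ofReal_cpow_eq_exp ha, mul_neg]
  · exact ((((hasDerivAt_add_mul_I_sub x t 0).differentiableAt.congr_of_eventuallyEq
      (.of_forall fun t ↦ (sub_zero _).symm)).const_mul _).fun_neg).fun_add (hdiff t)
  · have him : (-(Real.log a * (x + T * I)) + lerchTailLog lam a x T).im + T * Real.log a =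
        (lerchTailLog lam a x T).im := by
      simp [mul_comm]
    simpa only [him, norm_one, mul_one, Real.norm_eq_abs] using
      abs_im_lerchTailLog_le lam a x T
  · have hsplit : ∀ t : ℝ, (-(Real.log a * (x + t * I)) + lerchTailLog lam a x t).re =
        -(x * Real.log a) + (lerchTailLog lam a x t).re := fun t ↦ by simp [mul_comm]
    simp only [hsplit]
    rw [intervalIntegral.integral_add intervalIntegrable_const
      ((continuous_re.comp' hdiff.continuous).intervalIntegrable _ _),
      intervalIntegral.integral_const, smul_eq_mul, norm_one, mul_one, Real.norm_eq_abs]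
    calc _ = |(∫ t in τ..T, (lerchTailLog lam a x t).re) + x * Real.log a * τ| := by
          congr 1; ring
      _ ≤ _ := (abs_add_le _ _).trans (by gcongr; exact hC τ T)

lemma differentiableAt_lerchPhase (lam a σ : ℝ) {t : ℝ} (ht : 0 < t) :
    DifferentiableAt ℝ (lerchPhase lam a σ) t := by
  have hlog := Real.differentiableAt_log ht.ne'
  have hre : DifferentiableAt ℝ (fun t ↦ -σ * Real.log (2 * Real.pi * lam)
      + 1 / 2 * Real.log (2 * Real.pi) + (σ - 1 / 2) * Real.log t) t := by fun_prop
  have him : DifferentiableAt ℝ (fun t ↦ t * Real.log (2 * Real.pi * lam) + t - t * Real.log t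
      + (Real.pi / 4 - 2 * Real.pi * a * lam)) t := by fun_prop
  exact (hre.hasDerivAt.ofReal_comp.add (him.hasDerivAt.ofReal_comp.mul_const I)).differentiableAt

lemma lerchPhase_re (lam a σ t : ℝ) : (lerchPhase lam a σ t).re =
    -σ * Real.log (2 * Real.pi * lam) + 1 / 2 * Real.log (2 * Real.pi)
      + (σ - 1 / 2) * Real.log t := by
  simp only [lerchPhase, add_re, re_ofReal_mul, ofReal_re, I_re, mul_zero, add_zero]

lemma lerchPhase_im (lam a σ t : ℝ) : (lerchPhase lam a σ t).im =
    t * Real.log (2 * Real.pi * lam) + t - t * Real.log t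
      + (Real.pi / 4 - 2 * Real.pi * a * lam) := by
  simp only [lerchPhase, add_im, im_ofReal_mul, ofReal_im, I_im, mul_one, zero_add]

lemma integral_lerchPhase_re (lam a σ τ T : ℝ) : ∫ t in τ..T, (lerchPhase lam a σ t).re =
    (-σ * Real.log (2 * Real.pi * lam) + 1 / 2 * Real.log (2 * Real.pi)) * (T - τ)
      + (σ - 1 / 2) * (T * Real.log T - T - (τ * Real.log τ - τ)) := by
  simp only [lerchPhase_re]
  rw [intervalIntegral.integral_add (by simp)
      (intervalIntegral.intervalIntegrable_log'.const_mul _),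
    intervalIntegral.integral_const_mul, integral_log, intervalIntegral.integral_const,
    smul_eq_mul]
  ring

lemma isBigO_integral_log_of_norm_le_div {E : Type*} [NormedAddCommGroup E] [NormedSpace ℝ E]
    {g : ℝ → E} {K : ℝ} (hτ : 0 < τ) (hg : ∀ t, τ < t → ‖g t‖ ≤ K / t) :
    (fun T ↦ ∫ t in τ..T, g t) =O[atTop] Real.log := by
  have hdom : (fun T ↦ ∫ t in τ..T, g t) =O[atTop] fun T ↦ K * (Real.log T - Real.log τ) := by
    refine .of_bound' ((eventually_ge_atTop τ).mono fun T hT ↦ ?_)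
    refine (intervalIntegral.norm_integral_le_of_norm_le (g := fun t ↦ K * t⁻¹) hT
      (.of_forall fun t ht ↦ (hg t ht.1).trans_eq (div_eq_mul_inv K t))
      ((intervalIntegrable_inv_iff.2 (.inr ?_)).const_mul K)).trans ?_
    · exact notMem_uIcc_of_lt hτ (hτ.trans_le hT)
    · rw [intervalIntegral.integral_const_mul, integral_inv_of_pos hτ (hτ.trans_le hT),
        Real.log_div (hτ.trans_le hT).ne' hτ.ne']
      exact Real.le_norm_self _
  exact hdom.trans (((isBigO_refl _ _).sub Real.isLittleO_const_log_atTop.isBigO).const_mul_left K)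

/-- The quotient of `F (1 - σ + i t)` by its leading term in the functional equation. -/
noncomputable def leftRatio (F : ℂ → ℂ) (lam a σ t : ℝ) : ℂ :=
  F ((1 - σ : ℝ) + t * I) / exp (lerchPhase lam a σ t + lerchTailLog (-a) lam σ (-t))

lemma IsLerch.exists_norm_leftRatio_sub_one_le (hF : IsLerch lam a F) (hl : lam ∈ Ioc 0 1)
    (ha : a ∈ Ioc 0 1) (hσ : 1 + lam ≤ σ) :
    ∃ C, ∀ t : ℝ, 8 + 5 / 2 * σ ^ 2 ≤ t → ‖leftRatio F lam a σ t - 1‖ ≤ C / t := by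
  obtain ⟨C, -, hC⟩ := exists_lerchDual_eq_exp_lerchPhase_mul hl.1 (one_sub_fract_pos lam) a hσ
  refine ⟨C, fun t ht ↦ ?_⟩
  obtain ⟨η, hη, hdual⟩ := hC t ht
  have hre : 1 < (σ - t * I : ℂ).re := by simpa using (by linarith [hl.1] : 1 < σ)
  have hval : F ((1 - σ : ℝ) + t * I) =
      exp (lerchPhase lam a σ t + lerchTailLog (-a) lam σ (-t)) * (1 + η) := by
    rw [exp_add, exp_lerchTailLog hl.1 hσ, show (σ + (-t : ℝ) * I : ℂ) = σ - t * I by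
      push_cast; ring, ← hdual, ← hF.one_sub_eq_lerchDual hl ha hre]
    congr 1
    push_cast
    ring
  rwa [leftRatio, hval, mul_div_cancel_left₀ _ (exp_ne_zero _), add_sub_cancel_left]

lemma IsLerch.differentiableAt_leftRatio (hF : IsLerch lam a F) (hl : 0 < lam)
    (hσ : 1 + lam ≤ σ) {t : ℝ} (ht : 0 < t) :
    DifferentiableAt ℝ (leftRatio F lam a σ) t := by
  have hline : HasDerivAt (fun t : ℝ ↦ ((1 - σ : ℝ) + t * I : ℂ)) I t := by
    simpa using hasDerivAt_add_mul_I_sub (1 - σ) t 0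
  have hne : ((1 - σ : ℝ) + t * I : ℂ) ≠ 1 := fun h ↦ ht.ne' (by simpa using congrArg im h)
  have htail : DifferentiableAt ℝ (fun t ↦ lerchTailLog (-a) lam σ (-t)) t :=
    (differentiable_lerchTailLog hl hσ (-a)).differentiableAt.comp t differentiableAt_id.neg
  exact ((hF.1 _ hne).hasDerivAt.comp t hline).differentiableAt.div
    ((differentiableAt_lerchPhase lam a σ ht).add htail).cexp (exp_ne_zero _)

lemma IsLerch.exists_leftRatio_log_bound (hF : IsLerch lam a F) (hl : lam ∈ Ioc 0 1)
    (ha : a ∈ Ioc 0 1) (hσ : 1 + lam ≤ σ) :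
    ∃ t₀ C : ℝ, 0 < t₀ ∧ ∀ t, t₀ < t →
      leftRatio F lam a σ t ∈ slitPlane ∧ ‖log (leftRatio F lam a σ t)‖ ≤ C / t := by
  obtain ⟨C, hC⟩ := hF.exists_norm_leftRatio_sub_one_le hl ha hσ
  refine ⟨max (8 + 5 / 2 * σ ^ 2) (2 * C), 3 / 2 * C, by positivity, fun t ht ↦ ?_⟩
  have ht8 : 8 + 5 / 2 * σ ^ 2 ≤ t := (le_max_left _ _).trans ht.le
  have htC : 2 * C ≤ t := (le_max_right _ _).trans ht.le
  have ht0 : 0 < t := lt_of_lt_of_le (by positivity) ht8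
  have hbound := hC t ht8
  have hhalf : ‖leftRatio F lam a σ t - 1‖ ≤ 1 / 2 :=
    hbound.trans ((div_le_iff₀ ht0).2 (by linarith))
  have hslit := mem_slitPlane_of_norm_lt_one (z := leftRatio F lam a σ t - 1) (by linarith)
  have hlog := norm_log_one_add_half_le_self hhalf
  rw [add_sub_cancel] at hslit hlog
  exact ⟨hslit, hlog.trans (by rw [mul_div_assoc]; gcongr)⟩

/-- A logarithm of `F` along the line `re s = 1 - σ`, obtained from the functional equation. -/
noncomputable def leftLog (F : ℂ → ℂ) (lam a σ t : ℝ) : ℂ :=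
  lerchPhase lam a σ t + lerchTailLog (-a) lam σ (-t) + log (leftRatio F lam a σ t)

lemma leftLog_im_isBigO (F : ℂ → ℂ) (lam a σ : ℝ) :
    (fun T ↦ (leftLog F lam a σ T).im - (T * Real.log (2 * Real.pi * lam) + T - T * Real.log T))
      =O[atTop] fun _ ↦ (1 : ℝ) := by
  refine .of_bound (|Real.pi / 4 - 2 * Real.pi * a * lam| + Real.pi + Real.pi)
    (.of_forall fun T ↦ ?_)
  rw [norm_one, mul_one, Real.norm_eq_abs, leftLog, add_im, add_im, lerchPhase_im]
  calc _ = |(Real.pi / 4 - 2 * Real.pi * a * lam) + (lerchTailLog (-a) lam σ (-T)).im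
        + (log (leftRatio F lam a σ T)).im| := by congr 1; ring
    _ ≤ _ := abs_add_three _ _ _
    _ ≤ _ := by
      gcongr
      · exact abs_im_lerchTailLog_le _ _ _ _
      · exact log_im _ ▸ abs_arg_le_pi _

lemma isBigO_integral_leftLog_re (hl : 0 < lam) (hσ : 1 + lam ≤ σ) (hτ : 0 < τ) {C : ℝ}
    (hd : ∀ t, τ ≤ t → DifferentiableAt ℝ (fun t ↦ log (leftRatio F lam a σ t)) t)
    (hC : ∀ t, τ ≤ t → ‖log (leftRatio F lam a σ t)‖ ≤ C / t) :
    (fun T ↦ (∫ t in τ..T, (leftLog F lam a σ t).re)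
      - ((-σ * Real.log (2 * Real.pi * lam) + 1 / 2 * Real.log (2 * Real.pi)) * T
        + (σ - 1 / 2) * (T * Real.log T - T))) =O[atTop] Real.log := by
  obtain ⟨K, hK⟩ := exists_abs_integral_re_lerchTailLog_le hl hσ (-a)
  have hbdd : (fun T ↦ ∫ t in τ..T, (lerchTailLog (-a) lam σ (-t)).re)
      =O[atTop] fun _ ↦ (1 : ℝ) := .of_bound K (.of_forall fun T ↦ by
    rw [intervalIntegral.integral_comp_neg (fun t ↦ (lerchTailLog (-a) lam σ t).re), norm_one,
      mul_one]
    exact hK _ _)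
  have htail : (fun T ↦ (∫ t in τ..T, (lerchTailLog (-a) lam σ (-t)).re)
      - ((-σ * Real.log (2 * Real.pi * lam) + 1 / 2 * Real.log (2 * Real.pi)) * τ
        + (σ - 1 / 2) * (τ * Real.log τ - τ))) =O[atTop] Real.log :=
    (hbdd.trans Real.isLittleO_const_log_atTop.isBigO).sub Real.isLittleO_const_log_atTop.isBigO
  have hratio : (fun T ↦ ∫ t in τ..T, (log (leftRatio F lam a σ t)).re) =O[atTop] Real.log :=
    isBigO_integral_log_of_norm_le_div hτ fun t ht ↦ (abs_re_le_norm _).trans (hC t ht.le)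
  refine (htail.add hratio).congr' ((eventually_ge_atTop τ).mono fun T hT ↦ ?_) .rfl
  have hle : ∀ t ∈ uIcc τ T, τ ≤ t := fun t ht ↦ (uIcc_of_le hT ▸ ht : t ∈ Icc τ T).1
  have hphase : IntervalIntegrable (fun t ↦ (lerchPhase lam a σ t).re) volume τ T :=
    ContinuousOn.intervalIntegrable fun t ht ↦ (continuous_re.continuousAt.comp
      (differentiableAt_lerchPhase lam a σ
        (hτ.trans_le (hle t ht))).continuousAt).continuousWithinAt
  have htailInt : IntervalIntegrable (fun t ↦ (lerchTailLog (-a) lam σ (-t)).re) volume τ T :=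
    (continuous_re.comp' ((differentiable_lerchTailLog hl hσ (-a)).continuous.comp'
      continuous_neg)).intervalIntegrable _ _
  have hratioInt : IntervalIntegrable (fun t ↦ (log (leftRatio F lam a σ t)).re) volume τ T :=
    ContinuousOn.intervalIntegrable fun t ht ↦ (continuous_re.continuousAt.comp
      (hd t (hle t ht)).continuousAt).continuousWithinAt
  simp only [leftLog, add_re]
  rw [intervalIntegral.integral_add (hphase.add htailInt) hratioInt,
    intervalIntegral.integral_add hphase htailInt, integral_lerchPhase_re]
  ring

theorem IsLerch.exists_isLogOnVertical_left (hF : IsLerch lam a F) (hl : lam ∈ Ioc 0 1)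
    (ha : a ∈ Ioc 0 1) (hσ : 1 + lam ≤ σ) :
    ∃ (ψ : ℝ → ℂ) (t₀ : ℝ), 0 < t₀ ∧ IsLogOnVertical F (1 - σ) t₀ ψ ∧
      ((fun T ↦ (ψ T).im - (T * Real.log (2 * Real.pi * lam) + T - T * Real.log T))
        =O[atTop] fun _ ↦ (1 : ℝ)) ∧
      ∀ τ, t₀ < τ → (fun T ↦ (∫ t in τ..T, (ψ t).re)
        - ((-σ * Real.log (2 * Real.pi * lam) + 1 / 2 * Real.log (2 * Real.pi)) * T
          + (σ - 1 / 2) * (T * Real.log T - T))) =O[atTop] Real.log := by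
  obtain ⟨t₀, C, ht₀, hC⟩ := hF.exists_leftRatio_log_bound hl ha hσ
  have hdiff : ∀ t, t₀ < t → DifferentiableAt ℝ (fun t ↦ log (leftRatio F lam a σ t)) t :=
    fun t ht ↦ ((hF.differentiableAt_leftRatio hl.1 hσ (ht₀.trans ht)).hasDerivAt.clog_real
      (hC t ht).1).differentiableAt
  refine ⟨leftLog F lam a σ, t₀, ht₀, ⟨fun t ht ↦ ?_, fun t ht ↦ ?_⟩,
    leftLog_im_isBigO F lam a σ, fun τ hτ ↦ isBigO_integral_leftLog_re hl.1 hσ (ht₀.trans hτ)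
      (fun t ht ↦ hdiff t (hτ.trans_le ht)) fun t ht ↦ (hC t (hτ.trans_le ht)).2⟩
  · rw [leftLog, exp_add, exp_log (slitPlane_ne_zero (hC t ht).1), leftRatio,
      mul_div_cancel₀ _ (exp_ne_zero _)]
  · exact ((differentiableAt_lerchPhase lam a σ (ht₀.trans ht)).add
      ((differentiable_lerchTailLog hl.1 hσ (-a)).differentiableAt.comp t
        differentiableAt_id.neg)).add (hdiff t ht)

end LogarithmsOnVerticalLines

section UpperHalfPlane

open Complex Set Filter Asymptotics Topology Metric

variable {lam a p q : ℝ} {F : ℂ → ℂ}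

/-- The nontrivial zeros `-1 ≤ re ρ < 1 + a` of a Lerch zeta-function with second parameter `a`. -/
def nontrivialZeros (a : ℝ) (F : ℂ → ℂ) : Set ℂ :=
  {ρ | F ρ = 0 ∧ -1 ≤ ρ.re ∧ ρ.re < 1 + a}

/-- The sum of `re ρ - 1 / 2` over the nontrivial zeros with ordinate in `J`, counted with
multiplicity. Being a `finsum`, it is `0` by convention if there are infinitely many terms. -/
noncomputable def zeroSum (a : ℝ) (F : ℂ → ℂ) (J : Set ℝ) : ℝ :=
  ∑ᶠ ρ ∈ nontrivialZeros a F ∩ im ⁻¹' J, (analyticOrderNatAt F ρ : ℝ) * (ρ.re - 1 / 2)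

/-- The heights `T` for which `F` has no zero on the half-line `im s = T`, `p ≤ re s`: the
admissible positions of the horizontal edges in Littlewood's formula. -/
def zeroFreeHeights (F : ℂ → ℂ) (p : ℝ) : Set ℝ :=
  {T | ∀ s : ℂ, p ≤ s.re → s.im = T → F s ≠ 0}

lemma zeroFreeHeights_mono {p' : ℝ} (h : p ≤ p') : zeroFreeHeights F p ⊆ zeroFreeHeights F p' :=
  fun _ hT s hs ↦ hT s (h.trans hs)

lemma IsLerch.finite_zeros_im_mem_Icc (hF : IsLerch lam a F) (hl : lam ∈ Ioc 0 1)
    (ha : a ∈ Ioc 0 1) (p c d : ℝ) : {s : ℂ | F s = 0 ∧ p ≤ s.re ∧ s.im ∈ Icc c d}.Finite := by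
  refine (hF.finite_zeros_of_isCompact (K := Icc p (1 + a) ×ℂ Icc c d) hl ha
    (isCompact_Icc.reProdIm isCompact_Icc)).subset ?_
  rintro s ⟨hs, hre, him⟩
  refine ⟨⟨⟨hre, ?_⟩, him⟩, hs⟩
  by_contra! h
  exact hF.ne_zero_of_one_add_le_re ha.1 h.le hs

lemma exists_mem_Ioo_disjoint_Ioc {S : Set ℝ} (hS : S.Finite) {x y : ℝ} (hxy : x < y) :
    ∃ u ∈ Ioo x y, Disjoint (Ioc x u) S := by
  have hmem : (S \ {x})ᶜ ∈ 𝓝[>] x :=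
    mem_nhdsWithin_of_mem_nhds (hS.sdiff.isClosed.isOpen_compl.mem_nhds fun h ↦ h.2 rfl)
  obtain ⟨u, ⟨hxu, huy⟩, hu⟩ :=
    (mem_nhdsGT_iff_exists_mem_Ioc_Ioo_subset hxy).1 hmem
  obtain ⟨v, hxv, hvu⟩ := exists_between hxu
  refine ⟨v, ⟨hxv, hvu.trans_le huy⟩, disjoint_left.2 fun t ht htS ↦ ?_⟩
  exact hu ⟨ht.1, ht.2.trans_lt hvu⟩ ⟨htS, ht.1.ne'⟩

lemma IsLerch.exists_zeroFree_strip (hF : IsLerch lam a F) (hl : lam ∈ Ioc 0 1)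
    (ha : a ∈ Ioc 0 1) (p T : ℝ) :
    ∃ U ∈ Ioo T (T + 1), ∀ s : ℂ, p ≤ s.re → s.im ∈ Ioc T U → F s ≠ 0 := by
  obtain ⟨U, hU, hdisj⟩ := exists_mem_Ioo_disjoint_Ioc
    ((hF.finite_zeros_im_mem_Icc hl ha p T (T + 1)).image im) (lt_add_one T)
  exact ⟨U, hU, fun s hre him hs ↦ disjoint_left.1 hdisj him
    ⟨s, ⟨hs, hre, him.1.le, him.2.trans hU.2.le⟩, rfl⟩⟩

lemma IsLerch.exists_norm_le_on_closedBall (hF : IsLerch lam a F) (hl : lam ∈ Ioc 0 1)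
    (ha : a ∈ Ioc 0 1) (q R : ℝ) : ∃ (C : ℝ) (n : ℕ), 0 < C ∧ ∀ᶠ T : ℝ in atTop,
      ∀ s ∈ closedBall (q + T * I) R, 0 < s.im ∧ ‖F s‖ ≤ C * T ^ n := by
  obtain ⟨n, hn⟩ := exists_nat_ge (max 2 (1 + R - q))
  have hn2 : 2 ≤ n := by exact_mod_cast (le_max_left _ _).trans hn
  obtain ⟨C, hC, hFC⟩ := hF.exists_norm_le hl ha hn2 (q + R)
  refine ⟨C * 2 ^ n, n, by positivity, ?_⟩
  filter_upwards [eventually_ge_atTop (2 * n + |R| + |q|), eventually_gt_atTop 0]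
    with T hT hT0 s hs
  rw [mem_closedBall, dist_eq_norm] at hs
  have hre := abs_le.1 ((abs_re_le_norm _).trans hs)
  have him := abs_le.1 ((abs_im_le_norm _).trans hs)
  simp only [sub_re, sub_im, add_re, add_im, re_ofReal_mul, im_ofReal_mul, ofReal_re, ofReal_im,
    I_re, I_im, mul_zero, mul_one, add_zero, zero_add] at hre him
  have hnR : (2 : ℝ) ≤ n := by exact_mod_cast hn2
  have hsn : ‖s‖ ≤ 2 * T := calc
    ‖s‖ ≤ ‖s - (q + T * I)‖ + ‖(q : ℂ)‖ + ‖(T : ℂ) * I‖ :=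
      (norm_le_norm_sub_add s (q + T * I)).trans (by grw [norm_add_le (q : ℂ), add_assoc])
    _ ≤ R + |q| + T := by
      rw [norm_real, norm_mul, norm_I, mul_one, norm_real, Real.norm_eq_abs,
        Real.norm_of_nonneg hT0.le]
      gcongr
    _ ≤ 2 * T := by linarith [le_abs_self R]
  have hq := (le_max_right _ _).trans hn
  have him_ge : 2 * n ≤ s.im := by linarith [le_abs_self R, abs_nonneg q]
  refine ⟨by linarith, (hFC s ⟨by linarith, by linarith⟩ him_ge).trans ?_⟩
  calc C * ‖s‖ ^ n ≤ C * (2 * T) ^ n := by gcongr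
    _ = C * 2 ^ n * T ^ n := by ring

lemma isBigO_log_mul_pow_div {C δ : ℝ} (hC : C ≠ 0) (hδ : δ ≠ 0) (n : ℕ) :
    (fun T ↦ Real.log (C * T ^ n / δ)) =O[atTop] Real.log := by
  refine ((Real.isLittleO_const_log_atTop (c := Real.log (C / δ))).isBigO.add
    ((isBigO_refl Real.log atTop).const_mul_left (n : ℝ))).congr' ?_ .rfl
  filter_upwards [eventually_gt_atTop 0] with T hT
  rw [← Real.log_pow, ← Real.log_mul (div_ne_zero hC hδ) (pow_pos hT n).ne', mul_div_right_comm]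

lemma IsLerch.isBigO_integral_mul_im_logDeriv (hF : IsLerch lam a F) (hl : lam ∈ Ioc 0 1)
    (ha : a ∈ Ioc 0 1) (hpq : p ≤ q) (hq : 1 + a ≤ q) (κ : ℝ) :
    (fun T : ℝ ↦ ∫ x in p..q, (x - κ) * (logDeriv F (x + T * I)).im)
      =O[atTop ⊓ 𝓟 (zeroFreeHeights F (p - 1))] Real.log := by
  set R := q - p + 1
  obtain ⟨C, n, hC, hFC⟩ := hF.exists_norm_le_on_closedBall hl ha q (3 * R)
  obtain ⟨δ, hδ, hFδ⟩ := exists_le_norm_lerchSeries ha.1 lam hq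
  have hlog : (fun T ↦ (|p - κ| + |q - κ|) * (2 * Real.pi + (q - p) * (8 * R / (R - (q - p)) ^ 2)) *
      (Real.log (C * T ^ n / δ) + 1)) =O[atTop ⊓ 𝓟 (zeroFreeHeights F (p - 1))] Real.log :=
    (((isBigO_log_mul_pow_div hC.ne' hδ.ne' n).add
      Real.isLittleO_const_log_atTop.isBigO).const_mul_left _).mono inf_le_left
  refine (IsBigO.of_norm_eventuallyLE ?_).trans hlog
  filter_upwards [hFC.filter_mono inf_le_left, mem_inf_of_right (mem_principal_self _)]
    with T hT hfree
  have hre : ((q : ℂ) + T * I).re = q := by simp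
  have him : ((q : ℂ) + T * I).im = T := by simp
  have hbound := abs_integral_mul_im_logDeriv_le (f := F) (c := q + T * I) (r := q - p) (R := R)
    (φ := fun x ↦ x - κ) (W := |p - κ| + |q - κ|) (M := C * T ^ n) (sub_nonneg.2 hpq)
    (lt_add_one _) hδ
    (fun s hs ↦ hF.analyticAt fun h ↦ (hT s hs).1.ne' (by simp [h])) (fun s hs ↦ (hT s hs).2)
    (by rw [hF.2 _ (by rw [hre]; linarith [ha.1])]; exact hFδ _ hre)
    (fun s hs hs0 h ↦ by
      rw [mem_closedBall, dist_eq_norm] at hs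
      have hsre := abs_le.1 ((abs_re_le_norm _).trans hs)
      rw [sub_re, hre] at hsre
      exact hfree s (by linarith) (h.trans him) hs0)
    (fun x hx ↦ by
      rw [hre, sub_sub_cancel] at hx
      rw [abs_le]
      constructor <;> linarith [hx.1, hx.2, neg_abs_le (p - κ), le_abs_self (q - κ),
        abs_nonneg (p - κ), abs_nonneg (q - κ)])
  rwa [hre, him, sub_sub_cancel] at hbound

lemma IsLerch.finite_nontrivialZeros (hF : IsLerch lam a F) (hl : lam ∈ Ioc 0 1)
    (ha : a ∈ Ioc 0 1) {J : Set ℝ} {c d : ℝ} (hJ : J ⊆ Icc c d) :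
    (nontrivialZeros a F ∩ im ⁻¹' J).Finite :=
  (hF.finite_zeros_im_mem_Icc hl ha (-1) c d).subset fun _ hρ ↦ ⟨hρ.1.1, hρ.1.2.1, hJ hρ.2⟩

lemma IsLerch.two_pi_mul_zeroSum_Ioc (hF : IsLerch lam a F) (hl : lam ∈ Ioc 0 1)
    (ha : a ∈ Ioc 0 1) {b t₀ τ T : ℝ} {ψL ψR : ℝ → ℂ}
    (hL : IsLogOnVertical F (-1 : ℝ) t₀ ψL) (hR : IsLogOnVertical F b t₀ ψR)
    (hb : 1 + a ≤ b) (ht₀ : 0 < t₀) (hτ : t₀ < τ) (hτT : τ ≤ T)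
    (hτfree : τ ∈ zeroFreeHeights F (-1)) (hTfree : T ∈ zeroFreeHeights F (-1)) :
    2 * Real.pi * zeroSum a F (Ioc τ T) =
      littlewoodEdge F (1 / 2) (-1) b ψL ψR T - littlewoodEdge F (1 / 2) (-1) b ψL ψR τ
        + (∫ t in τ..T, (ψL t).re) - ∫ t in τ..T, (ψR t).re := by
  have hfin := hF.finite_nontrivialZeros hl ha (Ioc_subset_Icc_self (a := τ) (b := T))
  have him_ne : ∀ {s : ℂ}, τ ≤ s.im → s ≠ 1 := fun {s} hs h ↦ by
    have : s.im = 0 := by simp [h]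
    linarith
  rw [zeroSum, finsum_mem_eq_finite_toFinset_sum _ hfin]
  refine two_pi_mul_sum_analyticOrder_mul_re_sub (by linarith [ha.1]) hτT hτ hL hR
    (fun s hs ↦ hF.analyticAt (him_ne hs.2.1)) _ (fun ρ hρ ↦ ?_)
    (fun ρ hρ ↦ ?_) (fun s hs hs0 ↦ ?_) (1 / 2)
  · obtain ⟨⟨hρ0, hre, hre'⟩, hτρ, hρT⟩ := hfin.mem_toFinset.1 hρ
    refine ⟨⟨hre.lt_of_ne fun h ↦ hL.ne_zero (hτ.trans hτρ) ?_, by linarith⟩, hτρ,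
      hρT.lt_of_ne fun h ↦ hTfree ρ hre h hρ0⟩
    rwa [h, re_add_im]
  · exact hF.analyticOrderAt_ne_top ha.1 (him_ne (hfin.mem_toFinset.1 hρ).2.1.le)
  · refine hfin.mem_toFinset.2 ⟨⟨hs0, hs.1.1, ?_⟩, hs.2.1.lt_of_ne fun h ↦
      hτfree s hs.1.1 h.symm hs0, hs.2.2⟩
    by_contra! h
    exact hF.ne_zero_of_one_add_le_re ha.1 h hs0

lemma IsLerch.exists_isBigO_zeroSum_Ioc_zeroFreeHeights (hF : IsLerch lam a F)
    (hl : lam ∈ Ioc 0 1) (ha : a ∈ Ioc 0 1) : ∃ τ, 0 < τ ∧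
      (fun T ↦ zeroSum a F (Ioc τ T) - T / (4 * Real.pi) * (Real.log a - Real.log lam))
        =O[atTop ⊓ 𝓟 (zeroFreeHeights F (-2))] Real.log := by
  obtain ⟨ψR, hR, hRim, hRint⟩ := hF.exists_isLogOnVertical_right ha.1
    (show 1 + a ≤ 2 by linarith [ha.2])
  obtain ⟨ψL, t₀, ht₀, hL, hLim, hLint⟩ := hF.exists_isLogOnVertical_left hl ha
    (show 1 + lam ≤ 2 by linarith [hl.2])
  rw [show (1 : ℝ) - 2 = -1 by norm_num] at hL
  obtain ⟨τ, ⟨hτ, -⟩, hτfree⟩ := hF.exists_zeroFree_strip hl ha (-1) t₀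
  have hH := hF.isBigO_integral_mul_im_logDeriv hl ha (show (-1 : ℝ) ≤ 2 by norm_num)
    (show 1 + a ≤ 2 by linarith [ha.2]) (1 / 2)
  rw [show (-1 : ℝ) - 1 = -2 by norm_num] at hH
  have hone : (fun _ ↦ 1 : ℝ → ℝ) =O[atTop] Real.log := Real.isLittleO_const_log_atTop.isBigO
  have hvert := ((((((hRim.add hLim).const_mul_left (3 / 2)).sub (hRint τ)).trans hone).add
    (hLint τ hτ)).sub (Real.isLittleO_const_log_atTop
      (c := littlewoodEdge F (1 / 2) (-1) 2 ψL ψR τ)).isBigO).mono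
    (inf_le_left : atTop ⊓ 𝓟 (zeroFreeHeights F (-2)) ≤ atTop)
  refine ⟨τ, ht₀.trans hτ, ((hvert.sub hH).const_mul_left (2 * Real.pi)⁻¹).congr' ?_ .rfl⟩
  filter_upwards [mem_inf_of_left (eventually_ge_atTop τ),
    mem_inf_of_right (mem_principal_self _)] with T hT hTfree
  have hsum := hF.two_pi_mul_zeroSum_Ioc hl ha hL (hR t₀) (by linarith [ha.2]) ht₀ hτ hT
    (fun s hs him ↦ hτfree s hs ⟨him ▸ hτ, him.le⟩)
    (zeroFreeHeights_mono (by norm_num) hTfree)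
  have hlog : Real.log (2 * Real.pi * lam) = Real.log (2 * Real.pi) + Real.log lam :=
    Real.log_mul (by positivity) hl.1.ne'
  rw [← mul_right_inj' Real.two_pi_pos.ne', mul_inv_cancel_left₀ Real.two_pi_pos.ne',
    mul_sub (2 * Real.pi), hsum, hlog]
  simp only [littlewoodEdge]
  field_simp
  ring

theorem IsLerch.exists_isBigO_zeroSum_Ioc (hF : IsLerch lam a F) (hl : lam ∈ Ioc 0 1)
    (ha : a ∈ Ioc 0 1) : ∃ τ, 0 < τ ∧
      (fun T ↦ zeroSum a F (Ioc τ T) - T / (4 * Real.pi) * (Real.log a - Real.log lam))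
        =O[atTop] Real.log := by
  obtain ⟨τ, hτ, hgood⟩ := hF.exists_isBigO_zeroSum_Ioc_zeroFreeHeights hl ha
  choose U hU hUfree using hF.exists_zeroFree_strip hl ha (-2)
  have hUtop : Tendsto U atTop (atTop ⊓ 𝓟 (zeroFreeHeights F (-2))) := by
    refine tendsto_inf.2 ⟨tendsto_atTop_mono (fun T ↦ (hU T).1.le) tendsto_id, ?_⟩
    exact tendsto_principal.2 <| .of_forall fun T s hs him ↦
      hUfree T s hs ⟨him ▸ (hU T).1, him.le⟩
  have hlogU : (fun T ↦ Real.log (U T)) =O[atTop] Real.log := by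
    refine IsBigO.of_bound 2 ((eventually_ge_atTop 2).mono fun T hT ↦ ?_)
    obtain ⟨hTU, hUT⟩ := hU T
    rw [Real.norm_of_nonneg (Real.log_nonneg (by linarith)),
      Real.norm_of_nonneg (Real.log_nonneg (by linarith)), ← Nat.cast_ofNat, ← Real.log_pow]
    exact Real.log_le_log (by linarith) (by nlinarith)
  have hshift : (fun T ↦ (U T - T) / (4 * Real.pi) * (Real.log a - Real.log lam))
      =O[atTop] Real.log := by
    have hbdd : (fun T ↦ U T - T) =O[atTop] fun _ ↦ (1 : ℝ) := by
      refine IsBigO.of_bound 1 (.of_forall fun T ↦ ?_)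
      rw [norm_one, mul_one, Real.norm_of_nonneg] <;> linarith [(hU T).1, (hU T).2]
    refine ((hbdd.trans Real.isLittleO_const_log_atTop.isBigO).const_mul_left
      ((Real.log a - Real.log lam) / (4 * Real.pi))).congr_left fun T ↦ by ring
  refine ⟨τ, hτ, (((hgood.comp_tendsto hUtop).trans hlogU).add hshift).congr_left fun T ↦ ?_⟩
  have hset : nontrivialZeros a F ∩ im ⁻¹' Ioc τ (U T) = nontrivialZeros a F ∩ im ⁻¹' Ioc τ T := by
    ext ρ
    refine and_congr_right fun hρ ↦ and_congr_right fun _ ↦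
      ⟨fun hρU ↦ ?_, fun hρT ↦ hρT.trans (hU T).1.le⟩
    by_contra! h
    exact hUfree T ρ (by linarith [hρ.2.1]) ⟨h, hρU⟩ hρ.1
  simp only [Function.comp_apply, zeroSum, hset]
  ring

end UpperHalfPlane

section Conjugation

open Complex Set Filter Asymptotics Topology ComplexConjugate

variable {lam a : ℝ} {f F : ℂ → ℂ} {z : ℂ}

lemma analyticAt_conj_comp_conj (hf : AnalyticAt ℂ f (conj z)) :
    AnalyticAt ℂ (conj ∘ f ∘ conj) z := by
  rw [analyticAt_iff_eventually_differentiableAt] at hf ⊢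
  filter_upwards [(continuous_conj.tendsto z).eventually hf] with w hw
  exact differentiableAt_conj_conj_iff.2 hw

lemma conj_comp_conj_comp_conj (f : ℂ → ℂ) : conj ∘ (conj ∘ f ∘ conj) ∘ conj = f := by
  ext
  simp

lemma analyticAt_conj_comp_conj_iff :
    AnalyticAt ℂ (conj ∘ f ∘ conj) z ↔ AnalyticAt ℂ f (conj z) := by
  refine ⟨fun h ↦ ?_, analyticAt_conj_comp_conj⟩
  rw [← conj_comp_conj_comp_conj f]
  exact analyticAt_conj_comp_conj (by rwa [conj_conj])

lemma analyticOrderAt_conj_comp_conj (f : ℂ → ℂ) (z : ℂ) :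
    analyticOrderAt (conj ∘ f ∘ conj) z = analyticOrderAt f (conj z) := by
  by_cases hf : AnalyticAt ℂ f (conj z)
  swap
  · rw [analyticOrderAt_of_not_analyticAt hf,
      analyticOrderAt_of_not_analyticAt (mt analyticAt_conj_comp_conj_iff.1 hf)]
  have htendsto := continuous_conj.tendsto z
  cases h : analyticOrderAt f (conj z) with
  | top =>
    rw [analyticOrderAt_eq_top] at h ⊢
    exact (htendsto.eventually h).mono fun w hw ↦ by simp [hw]
  | coe n =>
    obtain ⟨g, hg, hgz, hfg⟩ := hf.analyticOrderAt_eq_natCast.1 h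
    refine (analyticAt_conj_comp_conj hf).analyticOrderAt_eq_natCast.2
      ⟨conj ∘ g ∘ conj, analyticAt_conj_comp_conj hg, by simpa using hgz, ?_⟩
    exact (htendsto.eventually hfg).mono fun w hw ↦ by simp [hw]

lemma conj_exp_two_pi_mul_natCast (lam : ℝ) (m : ℕ) :
    conj (exp (2 * Real.pi * I * lam * m)) =
      exp (2 * Real.pi * I * (1 - Int.fract lam : ℝ) * m) := by
  rw [← exp_conj, exp_eq_exp_iff_exists_int]
  refine ⟨-(1 + ⌊lam⌋) * m, ?_⟩
  rw [Int.fract]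
  simp only [map_mul, conj_ofReal, conj_I, map_natCast, map_ofNat]
  push_cast
  ring

lemma IsLerch.conj_comp_conj (hF : IsLerch lam a F) (ha : 0 < a) :
    IsLerch (1 - Int.fract lam) a (conj ∘ F ∘ conj) := by
  refine ⟨fun s hs ↦ differentiableAt_conj_conj_iff.2 <| hF.1 _ fun h ↦ hs ?_, fun s hs ↦ ?_⟩
  · rw [← conj_conj s, h, map_one]
  · rw [Function.comp_apply, Function.comp_apply, hF.2 _ (by simpa using hs), lerchSeries,
      conj_tsum]
    refine tsum_congr fun m ↦ ?_
    have hcast : ((m : ℂ) + a) = ((m + a : ℝ) : ℂ) := by push_cast; rfl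
    have harg : arg ((m + a : ℝ) : ℂ) ≠ Real.pi := by
      rw [arg_ofReal_of_nonneg (by positivity)]
      exact Real.pi_pos.ne
    rw [map_div₀, conj_exp_two_pi_mul_natCast, hcast, ← conj_cpow _ _ harg, conj_ofReal]

lemma zeroSum_conj_comp_conj (a : ℝ) (F : ℂ → ℂ) (J : Set ℝ) :
    zeroSum a (conj ∘ F ∘ conj) J = zeroSum a F (Neg.neg ⁻¹' J) := by
  refine finsum_mem_eq_of_bijOn conj ⟨fun ρ hρ ↦ ?_, (starRingEnd ℂ).injective.injOn,
    fun ρ hρ ↦ ⟨conj ρ, ?_, conj_conj ρ⟩⟩ fun ρ _ ↦ ?_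
  · simpa [nontrivialZeros] using hρ
  · simpa [nontrivialZeros] using hρ
  · rw [analyticOrderNatAt, analyticOrderAt_conj_comp_conj, conj_re, analyticOrderNatAt]

lemma zeroSum_union {J J' : Set ℝ} (hJJ' : Disjoint J J')
    (hJ : (nontrivialZeros a F ∩ im ⁻¹' J).Finite)
    (hJ' : (nontrivialZeros a F ∩ im ⁻¹' J').Finite) :
    zeroSum a F (J ∪ J') = zeroSum a F J + zeroSum a F J' := by
  rw [zeroSum, preimage_union, inter_union_distrib_left, finsum_mem_union _ hJ hJ',
    zeroSum, zeroSum]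
  exact (hJJ'.preimage im).mono inter_subset_right inter_subset_right

lemma IsLerch.zeroSum_Icc_neg_eq_add (hF : IsLerch lam a F) (hl : lam ∈ Ioc 0 1)
    (ha : a ∈ Ioc 0 1) {τ τ' T : ℝ} (hττ' : -τ' ≤ τ) (hτ : τ ≤ T) (hτ' : τ' ≤ T) :
    zeroSum a F (Icc (-T) T) = zeroSum a F (Ioc τ T) + zeroSum a (conj ∘ F ∘ conj) (Ioc τ' T)
      + zeroSum a F (Icc (-τ') τ) := by
  have hfin : ∀ {J : Set ℝ}, J ⊆ Icc (-T) T → (nontrivialZeros a F ∩ im ⁻¹' J).Finite :=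
    fun hJ ↦ hF.finite_nontrivialZeros hl ha hJ
  have hupper : zeroSum a F (Icc (-T) T) = zeroSum a F (Icc (-T) τ) + zeroSum a F (Ioc τ T) := by
    rw [← Icc_union_Ioc_eq_Icc (by linarith : -T ≤ τ) hτ]
    exact zeroSum_union (disjoint_left.2 fun t ht ht' ↦ ht'.1.not_ge ht.2)
      (hfin (Icc_subset_Icc_right hτ)) (hfin fun t ht ↦ ⟨by linarith [ht.1], ht.2⟩)
  have hlower : zeroSum a F (Icc (-T) τ) =
      zeroSum a F (Ico (-T) (-τ')) + zeroSum a F (Icc (-τ') τ) := by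
    rw [← Ico_union_Icc_eq_Icc (neg_le_neg hτ') hττ']
    exact zeroSum_union (disjoint_left.2 fun t ht ht' ↦ ht.2.not_ge ht'.1)
      (hfin fun t ht ↦ ⟨ht.1, by linarith [ht.2]⟩) (hfin (Icc_subset_Icc (neg_le_neg hτ') hτ))
  have hneg : Neg.neg ⁻¹' Ioc τ' T = Ico (-T) (-τ') := by simp
  rw [hupper, hlower, zeroSum_conj_comp_conj, hneg]
  ring

lemma log_div_sqrt_mul {x y z : ℝ} (hx : 0 < x) (hy : 0 < y) (hz : z ≠ 0) :
    Real.log (z / √(x * y)) =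
      (Real.log z - Real.log x) / 2 + (Real.log z - Real.log y) / 2 := by
  rw [Real.log_div hz (Real.sqrt_pos.2 (mul_pos hx hy)).ne', Real.log_sqrt (mul_pos hx hy).le,
    Real.log_mul hx.ne' hy.ne']
  ring

theorem IsLerch.isBigO_zeroSum_Icc (hF : IsLerch lam a F) (hl : lam ∈ Ioc 0 1)
    (ha : a ∈ Ioc 0 1) :
    (fun T ↦ zeroSum a F (Icc (-T) T)
      - T / (2 * Real.pi) * Real.log (a / √(lam * (1 - Int.fract lam)))) =O[atTop] Real.log := by
  have hmu : 1 - Int.fract lam ∈ Ioc 0 1 :=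
    ⟨one_sub_fract_pos lam, sub_le_self 1 (Int.fract_nonneg lam)⟩
  obtain ⟨τ, hτ, hupper⟩ := hF.exists_isBigO_zeroSum_Ioc hl ha
  obtain ⟨τ', hτ', hlower⟩ := (hF.conj_comp_conj ha.1).exists_isBigO_zeroSum_Ioc hmu ha
  have hmid : (fun _ ↦ zeroSum a F (Icc (-τ') τ)) =O[atTop] Real.log :=
    Real.isLittleO_const_log_atTop.isBigO
  refine ((hupper.add hlower).add hmid).congr' ?_ .rfl
  filter_upwards [eventually_ge_atTop τ, eventually_ge_atTop τ'] with T hT hT'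
  rw [hF.zeroSum_Icc_neg_eq_add hl ha (by linarith) hT hT', log_div_sqrt_mul hl.1 hmu.1 ha.1.ne']
  ring

end Conjugation

lemma zeroOrder_eq_analyticOrderNatAt (F : ℂ → ℂ) (z : ℂ) :
    zeroOrder F z = analyticOrderNatAt F z := by
  rw [zeroOrder, analyticOrderNatAt]
  split_ifs with h
  · rfl
  · rw [analyticOrderAt_of_not_analyticAt h, ENat.toNat_zero]

/-- asymptotics for the sum of `β - 1/2` over the nontrivial zeros with
`|γ| ≤ T`. -/
theorem lerch_sum_of_zeros_both_halfplanes (lam alp : ℝ) (hlam0 : 0 < lam) (hlam1 : lam ≤ 1)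
    (halp0 : 0 < alp) (halp1 : alp ≤ 1) (F : ℂ → ℂ) (hF : IsLerch lam alp F) :
    (fun T : ℝ =>
        (∑ᶠ ρ ∈ {ρ : ℂ | F ρ = 0 ∧ -1 ≤ ρ.re ∧ ρ.re < 1 + alp ∧ |ρ.im| ≤ T},
          (zeroOrder F ρ : ℝ) * (ρ.re - 1 / 2))
        - T / (2 * Real.pi) * Real.log (alp / Real.sqrt (lam * (1 - Int.fract lam))))
      =O[Filter.atTop] Real.log := by
  refine (hF.isBigO_zeroSum_Icc ⟨hlam0, hlam1⟩ ⟨halp0, halp1⟩).congr_left fun T ↦ ?_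
  have hset : {ρ : ℂ | F ρ = 0 ∧ -1 ≤ ρ.re ∧ ρ.re < 1 + alp ∧ |ρ.im| ≤ T} =
      nontrivialZeros alp F ∩ Complex.im ⁻¹' Set.Icc (-T) T := by
    ext ρ
    simp only [nontrivialZeros, abs_le, Set.mem_ofPred_eq, Set.mem_inter_iff, Set.mem_preimage,
      Set.mem_Icc, and_assoc]
  simp only [zeroSum, hset, zeroOrder_eq_analyticOrderNatAt]
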